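/- Let F → E → B be a rational fibration in which F and B are formal. If the fibration is TNCZ, then the fibration has a model H(B),0 → H(B)⊗ΛV,D → ΛV,d in which ΛV,d is the bigraded model of F and the differential D is filtered in the following sense: with respect to the lower grading V = ⊕_{i≥0} V_i of the bigraded model, D(V_0) = 0 and, for each i ≥ 1, D(V_i) ⊆ H(B)⊗(ΛV)_{(i-1)}. -/

import Mathlib

/-!
Write `M_B` for the minimal model of the base and `f : M_B → H` for a quasi-isomorphism onto an
algebra without differential, given by formality. Four ingredients give the filtered model.

*Replacing the base.* The ideal `J` generated by `ker f` in the total algebra is acyclic: filtering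
by base degree, the leading term of a cocycle of `J` is a cocycle for the fibre differential, its
fibre class is a cocycle with coefficients in `ker f`, and `ker f` is acyclic (`Rel.J_exact`). Hence the quotient by `J`, an
extension of `H` with the same fibre, is quasi-isomorphic to the given one
(`Rel.exists_base_change`).

*The bigraded model.* If `g : ΛV → H(F)` is a quasi-isomorphism from the minimal model of the fibre,
obstruction theory gives an algebra endomorphism `φ` of `ΛV` with `d φ = 2 φ d` and `g φ = g`
(`Sullivan.exists_twist`). The generalized eigenspaces of `φ` for the eigenvalues `2 ^ k` form the
lower grading (`exists_low`): the twisted commutation makes `d` lower `k` by one, and the relation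
`g φ = g` puts the cohomology in lower degree zero. The generators are replaced by a complement of
the decomposables chosen in each bidegree (`change_gens`, `exists_bigraded`).

*The filtered section.* It remains to choose an algebra section of the projection from the total
algebra to the fibre, that is, to choose lifts of the generators, inductively on the lower degree.
Generators of lower degree zero are cocycles, and lift to cocycles because the fibration is totally
non-cohomologous to zero (`exists_lift_gen`). In lower degree `k + 1`, the defect
`d (sec v) - sec (d v)` is corrected one stage of the base filtration at a time: modulo terms of
lower degree at most `k`, its leading term is a cocycle for the fibre differential, hence a
coboundary, because the cohomology of the bigraded model lives in lower degree zero. The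
rest of the differential raises the base filtration, as `H` has no differential, so the error moves
into higher filtration (`defect_step`, `exists_lift`). The sections
stabilise on each lower degree (`exists_filtered_sect`).

*Back to a fibration model.* The images of the generators under the final section, ordered by
degree, satisfy the Sullivan condition relative to the base (`ksBasis`), so the extension is a
fibration model with the required filtered differential.
-/


/-!
A self-contained framework for rational homotopy theory at the level of Sullivan models,
following the conventions of G. Lupton, "Variations on a conjecture of Halperin".

All spaces are simply connected CW complexes of finite type over ℚ; following the paper,
a space is represented by its Sullivan minimal model (a minimal Sullivan algebra), and a
rational fibration `F → E → B` is represented by (the minimal model of the fibration,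
i.e.) a KS-extension  `M_B → M_B ⊗ ΛV → ΛV`  whose quotient `ΛV, d` is a minimal model
of the fibre `F`; the total space `E` is represented by the middle (KS) algebra, which is
quasi-isomorphic to the minimal model of `E`.
-/

namespace RHT

/-- A non-negatively graded, graded-commutative differential graded algebra over `ℚ`
(a cochain algebra) : the basic algebraic object of rational homotopy theory. -/
structure CDGA : Type 1 where
  A : Type
  [ringA : Ring A]
  [algA : Algebra ℚ A]
  grading : ℕ → Submodule ℚ A
  [gradedA : GradedAlgebra grading]
  gcomm : ∀ {i j : ℕ} {x y : A}, x ∈ grading i → y ∈ grading j →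
    x * y = ((-1 : ℚ) ^ (i * j)) • (y * x)
  d : A →ₗ[ℚ] A
  d_mem : ∀ {i : ℕ} {x : A}, x ∈ grading i → d x ∈ grading (i + 1)
  d_sq : ∀ x : A, d (d x) = 0
  leibniz : ∀ {i : ℕ} (x y : A), x ∈ grading i →
    d (x * y) = d x * y + ((-1 : ℚ) ^ i) • (x * d y)

attribute [instance] CDGA.ringA CDGA.algA CDGA.gradedA

namespace CDGA

/-- `x` is a coboundary. -/
def IsExact (C : CDGA) (x : C.A) : Prop := ∃ y : C.A, C.d y = x

def cocycles (C : CDGA) (i : ℕ) : Submodule ℚ C.A := C.grading i ⊓ LinearMap.ker C.d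

def coboundaries (C : CDGA) (i : ℕ) : Submodule ℚ C.A := C.grading i ⊓ LinearMap.range C.d

/-- The degree `i` cohomology of a cochain algebra. -/
abbrev cohomology (C : CDGA) (i : ℕ) : Type :=
  ↥(C.cocycles i) ⧸ (Submodule.comap (C.cocycles i).subtype (C.coboundaries i))

/-- The differential vanishes identically. -/
def ZeroDiff (C : CDGA) : Prop := ∀ x : C.A, C.d x = 0

/-- The rational cup-length of (the cohomology of) a cochain algebra: the greatest `n`
such that some `n`-fold product of cocycles of positive degree is not a coboundary. -/
noncomputable def cup0 (C : CDGA) : ℕ :=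
  sSup {n | ∃ l : List C.A, l.length = n ∧
    (∀ x ∈ l, (∃ i, 0 < i ∧ x ∈ C.grading i) ∧ C.d x = 0) ∧ ¬ C.IsExact l.prod}

/-- All `(n+1)`-fold products of elements of the augmentation ideal vanish. -/
def NilpotentOfLength (C : CDGA) (n : ℕ) : Prop :=
  ∀ l : List C.A, l.length = n + 1 → (∀ x ∈ l, ∃ i, 0 < i ∧ x ∈ C.grading i) →
    l.prod = 0

end CDGA

/-- A morphism of cochain algebras: a `ℚ`-algebra map preserving degrees and
commuting with the differentials. -/
structure Hom (C D : CDGA) where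
  toAlgHom : C.A →ₐ[ℚ] D.A
  map_grading : ∀ {i : ℕ} {x : C.A}, x ∈ C.grading i → toAlgHom x ∈ D.grading i
  comm_d : ∀ x : C.A, toAlgHom (C.d x) = D.d (toAlgHom x)

/-- A morphism of cochain algebras is a quasi-isomorphism if it induces an isomorphism
on cohomology (stated elementwise: surjectivity and injectivity on cohomology classes). -/
def QuasiIso {C D : CDGA} (f : Hom C D) : Prop :=
  (∀ y : D.A, D.d y = 0 → ∃ x : C.A, C.d x = 0 ∧ D.IsExact (f.toAlgHom x - y)) ∧
  (∀ x : C.A, C.d x = 0 → D.IsExact (f.toAlgHom x) → C.IsExact x)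

/-- A (cofibrant) cochain algebra is formal if it admits a quasi-isomorphism to a cochain
algebra with zero differential (its cohomology algebra).  A space is formal iff its
minimal model (or any Sullivan model of it) is formal in this sense. -/
def Formal (C : CDGA) : Prop :=
  ∃ (H : CDGA) (f : Hom C H), H.ZeroDiff ∧ QuasiIso f

/-- A Sullivan algebra: a cochain algebra which is free graded-commutative on a
(simply connected, finite type) graded vector space `V` of generators.  Freeness is
encoded by the universal property of the free graded-commutative algebra. -/
structure Sullivan extends CDGA where
  V : ℕ → Submodule ℚ A
  V_le : ∀ i, V i ≤ grading i
  V_zero : V 0 = ⊥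
  V_one : V 1 = ⊥
  V_fin : ∀ i, FiniteDimensional ℚ (V i)
  generates : Algebra.adjoin ℚ (⋃ i, (V i : Set A)) = ⊤
  free : ∀ (C : Type) [instC : Ring C] [instC2 : Algebra ℚ C] (𝒞 : ℕ → Submodule ℚ C),
    (1 : C) ∈ 𝒞 0 →
    (∀ i j (x y : C), x ∈ 𝒞 i → y ∈ 𝒞 j → x * y ∈ 𝒞 (i + j)) →
    (∀ i j (x y : C), x ∈ 𝒞 i → y ∈ 𝒞 j → x * y = ((-1 : ℚ) ^ (i * j)) • (y * x)) →
    ∀ f : (i : ℕ) → V i →ₗ[ℚ] C, (∀ i (v : V i), f i v ∈ 𝒞 i) →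
    ∃! φ : A →ₐ[ℚ] C, ∀ i (v : V i), φ (v : A) = f i v

namespace Sullivan

variable (S : Sullivan)

/-- The span of the generators. -/
def genSpan : Submodule ℚ S.A := ⨆ i, S.V i

/-- `Λ^{≥ n} V` : the ideal spanned by products of at least `n` generators. -/
def lengthGE (n : ℕ) : Submodule ℚ S.A := S.genSpan ^ n * (⊤ : Submodule ℚ S.A)

/-- Minimality: the differential is decomposable. -/
def Minimal : Prop := ∀ x ∈ S.genSpan, S.d x ∈ S.lengthGE 2

/-- The (space modelled by the) Sullivan algebra is elliptic: finitely many generators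
(finite-dimensional rational homotopy) and finite-dimensional cohomology. -/
def Elliptic : Prop :=
  (∃ N, ∀ i, N ≤ i → S.V i = ⊥) ∧
  (∀ i, FiniteDimensional ℚ (S.toCDGA.cohomology i)) ∧
  (∃ N, ∀ i, N ≤ i → Subsingleton (S.toCDGA.cohomology i))

/-- Positive Euler characteristic : `Σ (-1)^i dim H^i > 0`. -/
def PosEuler : Prop :=
  ∃ N : ℕ, (∀ i, N ≤ i → Subsingleton (S.toCDGA.cohomology i)) ∧
    0 < ∑ i ∈ Finset.range N,
      ((-1 : ℤ) ^ i * (Module.finrank ℚ (S.toCDGA.cohomology i) : ℤ))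

/-- `S` is the minimal model of the odd sphere `S^m` : one generator, in odd degree `m`,
and zero differential. -/
def OddSphere (m : ℕ) : Prop :=
  Odd m ∧ Module.finrank ℚ (S.V m) = 1 ∧ (∀ j, j ≠ m → S.V j = ⊥) ∧ S.toCDGA.ZeroDiff

/-- `S` models a space which rationally is a wedge of odd-dimensional spheres:
it is formal, has no cohomology in positive even degrees, and all products of
positive-degree cohomology classes vanish. -/
def WedgeOddSpheres : Prop :=
  Formal S.toCDGA ∧
  (∀ k, 0 < k → ∀ x ∈ S.grading (2 * k), S.d x = 0 → S.toCDGA.IsExact x) ∧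
  (∀ i j (x y : S.A), 0 < i → 0 < j → x ∈ S.grading i → y ∈ S.grading j →
    S.d x = 0 → S.d y = 0 → S.toCDGA.IsExact (x * y))

/-- `S` models a rational Poincaré duality space with fundamental class in degree `N`. -/
def PoincareDuality (N : ℕ) : Prop :=
  (∀ i, FiniteDimensional ℚ (S.toCDGA.cohomology i)) ∧
  (∀ i, N < i → Subsingleton (S.toCDGA.cohomology i)) ∧
  (Module.finrank ℚ (S.toCDGA.cohomology N) = 1) ∧
  (∀ i (x : S.A), i ≤ N → x ∈ S.grading i → S.d x = 0 → ¬ S.toCDGA.IsExact x →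
    ∃ y ∈ S.grading (N - i), S.d y = 0 ∧ ¬ S.toCDGA.IsExact (x * y))

/-- Toomer's invariant `e₀` (of the space with minimal model `S`) : the greatest `n`
such that some non-coboundary cocycle lies in `Λ^{≥n} V`. -/
noncomputable def e0 : ℕ :=
  sSup {n | ∃ x ∈ S.lengthGE n, S.d x = 0 ∧ ¬ S.toCDGA.IsExact x}

/-- The set of even-degree generators. -/
def evenGenSet : Set S.A := ⋃ k, (S.V (2 * k) : Set S.A)

/-- `Λ(V^even)` as a submodule. -/
def evenSub : Submodule ℚ S.A :=
  Subalgebra.toSubmodule (Algebra.adjoin ℚ S.evenGenSet)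

/-- The span of the odd-degree generators. -/
def oddGenSpan : Submodule ℚ S.A := ⨆ k, S.V (2 * k + 1)

/-- A pure Sullivan algebra: `d(V^even) = 0` and `d(V^odd) ⊆ Λ(V^even)`. -/
def Pure : Prop :=
  (∀ k, ∀ v ∈ S.V (2 * k), S.d v = 0) ∧
  (∀ k, ∀ v ∈ S.V (2 * k + 1), S.d v ∈ S.evenSub)

/-- For a pure Sullivan algebra, the lower (second) grading:
`(ΛV)_k = Λ(V^even) ⊗ Λ^k(V^odd)`. -/
def pureLow (k : ℕ) : Submodule ℚ S.A := S.evenSub * S.oddGenSpan ^ k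

/-- The part of positive lower degree `(ΛV)_+`. -/
def pureLowPlus : Submodule ℚ S.A := ⨆ k, S.pureLow (k + 1)

/-- The cohomology of `S` is spherically generated: every cocycle agrees, modulo
coboundaries, with an element of the subalgebra generated by the cocycles lying in
the generating space `V` (the spherical classes). -/
def SphericallyGenerated : Prop :=
  ∀ x : S.A, S.d x = 0 →
    ∃ y ∈ Algebra.adjoin ℚ {w : S.A | w ∈ S.genSpan ∧ S.d w = 0},
      S.toCDGA.IsExact (x - y)

end Sullivan

/-- A bigraded (minimal) Sullivan algebra: the bigraded model of a formal space.
The lower grading `low` is multiplicative, the generators split into pure lower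
degrees, the differential lowers the lower degree by exactly one, and all cocycles
of positive lower degree are coboundaries (`H_+ = 0`). -/
structure BigradedSullivan extends Sullivan where
  low : ℕ → Submodule ℚ A
  low_one : (1 : A) ∈ low 0
  low_mul : ∀ i j (x y : A), x ∈ low i → y ∈ low j → x * y ∈ low (i + j)
  low_internal : DirectSum.IsInternal low
  V_low : ∀ i, V i = ⨆ k, (V i ⊓ low k)
  d_low_zero : ∀ x ∈ low 0, d x = 0
  d_low : ∀ k, ∀ x ∈ low (k + 1), d x ∈ low k
  acyclic_plus : ∀ k, ∀ x ∈ low (k + 1), d x = 0 → ∃ y : A, d y = x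

/-- The lower-degree-`0` part of the generators: `V_k` for `k = 0`, etc. -/
def BigradedSullivan.lowGens (S : BigradedSullivan) (k : ℕ) : Submodule ℚ S.A :=
  ⨆ i, (S.V i ⊓ S.low k)

/-- The universal property of a KS-extension `B → B ⊗ ΛV` : the total algebra is the
free graded-commutative algebra over `B` on the (lifted) generating space `V`. -/
def RelativelyFree (B T : CDGA) (incl : Hom B T) (V : ℕ → Submodule ℚ T.A) : Prop :=
  ∀ (C : Type) [instC : Ring C] [instC2 : Algebra ℚ C] (𝒞 : ℕ → Submodule ℚ C),
    (1 : C) ∈ 𝒞 0 →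
    (∀ i j (x y : C), x ∈ 𝒞 i → y ∈ 𝒞 j → x * y ∈ 𝒞 (i + j)) →
    (∀ i j (x y : C), x ∈ 𝒞 i → y ∈ 𝒞 j → x * y = ((-1 : ℚ) ^ (i * j)) • (y * x)) →
    ∀ (g : B.A →ₐ[ℚ] C), (∀ i (x : B.A), x ∈ B.grading i → g x ∈ 𝒞 i) →
    ∀ (f : (i : ℕ) → V i →ₗ[ℚ] C), (∀ i (v : V i), f i v ∈ 𝒞 i) →
    ∃! φ : T.A →ₐ[ℚ] C, (∀ x : B.A, φ (incl.toAlgHom x) = g x) ∧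
      (∀ i (v : V i), φ (v : T.A) = f i v)

/-- The KS (Koszul–Sullivan) condition: the lifted generators admit a well-ordered
basis `{v_α}` with `D v_α ∈ B ⊗ Λ(V_{<α})`. -/
def KSBasisCondition (B T : CDGA) (incl : Hom B T) (V : ℕ → Submodule ℚ T.A) : Prop :=
  ∃ (ι : Set ℕ) (b : ι → T.A),
    LinearIndependent ℚ b ∧
    Submodule.span ℚ (Set.range b) = (⨆ i, V i) ∧
    (∀ α : ι, ∃ i, b α ∈ V i) ∧
    (∀ α : ι, T.d (b α) ∈
      Algebra.adjoin ℚ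
        (Set.range (incl.toAlgHom : B.A → T.A) ∪ b '' {β : ι | (β : ℕ) < (α : ℕ)}))

/-- `incl : B → T` is a KS-extension of `B`. -/
def IsRelKS (B T : CDGA) (incl : Hom B T) : Prop :=
  ∃ V : ℕ → Submodule ℚ T.A, (∀ i, V i ≤ T.grading i) ∧
    RelativelyFree B T incl V ∧ KSBasisCondition B T incl V

/-- A model of a rational fibration `F → E → B` with base algebra `B` (a Sullivan model
of the base, or e.g. its cohomology `H(B)` when the base is formal) and fibre a Sullivan
algebra `F = (ΛV, d)`: a KS-extension `B → B ⊗ ΛV → ΛV` whose quotient by the ideal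
generated by `B⁺` is `F`.  The total algebra `T` represents the total space `E`. -/
structure FibrationModel (B : CDGA) (F : Sullivan) where
  T : CDGA
  incl : Hom B T
  proj : Hom T F.toCDGA
  V : ℕ → Submodule ℚ T.A
  V_le : ∀ i, V i ≤ T.grading i
  incl_inj : Function.Injective (incl.toAlgHom : B.A → T.A)
  relFree : RelativelyFree B T incl V
  ksBasis : KSBasisCondition B T incl V
  proj_incl : ∀ i, 0 < i → ∀ x ∈ B.grading i, proj.toAlgHom (incl.toAlgHom x) = 0
  proj_V : ∀ i, (V i).map (proj.toAlgHom.toLinearMap) = F.V i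
  fiber_inj : ∀ x ∈ Subalgebra.toSubmodule (Algebra.adjoin ℚ (⋃ i, (V i : Set T.A))),
    proj.toAlgHom x = 0 → x = 0
  ker_proj : ∀ x : T.A, proj.toAlgHom x = 0 ↔
    x ∈ (Submodule.map (incl.toAlgHom.toLinearMap) (⨆ i, B.grading (i + 1))) *
      (⊤ : Submodule ℚ T.A)

namespace FibrationModel

variable {B : CDGA} {F : Sullivan} (P : FibrationModel B F)

/-- The copy `1 ⊗ ΛV ⊆ B ⊗ ΛV` of the fibre inside the total algebra: the subalgebra
generated by the lifted generators. -/
def fiberSub : Submodule ℚ P.T.A :=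
  Subalgebra.toSubmodule (Algebra.adjoin ℚ (⋃ i, (P.V i : Set P.T.A)))

/-- The image `B ⊗ 1 ⊆ B ⊗ ΛV` of the base. -/
def baseSub : Submodule ℚ P.T.A := LinearMap.range (P.incl.toAlgHom.toLinearMap)

/-- The span of the lifted fibre generators. -/
def fiberGenSpan : Submodule ℚ P.T.A := ⨆ i, P.V i

/-- The span of all generators (base generators `W` together with the fibre ones). -/
def totalGenSpan (W : Submodule ℚ B.A) : Submodule ℚ P.T.A :=
  Submodule.map P.incl.toAlgHom.toLinearMap W ⊔ P.fiberGenSpan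

/-- `Λ^{≥n}(W ⊕ V)` in the total algebra. -/
def totalLengthGE (W : Submodule ℚ B.A) (n : ℕ) : Submodule ℚ P.T.A :=
  (P.totalGenSpan W) ^ n * (⊤ : Submodule ℚ P.T.A)

/-- The part of the fibre copy `1 ⊗ ΛV` lying over a submodule `K ⊆ ΛV`. -/
def fiberComap (K : Submodule ℚ F.A) : Submodule ℚ P.T.A :=
  P.fiberSub ⊓ Submodule.comap P.proj.toAlgHom.toLinearMap K

/-- The span of the even-degree lifted generators. -/
def evenGenSpan : Submodule ℚ P.T.A := ⨆ k, P.V (2 * k)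

/-- `Λ(V^even)` inside the total algebra. -/
def evenSub : Submodule ℚ P.T.A :=
  Subalgebra.toSubmodule (Algebra.adjoin ℚ (⋃ k, (P.V (2 * k) : Set P.T.A)))

/-- `Λ⁺(V^even)` inside the total algebra. -/
def evenPlus : Submodule ℚ P.T.A := P.evenGenSpan * P.evenSub

/-- The fibration (model) is totally non-cohomologous to zero: the projection onto the
fibre (modelling the fibre inclusion `j : F → E`) is surjective on cohomology. -/
def TNCZ : Prop :=
  ∀ y : F.A, F.d y = 0 → ∃ x : P.T.A, P.T.d x = 0 ∧
    CDGA.IsExact F.toCDGA (P.proj.toAlgHom x - y)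

end FibrationModel

/-- A (quasi-isomorphism) ladder between two fibration models: quasi-isomorphisms of
base, total and fibre algebras making both squares commute. -/
structure FibLadder {B B' : CDGA} {F F' : Sullivan}
    (P : FibrationModel B F) (P' : FibrationModel B' F') where
  fB : Hom B B'
  fT : Hom P.T P'.T
  fF : Hom F.toCDGA F'.toCDGA
  hB : QuasiIso fB
  hT : QuasiIso fT
  hF : QuasiIso fF
  commB : ∀ x : B.A, fT.toAlgHom (P.incl.toAlgHom x) = P'.incl.toAlgHom (fB.toAlgHom x)
  commF : ∀ x : P.T.A,
    fF.toAlgHom (P.proj.toAlgHom x) = P'.proj.toAlgHom (fT.toAlgHom x)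

/-- Two fibration models are quasi-isomorphic (model the same rational fibration). -/
def ModelPair {B B' : CDGA} {F F' : Sullivan}
    (P : FibrationModel B F) (P' : FibrationModel B' F') : Prop :=
  Nonempty (FibLadder P P') ∨ Nonempty (FibLadder P' P)

/-- An isomorphism of KS-extensions. -/
def FibIso {B B' : CDGA} {F F' : Sullivan}
    (P : FibrationModel B F) (P' : FibrationModel B' F') : Prop :=
  ∃ L : FibLadder P P', Function.Bijective (L.fB.toAlgHom : B.A → B'.A) ∧
    Function.Bijective (L.fT.toAlgHom : P.T.A → P'.T.A) ∧
    Function.Bijective (L.fF.toAlgHom : F.A → F'.A)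

/-- `cat₀ ≤ n` (Félix–Halperin): the projection `p_n : ΛV → ΛV/Λ^{≥n+1}V` makes `ΛV`
into a homotopy retract: for a relative KS-model `ΛV → R → ΛV/Λ^{≥n+1}V` of `p_n`
there is a retraction `ρ : R → ΛV` restricting to the identity on `ΛV`. -/
def catLe (S : Sullivan) (n : ℕ) : Prop :=
  ∃ (Q : CDGA) (q : Hom S.toCDGA Q),
    Function.Surjective (q.toAlgHom : S.A → Q.A) ∧
    (∀ x : S.A, q.toAlgHom x = 0 ↔ x ∈ S.lengthGE (n + 1)) ∧
    ∃ (R : CDGA) (ι : Hom S.toCDGA R) (ψ : Hom R Q) (ρ : Hom R S.toCDGA),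
      IsRelKS S.toCDGA R ι ∧ QuasiIso ψ ∧
      (∀ x : S.A, ψ.toAlgHom (ι.toAlgHom x) = q.toAlgHom x) ∧
      (∀ x : S.A, ρ.toAlgHom (ι.toAlgHom x) = x)

/-- The rational Lusternik–Schnirelmann category of the space with minimal model `S`. -/
noncomputable def cat0 (S : Sullivan) : ℕ := sInf {n | catLe S n}

/-- The rational cone-length (Cornea): the least `n` such that the minimal model is
quasi-isomorphic to a cochain algebra whose augmentation ideal has vanishing
`(n+1)`-fold products. -/
noncomputable def cl0 (S : Sullivan) : ℕ :=
  sInf {n | ∃ (Q : CDGA) (f : Hom S.toCDGA Q), QuasiIso f ∧ CDGA.NilpotentOfLength Q n}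

/-- For a formal space the invariants `cup₀, e₀, cat₀, cl₀` all agree; `nil₀` denotes
their common value (here represented by `cat₀`). -/
noncomputable def nil0 (S : Sullivan) : ℕ := cat0 S

end RHT
namespace RHT

/-! ### Components in a graded vector space -/

section Components

variable {M M' : Type} [AddCommGroup M] [Module ℚ M] [AddCommGroup M'] [Module ℚ M']

/-- The projection onto the degree `n` component of a graded vector space. -/
noncomputable def pj (𝓜 : ℕ → Submodule ℚ M) [DirectSum.Decomposition 𝓜] (n : ℕ) : M →ₗ[ℚ] M :=
  (𝓜 n).subtype ∘ₗ DirectSum.component ℚ ℕ (fun i => 𝓜 i) n ∘ₗ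
    (DirectSum.decomposeLinearEquiv 𝓜).toLinearMap

variable (𝓜 : ℕ → Submodule ℚ M) [DirectSum.Decomposition 𝓜]
variable (𝓜' : ℕ → Submodule ℚ M') [DirectSum.Decomposition 𝓜']

lemma pj_apply (n : ℕ) (x : M) : pj 𝓜 n x = (DirectSum.decompose 𝓜 x n : M) := rfl

lemma pj_mem (n : ℕ) (x : M) : pj 𝓜 n x ∈ 𝓜 n := by
  rw [pj_apply]; exact SetLike.coe_mem _

lemma pj_same {n : ℕ} {x : M} (hx : x ∈ 𝓜 n) : pj 𝓜 n x = x := by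
  rw [pj_apply]; exact DirectSum.decompose_of_mem_same 𝓜 hx

lemma pj_ne {m n : ℕ} {x : M} (hx : x ∈ 𝓜 m) (h : m ≠ n) : pj 𝓜 n x = 0 := by
  rw [pj_apply]; exact DirectSum.decompose_of_mem_ne 𝓜 hx h

lemma exists_sum_pj (x : M) : ∃ s : Finset ℕ, x = ∑ i ∈ s, pj 𝓜 i x := by
  classical
  exact ⟨_, (DirectSum.sum_support_decompose 𝓜 x).symm⟩

/-- A finite bound on the degrees occurring in `x`. -/
lemma exists_sum_range_pj (x : M) : ∃ N, ∀ n, N ≤ n → pj 𝓜 n x = 0 := by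
  classical
  refine ⟨(DFinsupp.support (DirectSum.decompose 𝓜 x)).sup id + 1, fun n hn => ?_⟩
  rw [pj_apply]
  by_contra h
  have : n ∈ DFinsupp.support (DirectSum.decompose 𝓜 x) := by
    rw [DFinsupp.mem_support_iff]
    intro h0; exact h (by rw [h0]; rfl)
  have := Finset.le_sup (f := id) this
  simp only [id] at this
  omega

variable {𝓜} in
lemma mem_of_pj {N : Submodule ℚ M} {x : M} (h : ∀ n, pj 𝓜 n x ∈ N) : x ∈ N := by
  obtain ⟨s, hs⟩ := exists_sum_pj 𝓜 x
  rw [hs]; exact N.sum_mem fun i _ => h i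

lemma eq_of_pj {x y : M} (h : ∀ n, pj 𝓜 n x = pj 𝓜 n y) : x = y := by
  rw [← sub_eq_zero, ← Submodule.mem_bot ℚ]
  refine mem_of_pj (𝓜 := 𝓜) fun n => ?_
  rw [map_sub, h, sub_self]; exact zero_mem _

/-- Linear induction on homogeneous elements. -/
lemma homog_induction {p : M → Prop} (h0 : ∀ n x, x ∈ 𝓜 n → p x)
    (hadd : ∀ x y, p x → p y → p (x + y)) (x : M) : p x := by
  obtain ⟨s, hs⟩ := exists_sum_pj 𝓜 x
  rw [hs]
  exact Finset.sum_induction _ p hadd (h0 0 0 (zero_mem _)) fun i _ => h0 i _ (pj_mem 𝓜 i x)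

variable {𝓜 𝓜'} in
lemma pj_shift (f : M →ₗ[ℚ] M') (e : ℕ → ℕ) (he : Function.Injective e)
    (h : ∀ i, ∀ x ∈ 𝓜 i, f x ∈ 𝓜' (e i)) (n : ℕ) (x : M) :
    pj 𝓜' (e n) (f x) = f (pj 𝓜 n x) := by
  induction x using homog_induction 𝓜 with
  | h0 m x hx =>
    by_cases hmn : m = n
    · subst hmn; rw [pj_same 𝓜 hx, pj_same 𝓜' (h _ _ hx)]
    · rw [pj_ne 𝓜 hx hmn, pj_ne 𝓜' (h _ _ hx) (fun h => hmn (he h)), map_zero]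
  | hadd x y hx hy => simp only [map_add, hx, hy]

variable {𝓜 𝓜'} in
lemma pj_comm (f : M →ₗ[ℚ] M') (h : ∀ i, ∀ x ∈ 𝓜 i, f x ∈ 𝓜' i) (n : ℕ) (x : M) :
    pj 𝓜' n (f x) = f (pj 𝓜 n x) :=
  pj_shift f id Function.injective_id h n x

variable {𝓜 𝓜'} in
lemma pj_shift_zero (f : M →ₗ[ℚ] M') (e : ℕ → ℕ)
    (h : ∀ i, ∀ x ∈ 𝓜 i, f x ∈ 𝓜' (e i)) (n : ℕ) (hn : ∀ i, e i ≠ n) (x : M) :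
    pj 𝓜' n (f x) = 0 := by
  induction x using homog_induction 𝓜 with
  | h0 m x hx => exact pj_ne 𝓜' (h _ _ hx) (hn m)
  | hadd x y hx hy => simp only [map_add, hx, hy, add_zero]

variable {𝓜} in
/-- A subspace spanned by homogeneous elements contains the components of its elements. -/
lemma pj_mem_of_span {S : Set M} (hS : ∀ x ∈ S, ∃ n, x ∈ 𝓜 n) {x : M}
    (hx : x ∈ Submodule.span ℚ S) (n : ℕ) : pj 𝓜 n x ∈ Submodule.span ℚ S := by
  induction hx using Submodule.span_induction with
  | mem x hx =>
    obtain ⟨m, hm⟩ := hS x hx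
    by_cases h : m = n
    · subst h; rw [pj_same 𝓜 hm]; exact Submodule.subset_span hx
    · rw [pj_ne 𝓜 hm h]; exact zero_mem _
  | zero => rw [map_zero]; exact zero_mem _
  | add x y _ _ hx hy => rw [map_add]; exact add_mem hx hy
  | smul a x _ hx => rw [map_smul]; exact Submodule.smul_mem _ _ hx

/-- Projections characterise an internal direct sum. -/
lemma isInternal_of_proj (𝓝 : ℕ → Submodule ℚ M) (P : ℕ → M →ₗ[ℚ] M)
    (h1 : ∀ n, ∀ x ∈ 𝓝 n, P n x = x) (h2 : ∀ m n, m ≠ n → ∀ x ∈ 𝓝 m, P n x = 0)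
    (h3 : ⨆ n, 𝓝 n = ⊤) : DirectSum.IsInternal 𝓝 := by
  refine DirectSum.isInternal_submodule_of_iSupIndep_of_iSup_eq_top ?_ h3
  intro n
  rw [Submodule.disjoint_def]
  intro x hx hx'
  rw [← h1 n x hx]
  have : (⨆ j, ⨆ (_ : j ≠ n), 𝓝 j) ≤ LinearMap.ker (P n) := by
    refine iSup_le fun j => iSup_le fun hj => ?_
    intro y hy
    exact h2 j n hj y hy
  exact this hx'

end Components

/-! ### Linear algebra over a field -/

section Linear

variable {U V W : Type} [AddCommGroup U] [Module ℚ U] [AddCommGroup V] [Module ℚ V]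
  [AddCommGroup W] [Module ℚ W]

/-- A linear map vanishing on `ker g` factors through `g`. -/
lemma exists_factor_left (g : U →ₗ[ℚ] V) (l : U →ₗ[ℚ] W) (h : ∀ x, g x = 0 → l x = 0) :
    ∃ q : V →ₗ[ℚ] W, q ∘ₗ g = l := by
  obtain ⟨s, hs⟩ := g.rangeRestrict.exists_rightInverse_of_surjective g.range_rangeRestrict
  obtain ⟨q, hq⟩ := (l ∘ₗ s).exists_extend
  refine ⟨q, LinearMap.ext fun x => ?_⟩
  have h1 : q (g x) = l (s (g.rangeRestrict x)) := by
    have := LinearMap.congr_fun hq (g.rangeRestrict x)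
    simpa using this
  rw [LinearMap.comp_apply, h1, ← sub_eq_zero, ← map_sub]
  apply h
  have := LinearMap.congr_fun hs (g.rangeRestrict x)
  have h2 : g (s (g.rangeRestrict x)) = g x := congrArg Subtype.val this
  rw [map_sub, h2, sub_self]

/-- A linear map with values in `range g` lifts through `g`. -/
lemma exists_factor_right (g : V →ₗ[ℚ] W) (l : U →ₗ[ℚ] W) (h : ∀ x, ∃ y, g y = l x) :
    ∃ q : U →ₗ[ℚ] V, g ∘ₗ q = l := by
  obtain ⟨s, hs⟩ := g.rangeRestrict.exists_rightInverse_of_surjective g.range_rangeRestrict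
  refine ⟨s ∘ₗ l.codRestrict g.range (fun x => h x), LinearMap.ext fun x => ?_⟩
  exact congrArg Subtype.val (LinearMap.congr_fun hs (l.codRestrict g.range (fun x => h x) x))

/-- Linear choice: a linear relation that is total over the subspace `K` contains the graph
of a linear map on `K`. -/
lemma exists_linear_choice (R : Submodule ℚ (U × V)) (K : Submodule ℚ U)
    (h : ∀ x ∈ K, ∃ y, (x, y) ∈ R) : ∃ q : K →ₗ[ℚ] V, ∀ x : K, ((x : U), q x) ∈ R := by
  obtain ⟨q, hq⟩ := exists_factor_right (LinearMap.fst ℚ U V ∘ₗ R.subtype) K.subtype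
    (fun x => by obtain ⟨y, hy⟩ := h x x.2; exact ⟨⟨_, hy⟩, rfl⟩)
  refine ⟨LinearMap.snd ℚ U V ∘ₗ R.subtype ∘ₗ q, fun x => ?_⟩
  have h1 : ((q x : U × V)).1 = x := LinearMap.congr_fun hq x
  have h2 : ((x : U), ((q x : U × V)).2) = (q x : U × V) := by rw [← h1]
  change ((x : U), ((q x : U × V)).2) ∈ R
  rw [h2]; exact (q x).2

/-- Relative complements exist in the lattice of subspaces. -/
lemma exists_rel_compl {a b : Submodule ℚ U} (h : a ≤ b) :
    ∃ c, c ≤ b ∧ a ⊓ c = ⊥ ∧ a ⊔ c = b := by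
  obtain ⟨c, hc⟩ := a.exists_isCompl
  refine ⟨b ⊓ c, inf_le_left, ?_, ?_⟩
  · rw [eq_bot_iff, ← hc.inf_eq_bot]; exact inf_le_inf_left _ inf_le_right
  · rw [inf_comm b c, ← sup_inf_assoc_of_le c h, hc.sup_eq_top, top_inf_eq]

/-- The decomposition operator of a complex of vector spaces: a square-zero `s` with
`d s d = d`. -/
lemma exists_contraction (d : U →ₗ[ℚ] U) (hd : ∀ x, d (d x) = 0) :
    ∃ s : U →ₗ[ℚ] U, (∀ x, d (s (d x)) = d x) ∧ (∀ x, s (s x) = 0) := by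
  obtain ⟨s0, hs0⟩ := exists_factor_right d (LinearMap.id ∘ₗ d.range.subtype)
    (fun x => by obtain ⟨y, hy⟩ := x.2; exact ⟨y, hy⟩)
  obtain ⟨s1, hs1⟩ := s0.exists_extend
  have key : ∀ x, d (s1 (d x)) = d x := fun x => by
    have a := LinearMap.congr_fun hs1 ⟨d x, x, rfl⟩
    have b := LinearMap.congr_fun hs0 ⟨d x, x, rfl⟩
    simp only [LinearMap.comp_apply, Submodule.subtype_apply, LinearMap.id_apply] at a b
    rw [a, b]
  -- first normalise to `s d s = s`, then to `s s = 0`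
  obtain ⟨s2, hs2⟩ : ∃ s2 : U →ₗ[ℚ] U, s2 = s1 ∘ₗ d ∘ₗ s1 := ⟨_, rfl⟩
  have e2 : ∀ x, s2 x = s1 (d (s1 x)) := fun x => by rw [hs2]; rfl
  have k2 : ∀ x, s2 (d (s2 x)) = s2 x := fun x => by simp only [e2, key]
  have k3 : ∀ x, d (s2 (d x)) = d x := fun x => by simp only [e2, key]
  refine ⟨s2 - d ∘ₗ s2 ∘ₗ s2, fun x => ?_, fun x => ?_⟩
  · simp only [LinearMap.sub_apply, LinearMap.comp_apply, map_sub, hd, k3, sub_zero]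
  · simp only [LinearMap.sub_apply, LinearMap.comp_apply, map_sub, k2, sub_self, map_zero]

end Linear
end RHT

namespace RHT

/-! ### Sullivan algebras: generation, decomposables, finiteness -/

/-- A multiplicative family of homogeneous subspaces containing the algebra generators is
the whole grading. -/
lemma graded_gen {A : Type} [Ring A] [Algebra ℚ A] (𝒜 : ℕ → Submodule ℚ A) [GradedAlgebra 𝒜]
    {S : Set A} (hS : Algebra.adjoin ℚ S = ⊤) (N : ℕ → Submodule ℚ A) (hle : ∀ n, N n ≤ 𝒜 n)
    (h1 : (1 : A) ∈ N 0)
    (hmul : ∀ i j x y, x ∈ N i → y ∈ N j → x * y ∈ N (i + j))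
    (hgen : ∀ x ∈ S, ∃ n, x ∈ N n) (n : ℕ) : 𝒜 n ≤ N n := by
  have hmul' : ∀ x y : A, x ∈ (⨆ n, N n) → y ∈ (⨆ n, N n) → x * y ∈ (⨆ n, N n) := by
    intro x y hx hy
    induction hx using Submodule.iSup_induction' with
    | mem i x hx =>
      induction hy using Submodule.iSup_induction' with
      | mem j y hy => exact Submodule.mem_iSup_of_mem (i + j) (hmul i j x y hx hy)
      | zero => rw [mul_zero]; exact zero_mem _
      | add y z _ _ hy hz => rw [mul_add]; exact add_mem hy hz
    | zero => rw [zero_mul]; exact zero_mem _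
    | add y z _ _ hy hz => rw [add_mul]; exact add_mem hy hz
  have htop : ∀ x : A, x ∈ (⨆ n, N n) := by
    intro x
    have h : Algebra.adjoin ℚ S ≤ (⨆ n, N n).toSubalgebra
        (Submodule.mem_iSup_of_mem 0 h1) hmul' := by
      rw [Algebra.adjoin_le_iff]
      intro x hx
      obtain ⟨n, hn⟩ := hgen x hx
      exact Submodule.mem_iSup_of_mem n hn
    rw [hS] at h
    exact h (Algebra.mem_top (x := x))
  intro x hx
  have key : ∀ y ∈ (⨆ n, N n), pj 𝒜 n y ∈ N n := by
    intro y hy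
    induction hy using Submodule.iSup_induction' with
    | mem i y hy =>
      by_cases h : i = n
      · subst h; rw [pj_same 𝒜 (hle _ hy)]; exact hy
      · rw [pj_ne 𝒜 (hle _ hy) h]; exact zero_mem _
    | zero => rw [map_zero]; exact zero_mem _
    | add y z _ _ hy hz => rw [map_add]; exact add_mem hy hz
  have := key x (htop x)
  rwa [pj_same 𝒜 hx] at this

namespace CDGA

variable (C : CDGA)

lemma one_mem : (1 : C.A) ∈ C.grading 0 := SetLike.GradedOne.one_mem

lemma mul_mem {i j : ℕ} {x y : C.A} (hx : x ∈ C.grading i) (hy : y ∈ C.grading j) :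
    x * y ∈ C.grading (i + j) := SetLike.GradedMul.mul_mem hx hy

lemma d_one : C.d 1 = 0 := by
  have := C.leibniz 1 1 C.one_mem
  simpa using this

lemma pj_d (n : ℕ) (x : C.A) : pj C.grading (n + 1) (C.d x) = C.d (pj C.grading n x) :=
  pj_shift C.d (· + 1) (fun a b h => by simpa using h) (fun _ _ h => C.d_mem h) n x

lemma pj_d_zero (x : C.A) : pj C.grading 0 (C.d x) = 0 :=
  pj_shift_zero C.d (· + 1) (fun _ _ h => C.d_mem h) 0 (fun i => Nat.succ_ne_zero i) x

/-- Components of an exact homogeneous element: a primitive of the right degree. -/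
lemma exact_homog {n : ℕ} {x : C.A} (hx : x ∈ C.grading (n + 1)) (h : C.IsExact x) :
    ∃ y ∈ C.grading n, C.d y = x := by
  obtain ⟨y, hy⟩ := h
  exact ⟨pj C.grading n y, pj_mem _ _ _, by rw [← pj_d, hy, pj_same _ hx]⟩

lemma pj_cocycle (n : ℕ) {x : C.A} (hx : C.d x = 0) : C.d (pj C.grading n x) = 0 := by
  rw [← pj_d, hx, map_zero]

/-- Elements of positive degree. -/
def aug : Submodule ℚ C.A := ⨆ i, C.grading (i + 1)

lemma grading_le_aug {i : ℕ} (hi : 0 < i) : C.grading i ≤ C.aug := by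
  obtain ⟨j, rfl⟩ := Nat.exists_eq_succ_of_ne_zero hi.ne'
  exact le_iSup (fun i => C.grading (i + 1)) j

lemma mem_aug {x : C.A} : x ∈ C.aug ↔ pj C.grading 0 x = 0 := by
  constructor
  · intro h
    induction h using Submodule.iSup_induction' with
    | mem i x hx => exact pj_ne _ hx (Nat.succ_ne_zero i)
    | zero => exact map_zero _
    | add x y _ _ hx hy => rw [map_add, hx, hy, add_zero]
  · intro h
    refine mem_of_pj (𝓜 := C.grading) fun n => ?_
    rcases Nat.eq_zero_or_pos n with rfl | hn
    · rw [h]; exact zero_mem _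
    · exact C.grading_le_aug hn (pj_mem _ _ _)

lemma top_mul_aug : (⊤ : Submodule ℚ C.A) * C.aug ≤ C.aug := by
  rw [Submodule.mul_le]
  intro x _ y hy
  induction x using homog_induction C.grading with
  | h0 m x hx =>
    induction hy using Submodule.iSup_induction' with
    | mem i y hy => exact C.grading_le_aug (by omega) (C.mul_mem hx hy)
    | zero => rw [mul_zero]; exact zero_mem _
    | add y z _ _ hy hz => rw [mul_add]; exact add_mem hy hz
  | hadd x y hx hy => rw [add_mul]; exact add_mem (hx trivial) (hy trivial)

lemma aug_mul_top : C.aug * (⊤ : Submodule ℚ C.A) ≤ C.aug := by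
  rw [Submodule.mul_le]
  intro y hy x _
  induction x using homog_induction C.grading with
  | h0 m x hx =>
    induction hy using Submodule.iSup_induction' with
    | mem i y hy => exact C.grading_le_aug (by omega) (C.mul_mem hy hx)
    | zero => rw [zero_mul]; exact zero_mem _
    | add y z _ _ hy hz => rw [add_mul]; exact add_mem hy hz
  | hadd x y hx hy => rw [mul_add]; exact add_mem (hx trivial) (hy trivial)

/-- The decomposable elements. -/
def dec : Submodule ℚ C.A := C.aug * C.aug

lemma dec_mul {x y : C.A} (hx : x ∈ C.dec) : x * y ∈ C.dec := by
  have h : C.dec * ⊤ ≤ C.dec := by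
    rw [dec, mul_assoc]; exact mul_le_mul_right C.aug_mul_top C.aug
  exact h (Submodule.mul_mem_mul hx trivial)

lemma mul_dec {x y : C.A} (hy : y ∈ C.dec) : x * y ∈ C.dec := by
  have h : ⊤ * C.dec ≤ C.dec := by
    rw [dec, ← mul_assoc]; exact mul_le_mul_left C.top_mul_aug C.aug
  exact h (Submodule.mul_mem_mul trivial hy)

lemma dec_le_aug : C.dec ≤ C.aug :=
  (mul_le_mul_right le_top C.aug).trans C.aug_mul_top

/-- Decomposables of degree `m` are sums of products of elements of degree at least two,
when there is nothing in degree one. -/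
lemma dec_pj (h1 : C.grading 1 = ⊥) {m : ℕ} {U : Submodule ℚ C.A}
    (hU : ∀ i j x y, 2 ≤ i → 2 ≤ j → i + j = m → x ∈ C.grading i → y ∈ C.grading j → x * y ∈ U)
    {x : C.A} (hx : x ∈ C.dec) : pj C.grading m x ∈ U := by
  induction hx using Submodule.mul_induction_on' with
  | mem_mul_mem x hx y hy =>
    induction hx using Submodule.iSup_induction' with
    | mem i x hx =>
      induction hy using Submodule.iSup_induction' with
      | mem j y hy =>
        rcases Nat.eq_zero_or_pos i with rfl | hi
        · rw [zero_add, h1] at hx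
          rw [(Submodule.mem_bot ℚ).1 hx, zero_mul, map_zero]; exact zero_mem _
        rcases Nat.eq_zero_or_pos j with rfl | hj
        · rw [zero_add, h1] at hy
          rw [(Submodule.mem_bot ℚ).1 hy, mul_zero, map_zero]; exact zero_mem _
        by_cases h : (i + 1) + (j + 1) = m
        · rw [← h, pj_same _ (C.mul_mem hx hy)]
          exact hU _ _ x y (by omega) (by omega) h hx hy
        · rw [pj_ne _ (C.mul_mem hx hy) h]; exact zero_mem _
      | zero => rw [mul_zero, map_zero]; exact zero_mem _
      | add y z _ _ hy hz => rw [mul_add, map_add]; exact add_mem hy hz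
    | zero => rw [zero_mul, map_zero]; exact zero_mem _
    | add y z _ _ hy hz => rw [add_mul, map_add]; exact add_mem hy hz
  | add x _ y _ hx hy => rw [map_add]; exact add_mem hx hy

end CDGA

namespace Sullivan

variable (S : Sullivan)

lemma V_grading {i : ℕ} {v : S.A} (hv : v ∈ S.V i) : v ∈ S.grading i := S.V_le i hv

lemma eq_zero_of_mem_V_zero {v : S.A} (hv : v ∈ S.V 0) : v = 0 := by
  rw [S.V_zero] at hv; exact (Submodule.mem_bot ℚ).1 hv

/-- Degreewise induction from the generators. -/
lemma gen (N : ℕ → Submodule ℚ S.A) (hle : ∀ n, N n ≤ S.grading n)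
    (h1 : (1 : S.A) ∈ N 0) (hmul : ∀ i j x y, x ∈ N i → y ∈ N j → x * y ∈ N (i + j))
    (hgen : ∀ i, S.V i ≤ N i) (n : ℕ) : S.grading n ≤ N n :=
  graded_gen S.grading S.generates N hle h1 hmul (fun x hx => by
    obtain ⟨i, hi⟩ := Set.mem_iUnion.1 hx
    exact ⟨i, hgen i hi⟩) n

/-- An algebra map sending generators to the right degree preserves degrees. -/
lemma map_grading {C : Type} [Ring C] [Algebra ℚ C] (𝒞 : ℕ → Submodule ℚ C)
    (h1 : (1 : C) ∈ 𝒞 0) (hmul : ∀ i j (x y : C), x ∈ 𝒞 i → y ∈ 𝒞 j → x * y ∈ 𝒞 (i + j))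
    (φ : S.A →ₐ[ℚ] C) (hφ : ∀ i, ∀ v ∈ S.V i, φ v ∈ 𝒞 i) (n : ℕ) (x : S.A)
    (hx : x ∈ S.grading n) : φ x ∈ 𝒞 n := by
  refine (S.gen (fun n => S.grading n ⊓ (𝒞 n).comap φ.toLinearMap) (fun n => inf_le_left)
    ⟨S.one_mem, ?_⟩ ?_ (fun i v hv => ⟨S.V_le i hv, hφ i v hv⟩) n hx).2
  · change φ 1 ∈ 𝒞 0
    rw [map_one]; exact h1
  · rintro i j x y ⟨hx, hx'⟩ ⟨hy, hy'⟩
    refine ⟨S.mul_mem hx hy, ?_⟩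
    change φ (x * y) ∈ 𝒞 (i + j)
    rw [map_mul]; exact hmul _ _ _ _ hx' hy'

lemma algHom_ext {C : Type} [Ring C] [Algebra ℚ C] {φ ψ : S.A →ₐ[ℚ] C}
    (h : ∀ i, ∀ v ∈ S.V i, φ v = ψ v) : φ = ψ := by
  refine AlgHom.ext_of_adjoin_eq_top S.generates fun x hx => ?_
  obtain ⟨i, hi⟩ := Set.mem_iUnion.1 hx
  exact h i x hi

/-- The low-degree part of a simply connected Sullivan algebra: scalars in degree `0`,
nothing in degree `1`. -/
def lowDeg : ℕ → Submodule ℚ S.A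
  | 0 => 1
  | 1 => ⊥
  | (n + 2) => S.grading (n + 2)

lemma grading_le_lowDeg (n : ℕ) : S.grading n ≤ S.lowDeg n := by
  refine S.gen S.lowDeg (fun n => ?_) ?_ ?_ (fun i => ?_) n
  · match n with
    | 0 =>
      intro x hx
      obtain ⟨c, hc⟩ := Submodule.mem_one.1 hx
      rw [← hc, Algebra.algebraMap_eq_smul_one]
      exact Submodule.smul_mem _ _ S.one_mem
    | 1 => exact bot_le
    | (n + 2) => exact le_rfl
  · exact Submodule.mem_one.2 ⟨1, map_one _⟩
  · intro i j x y hx hy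
    match i, j with
    | 0, j =>
      obtain ⟨c, rfl⟩ := Submodule.mem_one.1 hx
      rw [zero_add, Algebra.algebraMap_eq_smul_one, smul_mul_assoc, one_mul]
      exact Submodule.smul_mem _ _ hy
    | i, 0 =>
      obtain ⟨c, rfl⟩ := Submodule.mem_one.1 hy
      rw [add_zero, Algebra.algebraMap_eq_smul_one, mul_smul_comm, mul_one]
      exact Submodule.smul_mem _ _ hx
    | 1, j => rw [(Submodule.mem_bot ℚ).1 hx, zero_mul]; exact zero_mem _
    | i, 1 => rw [(Submodule.mem_bot ℚ).1 hy, mul_zero]; exact zero_mem _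
    | (i + 2), (j + 2) =>
      exact S.mul_mem (i := i + 2) (j := j + 2) hx hy
  · match i with
    | 0 => rw [S.V_zero]; exact bot_le
    | 1 => rw [S.V_one]; exact bot_le
    | (i + 2) => exact S.V_le _

lemma grading_zero {x : S.A} (hx : x ∈ S.grading 0) : ∃ c : ℚ, x = algebraMap ℚ S.A c := by
  obtain ⟨c, hc⟩ := Submodule.mem_one.1 (S.grading_le_lowDeg 0 hx)
  exact ⟨c, hc.symm⟩

lemma grading_one : S.grading 1 = ⊥ := eq_bot_iff.2 (S.grading_le_lowDeg 1)


lemma genSpan_le_aug : S.genSpan ≤ S.aug := by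
  refine iSup_le fun i => ?_
  rcases Nat.eq_zero_or_pos i with rfl | hi
  · rw [S.V_zero]; exact bot_le
  · exact (S.V_le i).trans (S.grading_le_aug hi)

/-- Degreewise induction from the generators, in positive degrees. -/
lemma gen_pos (N : ℕ → Submodule ℚ S.A) (hgen : ∀ i, 0 < i → S.V i ≤ N i)
    (hmul : ∀ i j x y, 0 < i → 0 < j → x ∈ S.grading i → y ∈ S.grading j →
      x ∈ N i → y ∈ N j → x * y ∈ N (i + j)) {n : ℕ} (hn : 0 < n) : S.grading n ≤ N n := by
  have h := S.gen (fun n => if 0 < n then S.grading n ⊓ N n else S.grading n)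
    (fun n => by split_ifs; exacts [inf_le_left, le_rfl])
    (by simpa using S.one_mem) ?_ ?_ n
  · simp only [hn, if_true] at h; exact h.trans inf_le_right
  · intro i j x y hx hy
    rcases Nat.eq_zero_or_pos i with rfl | hi
    · simp only [lt_irrefl, if_false] at hx
      obtain ⟨c, rfl⟩ := S.grading_zero hx
      rw [zero_add, Algebra.algebraMap_eq_smul_one, smul_mul_assoc, one_mul]
      exact Submodule.smul_mem _ _ hy
    rcases Nat.eq_zero_or_pos j with rfl | hj
    · simp only [lt_irrefl, if_false] at hy
      obtain ⟨c, rfl⟩ := S.grading_zero hy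
      rw [add_zero, Algebra.algebraMap_eq_smul_one, mul_smul_comm, mul_one]
      exact Submodule.smul_mem _ _ hx
    simp only [hi, hj, if_true] at hx hy
    simp only [show 0 < i + j by omega, if_true]
    exact ⟨S.mul_mem hx.1 hy.1, hmul i j x y hi hj hx.1 hy.1 hx.2 hy.2⟩
  · intro i
    rcases Nat.eq_zero_or_pos i with rfl | hi
    · rw [S.V_zero]; exact bot_le
    · simp only [hi, if_true]; exact le_inf (S.V_le i) (hgen i hi)

lemma mul_mem_dec {i j : ℕ} {x y : S.A} (hi : 0 < i) (hj : 0 < j) (hx : x ∈ S.grading i)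
    (hy : y ∈ S.grading j) : x * y ∈ S.dec :=
  Submodule.mul_mem_mul (S.grading_le_aug hi hx) (S.grading_le_aug hj hy)

lemma grading_le_V_sup_dec {n : ℕ} (hn : 0 < n) :
    S.grading n ≤ S.V n ⊔ (S.dec ⊓ S.grading n) :=
  S.gen_pos (fun n => S.V n ⊔ (S.dec ⊓ S.grading n)) (fun i _ => le_sup_left)
    (fun i j x y hi hj hx hy _ _ => Submodule.mem_sup_right
      ⟨S.mul_mem_dec hi hj hx hy, S.mul_mem hx hy⟩) hn

lemma aug_eq : S.genSpan * ⊤ = S.aug := by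
  apply le_antisymm
  · exact (mul_le_mul_left S.genSpan_le_aug ⊤).trans S.aug_mul_top
  · refine iSup_le fun i => S.gen_pos (fun _ => S.genSpan * ⊤) (fun j _ v hv => ?_) ?_
      (Nat.succ_pos i)
    · rw [← mul_one v]
      exact Submodule.mul_mem_mul (Submodule.mem_iSup_of_mem j hv) Submodule.mem_top
    · intro i j x y _ _ _ _ hx _
      have := Submodule.mul_mem_mul hx (Submodule.mem_top (R := ℚ) (x := y))
      rw [mul_assoc] at this
      exact mul_le_mul_right le_top S.genSpan this

lemma lengthGE_two : S.lengthGE 2 = S.dec := by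
  rw [lengthGE, pow_two, mul_assoc, S.aug_eq, CDGA.dec]
  apply le_antisymm
  · exact mul_le_mul_left S.genSpan_le_aug _
  · conv_lhs => rw [← S.aug_eq, mul_assoc, S.aug_eq]
    exact mul_le_mul_right S.top_mul_aug _

lemma d_mem_dec (hmin : S.Minimal) (x : S.A) : S.d x ∈ S.dec := by
  have h0 : ∀ y ∈ S.grading 0, S.d y = 0 := fun y hy => by
    obtain ⟨c, rfl⟩ := S.grading_zero hy
    rw [Algebra.algebraMap_eq_smul_one, map_smul, S.d_one, smul_zero]
  induction x using homog_induction S.grading with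
  | h0 n x hx =>
    rcases Nat.eq_zero_or_pos n with rfl | hn
    · rw [h0 x hx]; exact zero_mem _
    refine S.gen_pos (fun n => S.dec.comap S.d) (fun i _ v hv => ?_) ?_ hn hx
    · have := hmin v (Submodule.mem_iSup_of_mem i hv)
      rwa [S.lengthGE_two] at this
    · intro i j x y hi hj hx hy hx' hy'
      change S.d (x * y) ∈ S.dec
      rw [S.leibniz x y hx]
      exact add_mem (S.dec_mul hx') (Submodule.smul_mem _ _ (S.mul_dec hy'))
  | hadd x y hx hy => rw [map_add]; exact add_mem hx hy

lemma minimal_of_dec (h : ∀ x, S.d x ∈ S.dec) : S.Minimal := fun x _ => by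
  rw [S.lengthGE_two]; exact h x

instance finite_grading (n : ℕ) : FiniteDimensional ℚ (S.grading n) := by
  induction n using Nat.strong_induction_on with
  | _ n ih =>
  rcases Nat.eq_zero_or_pos n with rfl | hn
  · have : S.grading 0 ≤ (1 : Submodule ℚ S.A) := S.grading_le_lowDeg 0
    have h1 : FiniteDimensional ℚ (1 : Submodule ℚ S.A) := by
      rw [Submodule.one_eq_span]; infer_instance
    exact Submodule.finiteDimensional_of_le this
  · let U : Submodule ℚ S.A := ⨆ p : Fin n × Fin n, S.grading p.1 * S.grading p.2
    have hU : FiniteDimensional ℚ U := by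
      have : ∀ p : Fin n × Fin n,
          FiniteDimensional ℚ ↥(S.grading p.1 * S.grading p.2 : Submodule ℚ S.A) := fun p => by
        have h1 := ih p.1 p.1.2
        have h2 := ih p.2 p.2.2
        rw [← Submodule.fg_iff_finiteDimensional] at *
        exact h1.mul h2
      exact Submodule.finiteDimensional_iSup _
    have hV := S.V_fin n
    refine Submodule.finiteDimensional_of_le (S₂ := S.V n ⊔ U) ?_
    refine (S.grading_le_V_sup_dec hn).trans (sup_le_sup_left ?_ _)
    rintro x ⟨hx, hx'⟩
    rw [← pj_same S.grading hx']
    refine S.dec_pj S.grading_one ?_ hx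
    intro i j x y hi hj hij hx hy
    exact Submodule.mem_iSup_of_mem (⟨⟨i, by omega⟩, ⟨j, by omega⟩⟩ : Fin n × Fin n)
      (Submodule.mul_mem_mul hx hy)

/-- No generator is decomposable: map to the dual numbers. -/
lemma V_inf_dec (i : ℕ) : S.V i ⊓ S.dec = ⊥ := by
  classical
  rw [eq_bot_iff]
  rintro v ⟨hv, hd⟩
  rcases Nat.eq_zero_or_pos i with rfl | hi
  · rwa [← S.V_zero]
  rw [Submodule.mem_bot]
  by_contra hne
  obtain ⟨l, hl⟩ : ∃ l : S.A →ₗ[ℚ] ℚ, l v ≠ 0 := by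
    by_contra hcon
    push Not at hcon
    exact hne ((Module.forall_dual_apply_eq_zero_iff ℚ v).1 hcon)
  let 𝒞 : ℕ → Submodule ℚ (DualNumber ℚ) := fun n =>
    if n = 0 then LinearMap.range (TrivSqZeroExt.inlHom ℚ ℚ).toAddMonoidHom.toRatLinearMap
    else LinearMap.range (TrivSqZeroExt.inrHom ℚ ℚ)
  have h0 : ∀ x, x ∈ 𝒞 0 ↔ ∃ c : ℚ, TrivSqZeroExt.inl c = x := fun x => by
    simp only [𝒞, if_true, LinearMap.mem_range]; rfl
  have hp : ∀ n, 0 < n → ∀ x, x ∈ 𝒞 n ↔ ∃ c : ℚ, TrivSqZeroExt.inr c = x := fun n hn x => by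
    simp only [𝒞, hn.ne', if_false, LinearMap.mem_range]; rfl
  have h1 : (1 : DualNumber ℚ) ∈ 𝒞 0 := (h0 1).2 ⟨1, rfl⟩
  have hmul : ∀ i j (x y : DualNumber ℚ), x ∈ 𝒞 i → y ∈ 𝒞 j → x * y ∈ 𝒞 (i + j) := by
    intro i j x y hx hy
    rcases Nat.eq_zero_or_pos i with rfl | hi <;> rcases Nat.eq_zero_or_pos j with rfl | hj
    · obtain ⟨c, rfl⟩ := (h0 x).1 hx
      obtain ⟨c', rfl⟩ := (h0 y).1 hy
      exact (h0 _).2 ⟨c * c', by simp⟩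
    · obtain ⟨c, rfl⟩ := (h0 x).1 hx
      obtain ⟨c', rfl⟩ := (hp j hj y).1 hy
      exact (hp _ (by omega) _).2 ⟨c * c', by
        rw [TrivSqZeroExt.inl_mul_inr, smul_eq_mul]⟩
    · obtain ⟨c, rfl⟩ := (hp i hi x).1 hx
      obtain ⟨c', rfl⟩ := (h0 y).1 hy
      exact (hp _ (by omega) _).2 ⟨c * c', by
        rw [mul_comm (TrivSqZeroExt.inr c), TrivSqZeroExt.inl_mul_inr, smul_eq_mul, mul_comm]⟩
    · obtain ⟨c, rfl⟩ := (hp i hi x).1 hx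
      obtain ⟨c', rfl⟩ := (hp j hj y).1 hy
      exact (hp _ (by omega) _).2 ⟨0, by simp⟩
  have hcomm : ∀ i j (x y : DualNumber ℚ), x ∈ 𝒞 i → y ∈ 𝒞 j →
      x * y = ((-1 : ℚ) ^ (i * j)) • (y * x) := by
    intro i j x y hx hy
    rcases Nat.eq_zero_or_pos i with rfl | hi
    · simp [mul_comm]
    rcases Nat.eq_zero_or_pos j with rfl | hj
    · simp [mul_comm]
    obtain ⟨c, rfl⟩ := (hp i hi x).1 hx
    obtain ⟨c', rfl⟩ := (hp j hj y).1 hy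
    simp
  obtain ⟨φ, hφ, -⟩ := S.free (DualNumber ℚ) 𝒞 h1 hmul hcomm
    (fun n => if n = i then TrivSqZeroExt.inrHom ℚ ℚ ∘ₗ l ∘ₗ (S.V n).subtype else 0) (by
      intro n w
      split_ifs with h
      · subst h; exact (hp _ hi _).2 ⟨_, rfl⟩
      · exact zero_mem _)
  have hgr := S.map_grading 𝒞 h1 hmul φ (fun n w hw => by
    have := hφ n ⟨w, hw⟩
    rw [show φ w = _ from this]
    split_ifs with h
    · subst h; exact (hp _ hi _).2 ⟨_, rfl⟩
    · exact zero_mem _)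
  have haug : ∀ x ∈ S.aug, ∃ c : ℚ, TrivSqZeroExt.inr c = φ x := by
    have : S.aug ≤ (LinearMap.range (TrivSqZeroExt.inrHom ℚ ℚ)).comap φ.toLinearMap := by
      refine iSup_le fun n x hx => ?_
      exact (hp (n + 1) (Nat.succ_pos n) _).1 (hgr (n + 1) x hx)
    exact fun x hx => this hx
  have hdec : S.dec ≤ LinearMap.ker φ.toLinearMap := by
    rw [CDGA.dec, Submodule.mul_le]
    intro x hx y hy
    obtain ⟨c, hc⟩ := haug x hx
    obtain ⟨c', hc'⟩ := haug y hy
    change φ (x * y) = 0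
    rw [map_mul, ← hc, ← hc', TrivSqZeroExt.inr_mul_inr]
  have h2 : φ v = 0 := hdec hd
  have h3 := hφ i ⟨v, hv⟩
  simp only [if_true] at h3
  rw [show φ v = _ from h3] at h2
  exact hl (TrivSqZeroExt.inr_injective h2)

lemma one_ne_zero : (1 : S.A) ≠ 0 := by
  obtain ⟨φ, -, -⟩ := S.free ℚ (fun n => if n = 0 then ⊤ else ⊥) (by simp)
    (by
      intro i j x y hx hy
      rcases Nat.eq_zero_or_pos i with rfl | hi
      · rcases Nat.eq_zero_or_pos j with rfl | hj
        · simp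
        · simp only [hj.ne', if_false, Submodule.mem_bot] at hy
          rw [hy, mul_zero]; exact zero_mem _
      · simp only [hi.ne', if_false, Submodule.mem_bot] at hx
        rw [hx, zero_mul]; exact zero_mem _)
    (by
      intro i j x y hx hy
      rcases Nat.eq_zero_or_pos i with rfl | hi
      · simp [mul_comm]
      · simp only [hi.ne', if_false, Submodule.mem_bot] at hx
        simp [hx])
    (fun _ => 0) (fun i v => zero_mem _)
  intro h
  have := congrArg φ h
  rw [map_one, map_zero] at this
  exact _root_.one_ne_zero this

end Sullivan
end RHT

namespace RHT

/-! ### The rescaling endomorphism of a formal minimal Sullivan algebra -/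

/-- Dependent-choice recursion: a sequence of successively better approximations. -/
lemma exists_seq {X : Type} (agree : ℕ → X → X → Prop) (Good : ℕ → X → Prop)
    (x0 : X) (h0 : Good 0 x0)
    (step : ∀ n x, Good n x → ∃ y, Good (n + 1) y ∧ agree n x y) :
    ∃ s : ℕ → X, ∀ n, Good n (s n) ∧ agree n (s n) (s (n + 1)) := by
  choose F hF using step
  let s : (n : ℕ) → {x : X // Good n x} := fun n =>
    Nat.rec ⟨x0, h0⟩ (fun n x => ⟨F n x.1 x.2, (hF n x.1 x.2).1⟩) n
  exact ⟨fun n => (s n).1, fun n => ⟨(s n).2, (hF n (s n).1 (s n).2).2⟩⟩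

namespace Sullivan

variable (S : Sullivan)

/-- Extension of a degree-preserving linear map on generators to an algebra map. -/
lemma exists_extend (T : CDGA) (f : ℕ → S.A →ₗ[ℚ] T.A)
    (hf : ∀ i, ∀ v ∈ S.V i, f i v ∈ T.grading i) :
    ∃ φ : S.A →ₐ[ℚ] T.A, (∀ i, ∀ x ∈ S.grading i, φ x ∈ T.grading i) ∧
      ∀ i, ∀ v ∈ S.V i, φ v = f i v := by
  obtain ⟨φ, hφ, -⟩ := S.free T.A T.grading T.one_mem (fun _ _ _ _ => T.mul_mem)
    (fun _ _ _ _ => T.gcomm) (fun i => f i ∘ₗ (S.V i).subtype) (fun i v => hf i v v.2)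
  refine ⟨φ, S.map_grading T.grading T.one_mem (fun _ _ _ _ => T.mul_mem) φ ?_,
    fun i v hv => hφ i ⟨v, hv⟩⟩
  intro i v hv
  rw [show φ v = f i v from hφ i ⟨v, hv⟩]
  exact hf i v hv

/-- Truncated induction from generators: a subspace closed under products of homogeneous
elements and containing the generators of degree `< n` contains everything of degree `< n`
and the decomposables of degree `n + 1`. -/
lemma gen_lt (U : Submodule ℚ S.A) (h1 : (1 : S.A) ∈ U)
    (hmul : ∀ i j x y, x ∈ S.grading i → y ∈ S.grading j → x ∈ U → y ∈ U → x * y ∈ U)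
    {n : ℕ} (hgen : ∀ i, i < n → S.V i ≤ U) :
    (∀ m, m < n → S.grading m ≤ U) ∧
      ∀ x ∈ S.dec, x ∈ S.grading (n + 1) → x ∈ U := by
  have key : ∀ m, m < n → S.grading m ≤ U := by
    intro m hm
    have h := S.gen (fun m => if m < n then S.grading m ⊓ U else S.grading m)
      (fun n => by split_ifs; exacts [inf_le_left, le_rfl]) ?_ ?_ ?_ m
    · simp only [hm, if_true] at h; exact h.trans inf_le_right
    · split_ifs
      exacts [⟨S.one_mem, h1⟩, S.one_mem]
    · intro i j x y hx hy
      have hx' : x ∈ S.grading i := by split_ifs at hx; exacts [hx.1, hx]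
      have hy' : y ∈ S.grading j := by split_ifs at hy; exacts [hy.1, hy]
      split_ifs with h
      · simp only [show i < n by omega, show j < n by omega, if_true] at hx hy
        exact ⟨S.mul_mem hx' hy', hmul i j x y hx' hy' hx.2 hy.2⟩
      · exact S.mul_mem hx' hy'
    · intro i
      split_ifs with h
      exacts [le_inf (S.V_le i) (hgen i h), S.V_le i]
  refine ⟨key, fun x hx hx' => ?_⟩
  rw [← pj_same S.grading hx']
  refine S.dec_pj S.grading_one ?_ hx
  intro i j x y hi hj hij hx hy
  exact hmul i j x y hx hy (key i (by omega) hx) (key j (by omega) hy)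

lemma gen_all (U : Submodule ℚ S.A) (h1 : (1 : S.A) ∈ U)
    (hmul : ∀ i j x y, x ∈ S.grading i → y ∈ S.grading j → x ∈ U → y ∈ U → x * y ∈ U)
    (hgen : ∀ i, S.V i ≤ U) (x : S.A) : x ∈ U :=
  mem_of_pj (𝓜 := S.grading) fun n =>
    (S.gen_lt U h1 hmul (n := n + 1) (fun i _ => hgen i)).1 n (by omega) (pj_mem _ _ _)

/-- The elements on which `φ` is a `2`-twisted chain map compatible with `g`. -/
def twistSub {K : CDGA} (g : Hom S.toCDGA K) (φ : S.A →ₐ[ℚ] S.A) : Submodule ℚ S.A :=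
  LinearMap.ker (S.d ∘ₗ φ.toLinearMap - (2 : ℚ) • (φ.toLinearMap ∘ₗ S.d)) ⊓
    LinearMap.ker (g.toAlgHom.toLinearMap ∘ₗ φ.toLinearMap - g.toAlgHom.toLinearMap)

lemma mem_twistSub {K : CDGA} (g : Hom S.toCDGA K) (φ : S.A →ₐ[ℚ] S.A) (x : S.A) :
    x ∈ S.twistSub g φ ↔ S.d (φ x) = (2 : ℚ) • φ (S.d x) ∧
      g.toAlgHom (φ x) = g.toAlgHom x := by
  simp only [twistSub, Submodule.mem_inf, LinearMap.mem_ker, LinearMap.sub_apply, sub_eq_zero]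
  rfl

lemma twistSub_one {K : CDGA} (g : Hom S.toCDGA K) (φ : S.A →ₐ[ℚ] S.A) :
    (1 : S.A) ∈ S.twistSub g φ := by
  rw [mem_twistSub]; simp [S.d_one]

lemma twistSub_mul {K : CDGA} (g : Hom S.toCDGA K) (φ : S.A →ₐ[ℚ] S.A)
    (hφ : ∀ i, ∀ x ∈ S.grading i, φ x ∈ S.grading i) (i j : ℕ) (x y : S.A)
    (hx : x ∈ S.grading i) (_ : y ∈ S.grading j) (hx' : x ∈ S.twistSub g φ)
    (hy' : y ∈ S.twistSub g φ) : x * y ∈ S.twistSub g φ := by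
  rw [mem_twistSub] at *
  refine ⟨?_, by rw [map_mul, map_mul, map_mul, hx'.2, hy'.2]⟩
  rw [map_mul, S.leibniz _ _ (hφ i x hx), S.leibniz _ _ hx, hx'.1, hy'.1, map_add, map_mul,
    map_smul, map_mul, smul_add, smul_mul_assoc, mul_smul_comm, smul_comm]

/-- A formal minimal Sullivan algebra has an endomorphism `φ` with `d φ = 2 φ d` and `g φ = g`,
where `g` is the quasi-isomorphism to its cohomology. It is built one degree of generators at
a time. -/
theorem exists_twist (hmin : S.Minimal) {K : CDGA} (hK : K.ZeroDiff) (g : Hom S.toCDGA K)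
    (hg : QuasiIso g) :
    ∃ φ : S.A →ₐ[ℚ] S.A, (∀ i, ∀ x ∈ S.grading i, φ x ∈ S.grading i) ∧
      ∀ x, S.d (φ x) = (2 : ℚ) • φ (S.d x) ∧ g.toAlgHom (φ x) = g.toAlgHom x := by
  have hseq := exists_seq
    (X := S.A →ₐ[ℚ] S.A)
    (agree := fun n φ ψ => ∀ i, i < n → ∀ v ∈ S.V i, φ v = ψ v)
    (Good := fun n φ => (∀ i, ∀ x ∈ S.grading i, φ x ∈ S.grading i) ∧
      ∀ i, i < n → S.V i ≤ S.twistSub g φ)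
    (AlgHom.id ℚ S.A) ⟨fun _ _ h => h, fun i hi => absurd hi (Nat.not_lt_zero i)⟩
  refine (hseq ?step).elim fun s hs => ?main
  case main =>
    -- the approximations stabilise on the generators of each degree; `φ` is their limit
    have hst : ∀ n m, n ≤ m → ∀ i, i < n → ∀ v ∈ S.V i, s m v = s n v := by
      intro n m hnm
      induction m, hnm using Nat.le_induction with
      | base => intros; rfl
      | succ m hm ih =>
        intro i hi v hv
        rw [← (hs m).2 i (by omega) v hv, ih i hi v hv]
    obtain ⟨φ, hφ, hφV⟩ := S.exists_extend S.toCDGA (fun i => (s (i + 1)).toLinearMap)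
      (fun i v hv => (hs (i + 1)).1.1 i v (S.V_le i hv))
    refine ⟨φ, hφ, fun x => (S.mem_twistSub g φ x).1 (S.gen_all _ (S.twistSub_one g φ)
      (S.twistSub_mul g φ hφ) (fun i v hv => ?_) x)⟩
    -- `d v` is decomposable of degree `i + 1`, hence a polynomial in generators of degree `< i`
    have hag : ∀ x ∈ S.dec, x ∈ S.grading (i + 1) → x ∈ LinearMap.ker
        (φ.toLinearMap - (s (i + 1)).toLinearMap) := by
      refine (S.gen_lt _ ?_ ?_ (n := i) ?_).2
      · simp
      · intro a b x y _ _ hx hy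
        rw [LinearMap.mem_ker, LinearMap.sub_apply, sub_eq_zero] at *
        change φ (x * y) = s (i + 1) (x * y)
        rw [map_mul, map_mul]; exact congrArg₂ _ hx hy
      · intro j hj v hv
        rw [LinearMap.mem_ker, LinearMap.sub_apply, sub_eq_zero]
        change φ v = s (i + 1) v
        rw [hφV j v hv]; exact (hst (j + 1) (i + 1) (by omega) j (by omega) v hv).symm
    have h1 := (S.mem_twistSub g _ v).1 ((hs (i + 1)).1.2 i (by omega) hv)
    have h2 := hag _ (S.d_mem_dec hmin v) (S.d_mem (S.V_le i hv))
    rw [LinearMap.mem_ker, LinearMap.sub_apply, sub_eq_zero] at h2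
    rw [mem_twistSub, show φ (S.d v) = s (i + 1) (S.d v) from h2,
      show φ v = s (i + 1) v from hφV i v hv]
    exact h1
  case step =>
    rintro n φ ⟨hφ, hφn⟩
    have hU := S.gen_lt _ (S.twistSub_one g φ) (S.twistSub_mul g φ hφ) hφn
    -- the admissible values `u` at a generator `w` of degree `n`: `d u = 2 φ (d w)`, `g u = g w`
    let R : Submodule ℚ (S.A × S.A) :=
      (S.grading n).comap (LinearMap.snd ℚ S.A S.A) ⊓
        LinearMap.ker (S.d ∘ₗ LinearMap.snd ℚ S.A S.A -
          (2 : ℚ) • (φ.toLinearMap ∘ₗ S.d ∘ₗ LinearMap.fst ℚ S.A S.A)) ⊓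
        LinearMap.ker (g.toAlgHom.toLinearMap ∘ₗ LinearMap.snd ℚ S.A S.A -
          g.toAlgHom.toLinearMap ∘ₗ LinearMap.fst ℚ S.A S.A)
    have hR : ∀ w u, (w, u) ∈ R ↔ (u ∈ S.grading n ∧ S.d u = (2 : ℚ) • φ (S.d w)) ∧
        g.toAlgHom u = g.toAlgHom w := fun w u => by
      simp only [R, Submodule.mem_inf, LinearMap.mem_ker, LinearMap.sub_apply, sub_eq_zero]
      rfl
    obtain ⟨q, hq⟩ := exists_linear_choice R (S.V n) (by
      intro w hw
      have hz : S.d w ∈ S.twistSub g φ :=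
        hU.2 _ (S.d_mem_dec hmin w) (S.d_mem (S.V_le n hw))
      rw [mem_twistSub, S.d_sq, map_zero, smul_zero, g.comm_d, hK] at hz
      -- `2 φ (d w)` is a cocycle in the kernel of `g`, so it is exact; its primitive is then corrected
      -- by a cocycle to have the prescribed image under `g`
      obtain ⟨u0, hu0, hu0'⟩ := S.exact_homog (n := n) (x := (2 : ℚ) • φ (S.d w))
        (Submodule.smul_mem _ _ (hφ _ _ (S.d_mem (S.V_le n hw))))
        (hg.2 _ (by rw [map_smul, hz.1, smul_zero])
          ⟨0, by rw [map_zero, map_smul, hz.2, smul_zero]⟩)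
      obtain ⟨c, hc, y, hy⟩ := hg.1 (g.toAlgHom w - g.toAlgHom u0) (hK _)
      rw [hK, eq_comm, sub_eq_zero] at hy
      refine ⟨u0 + pj S.grading n c, (hR _ _).2 ⟨⟨add_mem hu0 (pj_mem _ _ _), ?_⟩, ?_⟩⟩
      · rw [map_add, S.pj_cocycle n hc, add_zero, hu0']
      · have h1 : g.toAlgHom (pj S.grading n c) = pj K.grading n (g.toAlgHom c) :=
          (pj_comm (𝓜 := S.grading) (𝓜' := K.grading) g.toAlgHom.toLinearMap
            (fun i x hx => g.map_grading hx) n c).symm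
        rw [map_add, h1, hy, pj_same, add_sub_cancel]
        exact sub_mem (g.map_grading (S.V_le n hw)) (g.map_grading hu0))
    obtain ⟨q', hq'⟩ := q.exists_extend
    have hq2 : ∀ w ∈ S.V n, (w, q' w) ∈ R := fun w hw => by
      have := LinearMap.congr_fun hq' ⟨w, hw⟩
      have h2 := hq ⟨w, hw⟩
      rw [← this] at h2
      exact h2
    obtain ⟨ψ, hψ, hψV⟩ := S.exists_extend S.toCDGA
      (fun i => if i < n then φ.toLinearMap else if i = n then q' else 0) (by
        intro i v hv
        split_ifs with h1 h2
        · exact hφ i v (S.V_le i hv)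
        · subst h2; exact ((hR _ _).1 (hq2 v hv)).1.1
        · exact zero_mem _)
    have hag0 : ∀ i, i < n → ∀ v ∈ S.V i, ψ v = φ v := fun i hi v hv => by
      rw [hψV i v hv, if_pos hi]; rfl
    have hag := S.gen_lt (LinearMap.ker (ψ.toLinearMap - φ.toLinearMap)) (by simp) (by
        intro a b x y _ _ hx hy
        rw [LinearMap.mem_ker, LinearMap.sub_apply, sub_eq_zero] at *
        change ψ (x * y) = φ (x * y)
        rw [map_mul, map_mul]; exact congrArg₂ _ hx hy) (n := n) (by
        intro j hj v hv
        rw [LinearMap.mem_ker, LinearMap.sub_apply, sub_eq_zero]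
        exact hag0 j hj v hv)
    refine ⟨ψ, ⟨hψ, fun i hi v hv => ?_⟩, fun i hi v hv => (hag0 i hi v hv).symm⟩
    have h2 : ψ (S.d v) = φ (S.d v) := by
      have : S.d v ∈ LinearMap.ker (ψ.toLinearMap - φ.toLinearMap) := by
        rcases Nat.lt_succ_iff_lt_or_eq.1 hi with h | rfl
        · by_cases h' : i + 1 < n
          · exact hag.1 (i + 1) h' (S.d_mem (S.V_le i hv))
          · exact (S.gen_lt _ (by simp) (by
              intro a b x y _ _ hx hy
              rw [LinearMap.mem_ker, LinearMap.sub_apply, sub_eq_zero] at *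
              change ψ (x * y) = φ (x * y)
              rw [map_mul, map_mul]; exact congrArg₂ _ hx hy) (n := i) (by
              intro j hj v hv
              rw [LinearMap.mem_ker, LinearMap.sub_apply, sub_eq_zero]
              exact hag0 j (by omega) v hv)).2 _ (S.d_mem_dec hmin v)
                (S.d_mem (S.V_le i hv))
        · exact hag.2 _ (S.d_mem_dec hmin v) (S.d_mem (S.V_le i hv))
      rwa [LinearMap.mem_ker, LinearMap.sub_apply, sub_eq_zero] at this
    rw [mem_twistSub, h2]
    rcases Nat.lt_succ_iff_lt_or_eq.1 hi with h | rfl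
    · rw [hag0 i h v hv]; exact (S.mem_twistSub g φ v).1 (hφn i h hv)
    · have := (hR _ _).1 (hq2 v hv)
      have h3 : ψ v = q' v := by rw [hψV i v hv]; simp
      rw [h3]; exact ⟨this.1.2, this.2⟩

end Sullivan
end RHT

namespace RHT

/-! ### Generalized eigenspaces of the rescaling give the lower grading -/

section Eigen

variable {A : Type} [AddCommGroup A] [Module ℚ A] (φ : Module.End ℚ A)

lemma mem_eig {μ : ℚ} {x : A} :
    x ∈ φ.maxGenEigenspace μ ↔ ∃ k : ℕ, ((φ - μ • (1 : Module.End ℚ A)) ^ k) x = 0 :=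
  Module.End.mem_maxGenEigenspace φ μ x

lemma eig_of_sub {μ : ℚ} {x : A} (h : φ x - μ • x ∈ φ.maxGenEigenspace μ) :
    x ∈ φ.maxGenEigenspace μ := by
  obtain ⟨k, hk⟩ := (mem_eig φ).1 h
  exact (mem_eig φ).2 ⟨k + 1, by rw [pow_succ]; exact hk⟩

/-- `φ - μ` is onto on the generalized eigenspaces for the other eigenvalues. -/
lemma eig_surj {μ ν : ℚ} (hne : μ ≠ ν) {y : A} (hy : y ∈ φ.maxGenEigenspace ν) :
    ∃ z ∈ φ.maxGenEigenspace ν, φ z - μ • z = y := by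
  obtain ⟨k, hk⟩ := (mem_eig φ).1 hy
  induction k generalizing y with
  | zero => exact ⟨0, zero_mem _, by simpa using hk.symm⟩
  | succ k ih =>
    have h1 : ((φ - ν • (1 : Module.End ℚ A)) ^ k) (φ y - ν • y) = 0 := by
      rw [pow_succ] at hk; exact hk
    obtain ⟨z, hz, hz'⟩ := ih ((mem_eig φ).2 ⟨k, h1⟩) h1
    have hne' : ν - μ ≠ 0 := sub_ne_zero.2 hne.symm
    refine ⟨(ν - μ)⁻¹ • (y - z), Submodule.smul_mem _ _ (sub_mem hy hz), ?_⟩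
    have : φ (y - z) - μ • (y - z) = (ν - μ) • y := by
      rw [map_sub, smul_sub, sub_smul, sub_sub_sub_comm, hz']; abel
    rw [map_smul, smul_comm μ, ← smul_sub, this, smul_smul, inv_mul_cancel₀ hne', one_smul]

/-- The sum of the generalized eigenspaces is closed under preimages by `φ - e k`: on the other
eigenspaces `φ - e k` is onto, and a vector sent into the `e k` one already lies in it. -/
lemma iSup_eig_of_sub {e : ℕ → ℚ} (k : ℕ) {x : A}
    (h : φ x - e k • x ∈ ⨆ j, φ.maxGenEigenspace (e j)) :
    x ∈ ⨆ j, φ.maxGenEigenspace (e j) := by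
  have key : ∀ u ∈ ⨆ j, φ.maxGenEigenspace (e j), ∃ z ∈ ⨆ j, φ.maxGenEigenspace (e j),
      u - (φ z - e k • z) ∈ φ.maxGenEigenspace (e k) := by
    intro u hu
    induction hu using Submodule.iSup_induction' with
    | mem j u hu =>
      by_cases hjk : e k = e j
      · refine ⟨0, zero_mem _, ?_⟩
        rw [map_zero, smul_zero, sub_zero, sub_zero, hjk]; exact hu
      · obtain ⟨z, hz, hz'⟩ := eig_surj φ hjk hu
        refine ⟨z, Submodule.mem_iSup_of_mem j hz, ?_⟩
        rw [hz', sub_self]; exact zero_mem _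
    | zero => exact ⟨0, zero_mem _, by simp⟩
    | add u v _ _ hu hv =>
      obtain ⟨z, hz, hz'⟩ := hu
      obtain ⟨w, hw, hw'⟩ := hv
      refine ⟨z + w, add_mem hz hw, ?_⟩
      have := add_mem hz' hw'
      convert this using 1
      rw [map_add, smul_add]; abel
  obtain ⟨z, hz, hz'⟩ := key _ h
  have : x - z ∈ φ.maxGenEigenspace (e k) := by
    apply eig_of_sub
    convert hz' using 1
    rw [map_sub, smul_sub]; abel
  rw [← sub_add_cancel x z]
  exact add_mem (Submodule.mem_iSup_of_mem k this) hz

/-- The product of the operators `φ - e k`, `k` in the list. -/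
def killOp (e : ℕ → ℚ) : List ℕ → Module.End ℚ A
  | [] => 1
  | k :: l => killOp e l * (φ - e k • (1 : Module.End ℚ A))

lemma killOp_comm (e : ℕ → ℚ) (l : List ℕ) : Commute φ (killOp φ e l) := by
  induction l with
  | nil => exact Commute.one_right _
  | cons k l ih =>
    refine ih.mul_right ((Commute.refl φ).sub_right ?_)
    exact (Commute.one_right φ).smul_right _

lemma killOp_comm' (e : ℕ → ℚ) (l l' : List ℕ) : Commute (killOp φ e l) (killOp φ e l') := by
  induction l with
  | nil => exact Commute.one_left _
  | cons k l ih =>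
    refine ih.mul_left ((killOp_comm φ e l').sub_left ?_)
    exact (Commute.one_left _).smul_left _

lemma killOp_append (e : ℕ → ℚ) (l l' : List ℕ) :
    killOp φ e (l ++ l') = killOp φ e l' * killOp φ e l := by
  induction l with
  | nil => simp [killOp]
  | cons k l ih => simp only [List.cons_append, killOp, ih, mul_assoc]

/-- Vectors in the sum of the generalized eigenspaces are killed by a product of the
`φ - e k`. -/
lemma exists_killOp (e : ℕ → ℚ) {u : A} (hu : u ∈ ⨆ j, φ.maxGenEigenspace (e j)) :
    ∃ l, killOp φ e l u = 0 := by
  induction hu using Submodule.iSup_induction' with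
  | mem j u hu =>
    obtain ⟨k, hk⟩ := (mem_eig φ).1 hu
    refine ⟨List.replicate k j, ?_⟩
    have : ∀ k, killOp φ e (List.replicate k j) = (φ - e j • (1 : Module.End ℚ A)) ^ k := by
      intro k
      induction k with
      | zero => rfl
      | succ k ih => rw [List.replicate_succ, killOp, ih, pow_succ]
    rw [this, hk]
  | zero => exact ⟨[], map_zero _⟩
  | add u v _ _ hu hv =>
    obtain ⟨l, hl⟩ := hu
    obtain ⟨l', hl'⟩ := hv
    refine ⟨l ++ l', ?_⟩
    rw [map_add]
    have h1 : killOp φ e (l ++ l') u = 0 := by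
      rw [killOp_append, Module.End.mul_apply, hl, map_zero]
    have h2 : killOp φ e (l ++ l') v = 0 := by
      rw [killOp_append, (killOp_comm' φ e l' l).eq, Module.End.mul_apply, hl', map_zero]
    rw [h1, h2, add_zero]

end Eigen

/-- Generalized eigenspaces of an algebra endomorphism multiply. -/
lemma eig_mul {A : Type} [Ring A] [Algebra ℚ A] (φ : A →ₐ[ℚ] A) {μ ν : ℚ} {x y : A}
    (hx : x ∈ Module.End.maxGenEigenspace φ.toLinearMap μ)
    (hy : y ∈ Module.End.maxGenEigenspace φ.toLinearMap ν) :
    x * y ∈ Module.End.maxGenEigenspace φ.toLinearMap (μ * ν) := by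
  set f : Module.End ℚ A := φ.toLinearMap with hf
  have key : ∀ n p q, p + q ≤ n → ∀ x y, ((f - μ • (1 : Module.End ℚ A)) ^ p) x = 0 →
      ((f - ν • (1 : Module.End ℚ A)) ^ q) y = 0 →
      x * y ∈ Module.End.maxGenEigenspace f (μ * ν) := by
    intro n
    induction n with
    | zero =>
      intro p q h x y hx hy
      obtain rfl : p = 0 := by omega
      rw [show x = 0 from hx, zero_mul]; exact zero_mem _
    | succ n ih =>
      intro p q h x y hx hy
      rcases p with _ | p
      · rw [show x = 0 from hx, zero_mul]; exact zero_mem _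
      rcases q with _ | q
      · rw [show y = 0 from hy, mul_zero]; exact zero_mem _
      apply eig_of_sub
      have e : f (x * y) - (μ * ν) • (x * y) = (f x - μ • x) * f y + μ • (x * (f y - ν • y)) := by
        rw [show f (x * y) = f x * f y from map_mul φ x y, sub_mul, mul_sub, smul_mul_assoc,
          mul_smul_comm, smul_sub, smul_smul]
        abel
      rw [e]
      refine add_mem (ih p (q + 1) (by omega) _ _ ?_ ?_)
        (Submodule.smul_mem _ _ (ih (p + 1) q (by omega) _ _ hx ?_))
      · rw [pow_succ] at hx; exact hx
      · have hc : Commute ((f - ν • (1 : Module.End ℚ A)) ^ (q + 1)) f :=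
          ((Commute.refl f).sub_left ((Commute.one_left f).smul_left _)).pow_left _
        rw [← Module.End.mul_apply, hc.eq, Module.End.mul_apply, hy, map_zero]
      · rw [pow_succ] at hy; exact hy
  obtain ⟨p, hp⟩ := (mem_eig f).1 hx
  obtain ⟨q, hq⟩ := (mem_eig f).1 hy
  exact key _ p q le_rfl x y hp hq

namespace Sullivan

variable (S : Sullivan)

/-- The lower grading of a formal minimal Sullivan algebra: the part of lower degree `k` is the
generalized eigenspace for `2 ^ k` of the rescaling endomorphism. -/
theorem exists_low (hmin : S.Minimal) (hformal : Formal S.toCDGA) :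
    ∃ low : ℕ → Submodule ℚ S.A, (1 : S.A) ∈ low 0 ∧
      (∀ i j (x y : S.A), x ∈ low i → y ∈ low j → x * y ∈ low (i + j)) ∧
      DirectSum.IsInternal low ∧ (∀ x ∈ low 0, S.d x = 0) ∧
      (∀ k, ∀ x ∈ low (k + 1), S.d x ∈ low k) ∧
      (∀ k, ∀ x ∈ low (k + 1), S.d x = 0 → ∃ y : S.A, S.d y = x) ∧
      (∀ n k, ∀ x ∈ low k, pj S.grading n x ∈ low k) := by
  obtain ⟨K, g, hK, hg⟩ := hformal
  obtain ⟨φ, hφ, hφ2⟩ := S.exists_twist hmin hK g hg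
  set f : Module.End ℚ S.A := φ.toLinearMap with hf
  have hfφ : ∀ x, f x = φ x := fun x => rfl
  let e : ℕ → ℚ := fun k => 2 ^ k
  let U : Submodule ℚ S.A := ⨆ k, f.maxGenEigenspace (e k)
  have h1 : (1 : S.A) ∈ f.maxGenEigenspace (e 0) := by
    apply eig_of_sub
    rw [hfφ, map_one]; simp [e]
  have hmul : ∀ i j (x y : S.A), x ∈ f.maxGenEigenspace (e i) → y ∈ f.maxGenEigenspace (e j) →
      x * y ∈ f.maxGenEigenspace (e (i + j)) := by
    intro i j x y hx hy
    have := eig_mul φ hx hy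
    rwa [← pow_add] at this
  have hUmul : ∀ x y : S.A, x ∈ U → y ∈ U → x * y ∈ U := by
    intro x y hx hy
    induction hx using Submodule.iSup_induction' with
    | mem i x hx =>
      induction hy using Submodule.iSup_induction' with
      | mem j y hy => exact Submodule.mem_iSup_of_mem (i + j) (hmul i j x y hx hy)
      | zero => rw [mul_zero]; exact zero_mem _
      | add y z _ _ hy hz => rw [mul_add]; exact add_mem hy hz
    | zero => rw [zero_mul]; exact zero_mem _
    | add y z _ _ hy hz => rw [add_mul]; exact add_mem hy hz
  -- since `d φ = 2 φ d`, the differential halves the eigenvalues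
  have hd : ∀ μ x, x ∈ f.maxGenEigenspace (2 * μ) → S.d x ∈ f.maxGenEigenspace μ := by
    intro μ x hx
    obtain ⟨p, hp⟩ := (mem_eig f).1 hx
    induction p generalizing x with
    | zero => rw [show x = 0 from hp, map_zero]; exact zero_mem _
    | succ p ih =>
      have hp' : ((f - (2 * μ) • (1 : Module.End ℚ S.A)) ^ p) (f x - (2 * μ) • x) = 0 := by
        rw [pow_succ] at hp; exact hp
      have h2 := ih _ ((mem_eig f).2 ⟨p, hp'⟩) hp'
      apply eig_of_sub
      have : S.d (f x - (2 * μ) • x) = (2 : ℚ) • (f (S.d x) - μ • S.d x) := by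
        rw [map_sub, map_smul, smul_sub, smul_smul]
        exact congrArg (· - _) (hφ2 x).1
      rw [this] at h2
      exact (Submodule.smul_mem_iff _ (by norm_num)).1 h2
  -- by induction on the degree every element is a sum of generalized eigenvectors
  have htop : U = ⊤ := by
    have key : ∀ n, S.grading n ≤ U := by
      intro n
      induction n using Nat.strong_induction_on with
      | _ n ih =>
      rcases Nat.eq_zero_or_pos n with rfl | hn
      · intro x hx
        obtain ⟨c, rfl⟩ := S.grading_zero hx
        rw [Algebra.algebraMap_eq_smul_one]
        exact Submodule.smul_mem _ _ (Submodule.mem_iSup_of_mem 0 h1)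
      have hdecU : ∀ m, m ≤ n + 1 → ∀ x ∈ S.dec, x ∈ S.grading m → x ∈ U := by
        intro m hm x hx hx'
        rw [← pj_same S.grading hx']
        refine S.dec_pj S.grading_one ?_ hx
        intro i j x y hi hj hij hx hy
        exact hUmul x y (ih i (by omega) hx) (ih j (by omega) hy)
      -- `d w` is decomposable, so a product of operators `φ - 2 ^ k` kills it; the operators
      -- `φ - 2 ^ (k + 1)` reduce `w` to a cocycle
      have hlist : ∀ l, ∀ w ∈ S.grading n, killOp f e l (S.d w) = 0 → w ∈ U := by
        intro l
        induction l with
        | nil =>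
          intro w hw hl
          have hw0 : S.d w = 0 := hl
          -- for a cocycle `w`, `φ w - w` is exact, hence decomposable by minimality
          have hex : S.toCDGA.IsExact (f w - w) := by
            refine hg.2 _ ?_ ⟨0, ?_⟩
            · rw [map_sub, hw0, sub_zero, hfφ, (hφ2 w).1, hw0, map_zero, smul_zero]
            · rw [map_zero, map_sub, hfφ, (hφ2 w).2, sub_self]
          obtain ⟨a, ha⟩ := hex
          apply iSup_eig_of_sub f 0
          have : e 0 = 1 := pow_zero 2
          rw [this, one_smul]
          apply hdecU n (by omega)
          · rw [← ha]; exact S.d_mem_dec hmin a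
          · exact sub_mem (hφ n w hw) hw
        | cons k l ihl =>
          intro w hw hl
          apply iSup_eig_of_sub f (k + 1)
          apply ihl _ (sub_mem (hφ n w hw) (Submodule.smul_mem _ _ hw))
          have : S.d (f w - e (k + 1) • w) = (2 : ℚ) • (f (S.d w) - e k • S.d w) := by
            rw [map_sub, map_smul, smul_sub, smul_smul, hfφ, (hφ2 w).1]
            simp only [e, pow_succ, mul_comm (2 : ℚ)]; rfl
          change killOp f e l (S.d (f w - e (k + 1) • w)) = 0
          rw [this, map_smul]
          have h2 : killOp f e l (f (S.d w) - e k • S.d w) = 0 := hl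
          rw [h2, smul_zero]
      intro w hw
      obtain ⟨l, hl⟩ := exists_killOp f e
        (hdecU (n + 1) le_rfl _ (S.d_mem_dec hmin w) (S.d_mem hw))
      exact hlist l w hw hl
    rw [eq_top_iff]
    intro x _
    exact mem_of_pj (𝓜 := S.grading) fun n => key n (pj_mem _ _ _)
  have hind := Module.End.independent_maxGenEigenspace f
  have hinj : Function.Injective e := fun a b h => pow_right_injective₀ (by norm_num) (by norm_num) h
  refine ⟨fun k => f.maxGenEigenspace (e k), h1, hmul, ?_, ?_, ?_, ?_, ?_⟩
  · exact DirectSum.isInternal_submodule_of_iSupIndep_of_iSup_eq_top (hind.comp hinj) htop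
  · intro x hx
    -- `1 / 2` is not among the eigenvalues `2 ^ k`
    have h2 : S.d x ∈ f.maxGenEigenspace (1 / 2) := by
      apply hd
      have : (2 : ℚ) * (1 / 2) = e 0 := by simp [e]
      rw [this]; exact hx
    have h3 := hind (1 / 2)
    have h4 : (⊤ : Submodule ℚ S.A) ≤ ⨆ j, ⨆ (_ : j ≠ (1 / 2 : ℚ)), f.maxGenEigenspace j := by
      rw [← htop]
      refine iSup_le fun k => ?_
      refine le_iSup₂_of_le (e k) ?_ le_rfl
      have : (1 : ℚ) ≤ e k := one_le_pow₀ (by norm_num)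
      intro h; rw [h] at this; norm_num at this
    exact (Submodule.disjoint_def.1 h3) _ h2 (h4 trivial)
  · intro k x hx
    apply hd
    have : 2 * e k = e (k + 1) := by simp only [e, pow_succ, mul_comm]
    rw [this]; exact hx
  · intro k x hx hx0
    obtain ⟨p, hp⟩ := (mem_eig f).1 hx
    -- `g φ = g`, so `g` kills the generalized eigenvectors for every eigenvalue other than `1`
    have h2 : ∀ p y, g.toAlgHom (((f - e (k + 1) • (1 : Module.End ℚ S.A)) ^ p) y) =
        (1 - e (k + 1)) ^ p • g.toAlgHom y := by
      intro p
      induction p with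
      | zero => intro y; simp
      | succ p ih =>
        intro y
        rw [pow_succ, Module.End.mul_apply, ih, pow_succ, mul_smul]
        congr 1
        rw [sub_smul, one_smul]
        change g.toAlgHom (f y - e (k + 1) • y) = _
        rw [map_sub, map_smul, hfφ, (hφ2 y).2]
    have h3 := h2 p x
    rw [hp, map_zero] at h3
    have h4 : (1 - e (k + 1)) ≠ 0 := by
      have : (1 : ℚ) < e (k + 1) := one_lt_pow₀ (by norm_num) (by omega)
      exact (sub_neg.2 this).ne
    have h5 : g.toAlgHom x = 0 := (smul_eq_zero.1 h3.symm).resolve_left (pow_ne_zero _ h4)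
    exact hg.2 x hx0 ⟨0, by rw [map_zero, h5]⟩
  · intro n k x hx
    obtain ⟨p, hp⟩ := (mem_eig f).1 hx
    refine (mem_eig f).2 ⟨p, ?_⟩
    have hc : ∀ y, pj S.grading n (f y - e k • y) =
        f (pj S.grading n y) - e k • pj S.grading n y := fun y => by
      rw [map_sub, map_smul, pj_comm f (fun i x hx => hφ i x hx)]
    have h2 : ∀ p y, pj S.grading n (((f - e k • (1 : Module.End ℚ S.A)) ^ p) y) =
        ((f - e k • (1 : Module.End ℚ S.A)) ^ p) (pj S.grading n y) := by
      intro p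
      induction p with
      | zero => intro y; rfl
      | succ p ih =>
        intro y
        rw [pow_succ, Module.End.mul_apply, Module.End.mul_apply, ih]
        exact congrArg _ (hc y)
    rw [← h2, hp, map_zero]

end Sullivan
end RHT

namespace RHT
namespace Sullivan

variable (S : Sullivan)

/-! ### Changing the space of generators -/

/-- Decomposables of degree `n` lie in any subspace closed under products which contains
everything of smaller degree. -/
lemma dec_grading_le {U : Submodule ℚ S.A} {n : ℕ}
    (hmul : ∀ x y, x ∈ U → y ∈ U → x * y ∈ U) (h : ∀ m, m < n → S.grading m ≤ U) :
    S.dec ⊓ S.grading n ≤ U := by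
  rintro x ⟨hx, hx'⟩
  rw [← pj_same S.grading hx']
  refine S.dec_pj S.grading_one ?_ hx
  intro i j x y hi hj hij hx hy
  exact hmul x y (h i (by omega) hx) (h j (by omega) hy)

/-- Any graded complement `V'` of the decomposables freely generates: moving each generator to
`V'` along the decomposables extends to an automorphism. -/
theorem change_gens (V' : ℕ → Submodule ℚ S.A) (hle : ∀ i, V' i ≤ S.grading i)
    (h0 : V' 0 = ⊥) (hdis : ∀ i, V' i ⊓ S.dec = ⊥)
    (hsup : ∀ i, 0 < i → S.grading i ≤ V' i ⊔ (S.dec ⊓ S.grading i)) :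
    Algebra.adjoin ℚ (⋃ i, (V' i : Set S.A)) = ⊤ ∧
    ∀ (C : Type) [Ring C] [Algebra ℚ C] (𝒞 : ℕ → Submodule ℚ C),
    (1 : C) ∈ 𝒞 0 →
    (∀ i j (x y : C), x ∈ 𝒞 i → y ∈ 𝒞 j → x * y ∈ 𝒞 (i + j)) →
    (∀ i j (x y : C), x ∈ 𝒞 i → y ∈ 𝒞 j → x * y = ((-1 : ℚ) ^ (i * j)) • (y * x)) →
    ∀ f : (i : ℕ) → V' i →ₗ[ℚ] C, (∀ i (v : V' i), f i v ∈ 𝒞 i) →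
    ∃! φ : S.A →ₐ[ℚ] C, ∀ i (v : V' i), φ (v : S.A) = f i v := by
  -- a subalgebra containing enough generators modulo decomposables is everything
  have gen : ∀ U : Subalgebra ℚ S.A, (∀ i, 0 < i → S.dec ⊓ S.grading i ≤
      Subalgebra.toSubmodule U → S.grading i ≤ Subalgebra.toSubmodule U) → U = ⊤ := by
    intro U hU
    have key : ∀ n, S.grading n ≤ Subalgebra.toSubmodule U := by
      intro n
      induction n using Nat.strong_induction_on with
      | _ n ih =>
      rcases Nat.eq_zero_or_pos n with rfl | hn
      · intro x hx
        obtain ⟨c, rfl⟩ := S.grading_zero hx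
        exact U.algebraMap_mem c
      · exact hU n hn (S.dec_grading_le (fun x y hx hy => U.mul_mem hx hy) ih)
    rw [eq_top_iff]
    intro x _
    exact mem_of_pj (𝓜 := S.grading) (N := Subalgebra.toSubmodule U)
      fun n => key n (pj_mem _ _ _)
  refine ⟨gen _ fun i hi h => (hsup i hi).trans (sup_le ?_ h), ?_⟩
  · exact fun v hv => Algebra.subset_adjoin (Set.mem_iUnion.2 ⟨i, hv⟩)
  -- compare generators
  have hch : ∀ i, ∃ q : S.A →ₗ[ℚ] S.A, ∀ v ∈ S.V i, q v ∈ V' i ∧ v - q v ∈ S.dec := by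
    intro i
    let R : Submodule ℚ (S.A × S.A) :=
      (V' i).comap (LinearMap.snd ℚ S.A S.A) ⊓
        S.dec.comap (LinearMap.fst ℚ S.A S.A - LinearMap.snd ℚ S.A S.A)
    obtain ⟨q, hq⟩ := exists_linear_choice R (S.V i) (by
      intro v hv
      rcases Nat.eq_zero_or_pos i with rfl | hi
      · rw [S.eq_zero_of_mem_V_zero hv]; exact ⟨0, zero_mem _⟩
      · obtain ⟨w, hw, δ, hδ, rfl⟩ := Submodule.mem_sup.1 (hsup i hi (S.V_le i hv))
        refine ⟨w, hw, ?_⟩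
        change w + δ - w ∈ S.dec
        rw [add_sub_cancel_left]; exact hδ.1)
    obtain ⟨q', hq'⟩ := q.exists_extend
    refine ⟨q', fun v hv => ?_⟩
    have h1 : q' v = q ⟨v, hv⟩ := LinearMap.congr_fun hq' ⟨v, hv⟩
    rw [h1]; exact hq ⟨v, hv⟩
  choose q hq using hch
  obtain ⟨α, hα, hαV⟩ := S.exists_extend S.toCDGA q (fun i v hv => hle i (hq i v hv).1)
  have hαV' : ∀ i, ∀ v ∈ S.V i, α v ∈ V' i := fun i v hv => by
    rw [hαV i v hv]; exact (hq i v hv).1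
  have hαd : ∀ i, ∀ v ∈ S.V i, v - α v ∈ S.dec := fun i v hv => by
    rw [hαV i v hv]; exact (hq i v hv).2
  -- `α` is the identity modulo decomposables, hence onto; it is injective because each degree
  -- is finite-dimensional
  have hsurj : Function.Surjective α := by
    rw [← AlgHom.range_eq_top]
    refine gen _ fun i hi h => (S.grading_le_V_sup_dec hi).trans (sup_le ?_ h)
    intro v hv
    have h1 : v - α v ∈ Subalgebra.toSubmodule α.range :=
      h ⟨hαd i v hv, sub_mem (S.V_le i hv) (hα i v (S.V_le i hv))⟩
    rw [← sub_add_cancel v (α v)]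
    exact add_mem h1 ⟨v, rfl⟩
  have hpj : ∀ n x, pj S.grading n (α x) = α (pj S.grading n x) := fun n x =>
    pj_comm (𝓜 := S.grading) (𝓜' := S.grading) α.toLinearMap hα n x
  have hinj : Function.Injective α := by
    have key : ∀ n, ∀ x ∈ S.grading n, α x = 0 → x = 0 := by
      intro n x hx hx0
      have hs : Function.Surjective (α.toLinearMap.restrict (hα n)) := by
        rintro ⟨y, hy⟩
        obtain ⟨z, hz⟩ := hsurj y
        refine ⟨⟨pj S.grading n z, pj_mem _ _ _⟩, Subtype.ext ?_⟩
        change α (pj S.grading n z) = y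
        rw [← hpj, hz, pj_same _ hy]
      have hi := LinearMap.injective_iff_surjective.2 hs
      have : (⟨x, hx⟩ : S.grading n) = 0 := hi (Subtype.ext (by
        rw [map_zero]; exact hx0))
      exact congrArg Subtype.val this
    rw [injective_iff_map_eq_zero]
    intro x hx
    refine eq_of_pj S.grading fun n => ?_
    rw [map_zero]
    exact key n _ (pj_mem _ _ _) (by rw [← hpj, hx, map_zero])
  -- `α` carries the old generators onto the new ones
  have hVsurj : ∀ i, ∀ w ∈ V' i, ∃ v ∈ S.V i, α v = w := by
    intro i w hw
    rcases Nat.eq_zero_or_pos i with rfl | hi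
    · rw [h0] at hw
      exact ⟨0, zero_mem _, by rw [map_zero, (Submodule.mem_bot ℚ).1 hw]⟩
    obtain ⟨v, hv, δ, hδ, rfl⟩ := Submodule.mem_sup.1 (S.grading_le_V_sup_dec hi (hle i hw))
    refine ⟨v, hv, ?_⟩
    have h1 : v + δ - α v ∈ V' i ⊓ S.dec := by
      refine ⟨sub_mem hw (hαV' i v hv), ?_⟩
      rw [add_sub_right_comm]; exact add_mem (hαd i v hv) hδ.1
    rw [hdis, Submodule.mem_bot, sub_eq_zero] at h1
    exact h1.symm
  let β : S.A ≃ₐ[ℚ] S.A := AlgEquiv.ofBijective α ⟨hinj, hsurj⟩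
  intro C _ _ 𝒞 h1 hmul hcomm f hf
  obtain ⟨φ, hφ, huniq⟩ := S.free C 𝒞 h1 hmul hcomm
    (fun i => f i ∘ₗ α.toLinearMap.restrict (hαV' i)) (fun i v => hf i _)
  refine ⟨φ.comp β.symm.toAlgHom, ?_, ?_⟩
  · rintro i ⟨w, hw⟩
    obtain ⟨v, hv, rfl⟩ := hVsurj i w hw
    change φ (β.symm (β v)) = _
    rw [β.symm_apply_apply]
    exact hφ i ⟨v, hv⟩
  · intro ψ hψ
    have : ψ.comp α = φ := huniq _ fun i v => hψ i ⟨α v, hαV' i v v.2⟩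
    rw [← this]
    refine AlgHom.ext fun x => ?_
    change ψ x = ψ (β (β.symm x))
    rw [β.apply_symm_apply]

/-- A formal minimal Sullivan algebra admits a new space of generators and a lower grading
making it bigraded. -/
theorem exists_bigraded (hmin : S.Minimal) (hformal : Formal S.toCDGA) :
    ∃ (BF : BigradedSullivan), BF.toCDGA = S.toCDGA ∧ BF.toSullivan.Minimal ∧
      ∀ n k, ∀ x ∈ BF.low k, pj BF.grading n x ∈ BF.low k := by
  obtain ⟨low, h1, hmul, hint, hd0, hd, hac, hpj⟩ := S.exists_low hmin hformal
  let _ : DirectSum.Decomposition low := hint.chooseDecomposition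
  have hgr : ∀ n k, ∀ x ∈ S.grading n, pj low k x ∈ S.grading n := by
    intro n k x hx
    have := pj_comm (𝓜 := low) (𝓜' := low) (pj S.grading n) (fun k x hx => hpj n k x hx) k x
    rw [pj_same _ hx] at this
    rw [this]; exact pj_mem _ _ _
  have haug : ∀ k, ∀ x ∈ S.aug, pj low k x ∈ S.aug := by
    intro k x hx
    rw [CDGA.mem_aug] at *
    rw [← pj_comm (𝓜 := low) (𝓜' := low) (pj S.grading 0) (fun k x hx => hpj 0 k x hx) k x,
      hx, map_zero]
  -- the decomposables are a bigraded subspace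
  have hdec : ∀ k, ∀ x ∈ S.dec, pj low k x ∈ S.dec := by
    intro k x hx
    induction hx using Submodule.mul_induction_on' with
    | mem_mul_mem a ha b hb =>
      obtain ⟨s, hs⟩ := exists_sum_pj low a
      obtain ⟨t, ht⟩ := exists_sum_pj low b
      rw [hs, ht, Finset.sum_mul_sum, map_sum]
      refine sum_mem fun i _ => ?_
      rw [map_sum]
      refine sum_mem fun j _ => ?_
      have hm := hmul i j _ _ (pj_mem low i a) (pj_mem low j b)
      by_cases hk : i + j = k
      · subst hk
        rw [pj_same _ hm]
        exact Submodule.mul_mem_mul (haug i a ha) (haug j b hb)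
      · rw [pj_ne _ hm hk]; exact zero_mem _
    | add x _ y _ hx hy => rw [map_add]; exact add_mem hx hy
  -- the new generators are a complement of the decomposables in each bidegree
  have hc := fun i k => exists_rel_compl
    (show S.dec ⊓ (S.grading i ⊓ low k) ≤ S.grading i ⊓ low k from inf_le_right)
  choose c hc1 hc2 hc3 using hc
  let V' : ℕ → Submodule ℚ S.A := fun i => if i = 0 then ⊥ else ⨆ k, c i k
  have hV'0 : V' 0 = ⊥ := if_pos rfl
  have hV' : ∀ i, 0 < i → V' i = ⨆ k, c i k := fun i hi => if_neg hi.ne'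
  have hle : ∀ i, V' i ≤ S.grading i := by
    intro i
    rcases Nat.eq_zero_or_pos i with rfl | hi
    · rw [hV'0]; exact bot_le
    · rw [hV' i hi]; exact iSup_le fun k => (hc1 i k).trans inf_le_left
  have hpjV : ∀ i k, 0 < i → ∀ x ∈ V' i, pj low k x ∈ c i k := by
    intro i k hi x hx
    rw [hV' i hi] at hx
    induction hx using Submodule.iSup_induction' with
    | mem j x hx =>
      by_cases hjk : j = k
      · subst hjk; rw [pj_same _ (hc1 i j hx).2]; exact hx
      · rw [pj_ne _ (hc1 i j hx).2 hjk]; exact zero_mem _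
    | zero => rw [map_zero]; exact zero_mem _
    | add x y _ _ hx hy => rw [map_add]; exact add_mem hx hy
  have hdis : ∀ i, V' i ⊓ S.dec = ⊥ := by
    intro i
    rw [eq_bot_iff]
    rintro x ⟨hx, hx'⟩
    rcases Nat.eq_zero_or_pos i with rfl | hi
    · rwa [← hV'0]
    refine mem_of_pj (𝓜 := low) fun k => ?_
    rw [← hc2 i k]
    have h := hpjV i k hi x hx
    exact ⟨⟨hdec k x hx', hc1 i k h⟩, h⟩
  have hsup : ∀ i, 0 < i → S.grading i ≤ V' i ⊔ (S.dec ⊓ S.grading i) := by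
    intro i hi x hx
    refine mem_of_pj (𝓜 := low) fun k => ?_
    have h : pj low k x ∈ S.grading i ⊓ low k := ⟨hgr i k x hx, pj_mem _ _ _⟩
    rw [← hc3 i k, sup_comm] at h
    have hh : c i k ⊔ S.dec ⊓ (S.grading i ⊓ low k) ≤ V' i ⊔ (S.dec ⊓ S.grading i) := by
      refine sup_le_sup ?_ ?_
      · rw [hV' i hi]; exact le_iSup (c i) k
      · exact le_inf inf_le_left (inf_le_right.trans inf_le_left)
    exact hh h
  obtain ⟨hgen, hfree⟩ := S.change_gens V' hle hV'0 hdis hsup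
  let BF : BigradedSullivan :=
    { S.toCDGA with
      V := V'
      V_le := hle
      V_zero := hV'0
      V_one := eq_bot_iff.2 ((hle 1).trans S.grading_one.le)
      V_fin := fun i => Submodule.finiteDimensional_of_le (hle i)
      generates := hgen
      free := hfree
      low := low
      low_one := h1
      low_mul := hmul
      low_internal := hint
      V_low := by
        intro i
        apply le_antisymm
        · rcases Nat.eq_zero_or_pos i with rfl | hi
          · change V' 0 ≤ _
            rw [hV'0]; exact bot_le
          · change V' i ≤ ⨆ k, (V' i ⊓ low k)
            conv_lhs => rw [hV' i hi]
            refine iSup_mono fun k => le_inf ?_ ((hc1 i k).trans inf_le_right)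
            rw [hV' i hi]; exact le_iSup (c i) k
        · exact iSup_le fun k => inf_le_left
      d_low_zero := hd0
      d_low := hd
      acyclic_plus := hac }
  exact ⟨BF, rfl, BF.toSullivan.minimal_of_dec (S.d_mem_dec hmin), hpj⟩

end Sullivan
end RHT

namespace RHT

/-! ### The graded tensor product as a test algebra -/

open scoped TensorProduct in
/-- The total degree `n` part of the graded tensor product of two cochain algebras. -/
noncomputable def tensorDeg (B F : CDGA) (n : ℕ) :
    Submodule ℚ (GradedTensorProduct ℚ B.grading F.grading) :=
  Submodule.span ℚ {z | ∃ i j, i + j = n ∧ ∃ b ∈ B.grading i, ∃ a ∈ F.grading j,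
    z = GradedTensorProduct.tmul ℚ b a}

lemma tmul_mul (B F : CDGA) {j i : ℕ} (b : B.A) {a : F.A} (ha : a ∈ F.grading j) {b' : B.A}
    (hb' : b' ∈ B.grading i) (a' : F.A) :
    (GradedTensorProduct.tmul ℚ b a * GradedTensorProduct.tmul ℚ b' a' :
      GradedTensorProduct ℚ B.grading F.grading) =
      ((-1 : ℚ) ^ (j * i)) • GradedTensorProduct.tmul ℚ (b * b') (a * a') := by
  have := GradedTensorProduct.tmul_coe_mul_coe_tmul (R := ℚ) B.grading F.grading b ⟨a, ha⟩
    ⟨b', hb'⟩ a'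
  simp only at this
  rw [this]
  rcases Nat.even_or_odd (j * i) with h | h
  · have h1 : ((-1 : ℤˣ) ^ (j * i)) = 1 := h.neg_one_pow
    rw [h1, one_smul, h.neg_one_pow, one_smul]
  · have h1 : ((-1 : ℤˣ) ^ (j * i)) = -1 := h.neg_one_pow
    rw [h1, Units.neg_smul, one_smul, h.neg_one_pow, neg_smul, one_smul]

lemma tensorDeg_mul (B F : CDGA) (i j : ℕ) (x y : GradedTensorProduct ℚ B.grading F.grading)
    (hx : x ∈ tensorDeg B F i) (hy : y ∈ tensorDeg B F j) : x * y ∈ tensorDeg B F (i + j) := by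
  induction hx using Submodule.span_induction with
  | mem x hx =>
    obtain ⟨p, q, rfl, b, hb, a, ha, rfl⟩ := hx
    induction hy using Submodule.span_induction with
    | mem y hy =>
      obtain ⟨p', q', rfl, b', hb', a', ha', rfl⟩ := hy
      rw [tmul_mul B F b ha hb' a']
      exact Submodule.smul_mem _ _ (Submodule.subset_span
        ⟨p + p', q + q', by omega, _, B.mul_mem hb hb', _, F.mul_mem ha ha', rfl⟩)
    | zero => rw [mul_zero]; exact zero_mem _
    | add x y _ _ hx hy => rw [mul_add]; exact add_mem hx hy
    | smul c x _ hx => rw [mul_smul_comm]; exact Submodule.smul_mem _ _ hx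
  | zero => rw [zero_mul]; exact zero_mem _
  | add x y _ _ hx hy => rw [add_mul]; exact add_mem hx hy
  | smul c x _ hx => rw [smul_mul_assoc]; exact Submodule.smul_mem _ _ hx

lemma tensorDeg_comm (B F : CDGA) (i j : ℕ) (x y : GradedTensorProduct ℚ B.grading F.grading)
    (hx : x ∈ tensorDeg B F i) (hy : y ∈ tensorDeg B F j) :
    x * y = ((-1 : ℚ) ^ (i * j)) • (y * x) := by
  induction hx using Submodule.span_induction with
  | mem x hx =>
    obtain ⟨p, q, rfl, b, hb, a, ha, rfl⟩ := hx
    induction hy using Submodule.span_induction with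
    | mem y hy =>
      obtain ⟨p', q', rfl, b', hb', a', ha', rfl⟩ := hy
      rw [tmul_mul B F b ha hb' a', tmul_mul B F b' ha' hb a, B.gcomm hb hb', F.gcomm ha ha']
      simp only [GradedTensorProduct.tmul, ← TensorProduct.smul_tmul', TensorProduct.tmul_smul,
        map_smul, smul_smul]
      congr 1
      simp only [← pow_add]
      refine neg_one_pow_congr ?_
      simp only [Nat.even_add, Nat.even_mul]
      tauto
    | zero => rw [mul_zero, zero_mul, smul_zero]
    | add x y _ _ hx hy => rw [mul_add, add_mul x y, hx, hy, smul_add]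
    | smul c x _ hx => rw [mul_smul_comm, smul_mul_assoc, hx, smul_comm]
  | zero => rw [mul_zero, zero_mul, smul_zero]
  | add u v _ _ hx hy => rw [mul_add, add_mul u v, hx, hy, smul_add]
  | smul c x _ hx => rw [mul_smul_comm, smul_mul_assoc, hx, smul_comm]

/-! ### Relatively free extensions with a section -/

/-- A cochain algebra `T` over `B` with fibre `F`, together with an algebra section `sec` of the
projection onto the fibre for which `T` is, as a graded algebra, the coproduct of `B` and `F`.
The differential of `T` is not assumed to be compatible with `sec`. -/
structure Rel (B F : CDGA) where
  T : CDGA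
  incl : Hom B T
  proj : Hom T F
  proj_incl : ∀ b ∈ B.aug, proj.toAlgHom (incl.toAlgHom b) = 0
  ker_proj : ∀ x : T.A, proj.toAlgHom x = 0 →
    x ∈ (B.aug.map incl.toAlgHom.toLinearMap) * (⊤ : Submodule ℚ T.A)
  sec : F.A →ₐ[ℚ] T.A
  sec_mem : ∀ i, ∀ a ∈ F.grading i, sec a ∈ T.grading i
  proj_sec : ∀ a, proj.toAlgHom (sec a) = a
  cop : ∀ (C : Type) [Ring C] [Algebra ℚ C] (𝒞 : ℕ → Submodule ℚ C),
    (1 : C) ∈ 𝒞 0 →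
    (∀ i j (x y : C), x ∈ 𝒞 i → y ∈ 𝒞 j → x * y ∈ 𝒞 (i + j)) →
    (∀ i j (x y : C), x ∈ 𝒞 i → y ∈ 𝒞 j → x * y = ((-1 : ℚ) ^ (i * j)) • (y * x)) →
    ∀ (g : B.A →ₐ[ℚ] C), (∀ i (x : B.A), x ∈ B.grading i → g x ∈ 𝒞 i) →
    ∀ (k : F.A →ₐ[ℚ] C), (∀ i (x : F.A), x ∈ F.grading i → k x ∈ 𝒞 i) →
    ∃ φ : T.A →ₐ[ℚ] C, (∀ b, φ (incl.toAlgHom b) = g b) ∧ (∀ a, φ (sec a) = k a)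

/-- Sections of the fibre projection on generators extend to the fibre algebra. -/
lemma FibrationModel.exists_sec {B : CDGA} {F : Sullivan} (P : FibrationModel B F) :
    ∃ s : F.A →ₐ[ℚ] P.T.A, (∀ i, ∀ a ∈ F.grading i, s a ∈ P.T.grading i) ∧
      (∀ a, P.proj.toAlgHom (s a) = a) ∧ ∀ i, ∀ v ∈ F.V i, s v ∈ P.V i := by
  have h : ∀ i, ∃ q : F.V i →ₗ[ℚ] P.T.A,
      ∀ x : F.V i, q x ∈ P.V i ∧ P.proj.toAlgHom (q x) = x := by
    intro i
    obtain ⟨q, hq⟩ := exists_linear_choice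
      (((P.V i).comap (LinearMap.snd ℚ F.A P.T.A)) ⊓
        LinearMap.ker (P.proj.toAlgHom.toLinearMap ∘ₗ LinearMap.snd ℚ F.A P.T.A -
          LinearMap.fst ℚ F.A P.T.A)) (F.V i) (fun x hx => by
        rw [← P.proj_V i] at hx
        obtain ⟨y, hy, rfl⟩ := hx
        exact ⟨y, hy, by simp⟩)
    refine ⟨q, fun x => ⟨(hq x).1, ?_⟩⟩
    have := (hq x).2
    simpa [sub_eq_zero] using this
  choose q hq using h
  choose f hf using fun i => (q i).exists_extend
  have hf' : ∀ i, ∀ v (hv : v ∈ F.V i), f i v = q i ⟨v, hv⟩ := fun i v hv =>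
    LinearMap.congr_fun (hf i) ⟨v, hv⟩
  obtain ⟨s, hs, hsV⟩ := F.exists_extend P.T f (fun i v hv => by
    rw [hf' i v hv]; exact P.V_le i (hq i _).1)
  refine ⟨s, hs, fun a => ?_, fun i v hv => by rw [hsV i v hv, hf' i v hv]; exact (hq i _).1⟩
  have : P.proj.toAlgHom.comp s = AlgHom.id ℚ F.A := F.algHom_ext fun i v hv => by
    change P.proj.toAlgHom (s v) = v
    rw [hsV i v hv, hf' i v hv, (hq i _).2]
  exact AlgHom.congr_fun this a

/-- A fibration model with a chosen section of its fibre projection. -/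
noncomputable def FibrationModel.toRel {B : CDGA} {F : Sullivan} (P : FibrationModel B F) :
    Rel B F.toCDGA where
  T := P.T
  incl := P.incl
  proj := P.proj
  proj_incl := fun b hb => by
    induction hb using Submodule.iSup_induction' with
    | mem i x hx => exact P.proj_incl (i + 1) (Nat.succ_pos i) x hx
    | zero => rw [map_zero, map_zero]
    | add x y _ _ hx hy => rw [map_add, map_add, hx, hy, add_zero]
  ker_proj := fun x hx => (P.ker_proj x).1 hx
  sec := P.exists_sec.choose
  sec_mem := P.exists_sec.choose_spec.1
  proj_sec := P.exists_sec.choose_spec.2.1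
  cop := by
    intro C _ _ 𝒞 h1 hmul hcomm g hg k hk
    obtain ⟨φ, ⟨hφ1, hφ2⟩, -⟩ := P.relFree C 𝒞 h1 hmul hcomm g hg
      (fun i => (k.toLinearMap ∘ₗ P.proj.toAlgHom.toLinearMap) ∘ₗ (P.V i).subtype)
      (fun i v => hk i _ (P.proj.map_grading (P.V_le i v.2)))
    refine ⟨φ, hφ1, fun a => ?_⟩
    have : φ.comp P.exists_sec.choose = k := F.algHom_ext fun i v hv => by
      have h := hφ2 i ⟨_, P.exists_sec.choose_spec.2.2 i v hv⟩
      have h' := P.exists_sec.choose_spec.2.1 v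
      change φ (P.exists_sec.choose v) = k v
      rw [h]
      change k (P.proj.toAlgHom (P.exists_sec.choose v)) = k v
      rw [h']
    exact AlgHom.congr_fun this a

/-- In a graded commutative algebra products of homogeneous subspaces commute. -/
lemma CDGA.mul_comm_le (C : CDGA) {X Y : Submodule ℚ C.A}
    (hX : ∀ x ∈ X, ∀ n, pj C.grading n x ∈ X) (hY : ∀ x ∈ Y, ∀ n, pj C.grading n x ∈ Y) :
    X * Y ≤ Y * X := by
  rw [Submodule.mul_le]
  intro x hx y hy
  obtain ⟨s, hs⟩ := exists_sum_pj C.grading x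
  obtain ⟨t, ht⟩ := exists_sum_pj C.grading y
  rw [hs, ht, Finset.sum_mul_sum]
  refine Submodule.sum_mem _ fun i _ => Submodule.sum_mem _ fun j _ => ?_
  rw [C.gcomm (pj_mem _ _ _) (pj_mem _ _ _)]
  exact Submodule.smul_mem _ _ (Submodule.mul_mem_mul (hY y hy j) (hX x hx i))

/-- Products of homogeneous subspaces are homogeneous. -/
lemma CDGA.pj_mul_mem (C : CDGA) {X Y : Submodule ℚ C.A}
    (hX : ∀ x ∈ X, ∀ n, pj C.grading n x ∈ X) (hY : ∀ x ∈ Y, ∀ n, pj C.grading n x ∈ Y) :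
    ∀ x ∈ X * Y, ∀ n, pj C.grading n x ∈ X * Y := by
  intro z hz n
  induction hz using Submodule.mul_induction_on' with
  | mem_mul_mem x hx y hy =>
    obtain ⟨s, hs⟩ := exists_sum_pj C.grading x
    obtain ⟨t, ht⟩ := exists_sum_pj C.grading y
    rw [hs, ht, Finset.sum_mul_sum, map_sum]
    refine Submodule.sum_mem _ fun i _ => ?_
    rw [map_sum]
    refine Submodule.sum_mem _ fun j _ => ?_
    by_cases h : i + j = n
    · subst h
      rw [pj_same _ (C.mul_mem (pj_mem _ _ _) (pj_mem _ _ _))]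
      exact Submodule.mul_mem_mul (hX x hx i) (hY y hy j)
    · rw [pj_ne _ (C.mul_mem (pj_mem _ _ _) (pj_mem _ _ _)) h]; exact zero_mem _
  | add x _ y _ hx hy => rw [map_add]; exact add_mem hx hy

/-- Images of graded subspaces under degree preserving maps are graded. -/
lemma CDGA.pj_map_mem {B C : CDGA} (f : B.A →ₗ[ℚ] C.A)
    (hf : ∀ i, ∀ x ∈ B.grading i, f x ∈ C.grading i) {X : Submodule ℚ B.A}
    (hX : ∀ x ∈ X, ∀ n, pj B.grading n x ∈ X) :
    ∀ x ∈ X.map f, ∀ n, pj C.grading n x ∈ X.map f := by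
  rintro _ ⟨x, hx, rfl⟩ n
  rw [pj_comm f hf]
  exact ⟨_, hX x hx n, rfl⟩

lemma CDGA.pj_range_mem {B C : CDGA} (f : B.A →ₗ[ℚ] C.A)
    (hf : ∀ i, ∀ x ∈ B.grading i, f x ∈ C.grading i) :
    ∀ x ∈ LinearMap.range f, ∀ n, pj C.grading n x ∈ LinearMap.range f := by
  rintro _ ⟨x, rfl⟩ n
  rw [pj_comm f hf]
  exact ⟨_, rfl⟩

namespace Rel

variable {B F : CDGA} (R : Rel B F)

/-- `T` is generated, as a module over the base, by the values of any section of the fibre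
projection. -/
lemma generation (τ : F.A →ₗ[ℚ] R.T.A) (hτ : ∀ i, ∀ a ∈ F.grading i, τ a ∈ R.T.grading i)
    (hτp : ∀ a, R.proj.toAlgHom (τ a) = a) (U : Submodule ℚ R.T.A) (h1 : ∀ a, τ a ∈ U)
    (h2 : ∀ b, ∀ u ∈ U, R.incl.toAlgHom b * u ∈ U) (x : R.T.A) : x ∈ U := by
  -- by induction on the degree: modulo a value of `τ`, `x` is a combination of products of
  -- positive degree base elements with elements of smaller degree
  have key : ∀ n, ∀ x ∈ R.T.grading n, x ∈ U := by
    intro n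
    induction n using Nat.strong_induction_on with
    | _ n ih =>
    intro x hx
    have hk : R.proj.toAlgHom (x - τ (R.proj.toAlgHom x)) = 0 := by
      rw [map_sub, hτp, sub_self]
    have hg : x - τ (R.proj.toAlgHom x) ∈ R.T.grading n :=
      sub_mem hx (hτ n _ (R.proj.map_grading hx))
    have hm := R.ker_proj _ hk
    have hU : ∀ z ∈ (B.aug.map R.incl.toAlgHom.toLinearMap) * (⊤ : Submodule ℚ R.T.A),
        pj R.T.grading n z ∈ U := by
      intro z hz
      induction hz using Submodule.mul_induction_on' with
      | mem_mul_mem y hy w _ =>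
        obtain ⟨b, hb, rfl⟩ := hy
        induction hb using Submodule.iSup_induction' with
        | mem i b hb =>
          induction w using homog_induction R.T.grading with
          | h0 m w hw =>
            have hbw := R.T.mul_mem (R.incl.map_grading hb) hw
            by_cases h : i + 1 + m = n
            · subst h
              change pj R.T.grading _ (R.incl.toAlgHom b * w) ∈ U
              rw [pj_same _ hbw]
              exact h2 b w (ih m (by omega) w hw)
            · change pj R.T.grading _ (R.incl.toAlgHom b * w) ∈ U
              rw [pj_ne _ hbw h]; exact zero_mem _
          | hadd w w' hw hw' => rw [mul_add, map_add]; exact add_mem (hw trivial) (hw' trivial)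
        | zero => rw [map_zero, zero_mul, map_zero]; exact zero_mem _
        | add x y _ _ hx hy => rw [map_add, add_mul, map_add]; exact add_mem hx hy
      | add x _ y _ hx hy => rw [map_add]; exact add_mem hx hy
    have := hU _ hm
    rw [pj_same _ hg] at this
    have h3 := add_mem this (h1 (R.proj.toAlgHom x))
    rwa [sub_add_cancel] at h3
  exact mem_of_pj (𝓜 := R.T.grading) fun n => key n _ (pj_mem _ _ _)

/-- The multiplication map `B ⊗ F → T` of a relatively free extension. -/
noncomputable def mu : TensorProduct ℚ B.A F.A →ₗ[ℚ] R.T.A :=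
  TensorProduct.lift ((LinearMap.mul ℚ R.T.A).compl₁₂ R.incl.toAlgHom.toLinearMap
    R.sec.toLinearMap)

lemma mu_tmul (b : B.A) (a : F.A) :
    R.mu (b ⊗ₜ[ℚ] a) = R.incl.toAlgHom b * R.sec a := by
  simp [mu]

/-- Injectivity: by the coproduct property `T` maps to the graded tensor product, which inverts
the multiplication map on the left. -/
lemma mu_bijective : Function.Bijective R.mu := by
  constructor
  · obtain ⟨φ, h1, h2⟩ := R.cop (GradedTensorProduct ℚ B.grading F.grading) (tensorDeg B F)
      (Submodule.subset_span ⟨0, 0, rfl, 1, B.one_mem, 1, F.one_mem, rfl⟩)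
      (tensorDeg_mul B F) (tensorDeg_comm B F)
      (GradedTensorProduct.includeLeft B.grading F.grading)
      (fun i x hx => Submodule.subset_span ⟨i, 0, rfl, x, hx, 1, F.one_mem, rfl⟩)
      (GradedTensorProduct.includeRight B.grading F.grading)
      (fun i x hx => Submodule.subset_span ⟨0, i, zero_add i, 1, B.one_mem, x, hx, rfl⟩)
    have h : φ.toLinearMap ∘ₗ R.mu = (GradedTensorProduct.of ℚ B.grading F.grading).toLinearMap := by
      ext b a
      change φ (R.mu (b ⊗ₜ[ℚ] a)) = GradedTensorProduct.of ℚ B.grading F.grading (b ⊗ₜ[ℚ] a)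
      rw [mu_tmul, map_mul, h1, h2]
      exact GradedTensorProduct.tmul_one_mul_one_tmul _ _ _ _
    intro x y hxy
    apply (GradedTensorProduct.of ℚ B.grading F.grading).injective
    have hx := LinearMap.congr_fun h x
    have hy := LinearMap.congr_fun h y
    simp only [LinearMap.comp_apply, hxy] at hx hy
    exact hx.symm.trans hy
  · rw [← LinearMap.range_eq_top, eq_top_iff]
    intro x _
    refine R.generation R.sec.toLinearMap R.sec_mem R.proj_sec (LinearMap.range R.mu)
      (fun a => ⟨1 ⊗ₜ a, by rw [mu_tmul, map_one, one_mul]; rfl⟩) ?_ x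
    rintro b _ ⟨t, rfl⟩
    induction t using TensorProduct.induction_on with
    | zero => rw [map_zero, mul_zero]; exact zero_mem _
    | tmul b' a => exact ⟨(b * b') ⊗ₜ a, by rw [mu_tmul, mu_tmul, map_mul, mul_assoc]⟩
    | add x y hx hy => rw [map_add, mul_add]; exact add_mem hx hy

/-- The multiplication map as a linear isomorphism `B ⊗ F ≅ T`. -/
noncomputable def muEquiv : TensorProduct ℚ B.A F.A ≃ₗ[ℚ] R.T.A :=
  LinearEquiv.ofBijective R.mu R.mu_bijective

/-- The linear operator `h ⊗ k` on `T ≅ B ⊗ F`. -/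
noncomputable def op (h : B.A →ₗ[ℚ] B.A) (k : F.A →ₗ[ℚ] F.A) : R.T.A →ₗ[ℚ] R.T.A :=
  R.mu ∘ₗ TensorProduct.map h k ∘ₗ R.muEquiv.symm.toLinearMap

lemma op_apply (h : B.A →ₗ[ℚ] B.A) (k : F.A →ₗ[ℚ] F.A) (b : B.A) (a : F.A) :
    R.op h k (R.incl.toAlgHom b * R.sec a) = R.incl.toAlgHom (h b) * R.sec (k a) := by
  have : R.muEquiv.symm (R.incl.toAlgHom b * R.sec a) = b ⊗ₜ a := by
    rw [LinearEquiv.symm_apply_eq]; exact (R.mu_tmul b a).symm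
  rw [op, LinearMap.comp_apply, LinearMap.comp_apply, LinearEquiv.coe_coe, this,
    TensorProduct.map_tmul, mu_tmul]

/-- Additive predicates on `T` are checked on products of homogeneous base and fibre
elements. -/
lemma ind {p : R.T.A → Prop}
    (h : ∀ i, ∀ b ∈ B.grading i, ∀ j, ∀ a ∈ F.grading j, p (R.incl.toAlgHom b * R.sec a))
    (hadd : ∀ x y, p x → p y → p (x + y)) (x : R.T.A) : p x := by
  obtain ⟨t, rfl⟩ := R.mu_bijective.2 x
  induction t using TensorProduct.induction_on with
  | zero =>
    have := h 0 0 (zero_mem _) 0 0 (zero_mem _)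
    rwa [map_zero, zero_mul] at this
  | tmul b a =>
    rw [mu_tmul]
    induction b using homog_induction B.grading with
    | h0 i b hb =>
      induction a using homog_induction F.grading with
      | h0 j a ha => exact h i b hb j a ha
      | hadd x y hx hy => rw [map_add, mul_add]; exact hadd _ _ hx hy
    | hadd x y hx hy => rw [map_add, add_mul]; exact hadd _ _ hx hy
  | add x y hx hy => rw [map_add]; exact hadd _ _ hx hy

lemma ext_lin {W : Type} [AddCommGroup W] [Module ℚ W] {f g : R.T.A →ₗ[ℚ] W}
    (h : ∀ i, ∀ b ∈ B.grading i, ∀ j, ∀ a ∈ F.grading j,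
      f (R.incl.toAlgHom b * R.sec a) = g (R.incl.toAlgHom b * R.sec a)) (x : R.T.A) :
    f x = g x :=
  R.ind (p := fun x => f x = g x) h (fun x y hx hy => by rw [map_add, map_add, hx, hy]) x

lemma op_op (h h' : B.A →ₗ[ℚ] B.A) (k k' : F.A →ₗ[ℚ] F.A) (x : R.T.A) :
    R.op h k (R.op h' k' x) = R.op (h ∘ₗ h') (k ∘ₗ k') x :=
  R.ext_lin (f := R.op h k ∘ₗ R.op h' k') (fun i b _ j a _ => by
    simp only [LinearMap.comp_apply, op_apply]) x

lemma op_id (x : R.T.A) : R.op LinearMap.id LinearMap.id x = x :=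
  R.ext_lin (f := R.op LinearMap.id LinearMap.id) (g := LinearMap.id) (fun i b _ j a _ => by
    simp only [op_apply, LinearMap.id_apply]) x

lemma op_add_left (h h' : B.A →ₗ[ℚ] B.A) (k : F.A →ₗ[ℚ] F.A) (x : R.T.A) :
    R.op (h + h') k x = R.op h k x + R.op h' k x :=
  R.ext_lin (g := R.op h k + R.op h' k) (fun i b _ j a _ => by
    simp only [op_apply, LinearMap.add_apply, map_add, add_mul]) x

lemma op_sub_left (h h' : B.A →ₗ[ℚ] B.A) (k : F.A →ₗ[ℚ] F.A) (x : R.T.A) :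
    R.op (h - h') k x = R.op h k x - R.op h' k x :=
  R.ext_lin (g := R.op h k - R.op h' k) (fun i b _ j a _ => by
    simp only [op_apply, LinearMap.sub_apply, map_sub, sub_mul]) x

lemma op_sub_right (h : B.A →ₗ[ℚ] B.A) (k k' : F.A →ₗ[ℚ] F.A) (x : R.T.A) :
    R.op h (k - k') x = R.op h k x - R.op h k' x :=
  R.ext_lin (g := R.op h k - R.op h k') (fun i b _ j a _ => by
    simp only [op_apply, LinearMap.sub_apply, map_sub, mul_sub]) x

lemma op_smul_left (c : ℚ) (h : B.A →ₗ[ℚ] B.A) (k : F.A →ₗ[ℚ] F.A) (x : R.T.A) :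
    R.op (c • h) k x = c • R.op h k x :=
  R.ext_lin (g := c • R.op h k) (fun i b _ j a _ => by
    simp only [op_apply, LinearMap.smul_apply, map_smul, smul_mul_assoc]) x

lemma op_zero_left (k : F.A →ₗ[ℚ] F.A) (x : R.T.A) : R.op 0 k x = 0 :=
  R.ext_lin (g := 0) (fun i b _ j a _ => by
    simp only [op_apply, LinearMap.zero_apply, map_zero, zero_mul]) x

lemma op_zero_right (h : B.A →ₗ[ℚ] B.A) (x : R.T.A) : R.op h 0 x = 0 :=
  R.ext_lin (g := 0) (fun i b _ j a _ => by
    simp only [op_apply, LinearMap.zero_apply, map_zero, mul_zero]) x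

/-- The image of the subspace `K ⊗ L`. -/
noncomputable def box (K : Submodule ℚ B.A) (L : Submodule ℚ F.A) : Submodule ℚ R.T.A :=
  K.map R.incl.toAlgHom.toLinearMap * L.map R.sec.toLinearMap

lemma box_induction {K : Submodule ℚ B.A} {L : Submodule ℚ F.A} {p : R.T.A → Prop}
    (h : ∀ b ∈ K, ∀ a ∈ L, p (R.incl.toAlgHom b * R.sec a))
    (hadd : ∀ x y, p x → p y → p (x + y)) {x : R.T.A} (hx : x ∈ R.box K L) : p x := by
  induction hx using Submodule.mul_induction_on' with
  | mem_mul_mem x hx y hy =>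
    obtain ⟨b, hb, rfl⟩ := hx
    obtain ⟨a, ha, rfl⟩ := hy
    exact h b hb a ha
  | add x _ y _ hx hy => exact hadd x y hx hy

lemma mem_box {K : Submodule ℚ B.A} {L : Submodule ℚ F.A} {b : B.A} {a : F.A} (hb : b ∈ K)
    (ha : a ∈ L) : R.incl.toAlgHom b * R.sec a ∈ R.box K L :=
  Submodule.mul_mem_mul ⟨b, hb, rfl⟩ ⟨a, ha, rfl⟩

lemma box_top : R.box ⊤ ⊤ = ⊤ := eq_top_iff.2 fun x _ =>
  R.ind (fun i b _ j a _ => R.mem_box (Submodule.mem_top (R := ℚ)) (Submodule.mem_top (R := ℚ))) (fun x y hx hy => add_mem hx hy) x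

lemma op_mem_box {K : Submodule ℚ B.A} {L : Submodule ℚ F.A} {h : B.A →ₗ[ℚ] B.A}
    {k : F.A →ₗ[ℚ] F.A} {K' : Submodule ℚ B.A} {L' : Submodule ℚ F.A} (hh : ∀ b ∈ K, h b ∈ K')
    (hk : ∀ a ∈ L, k a ∈ L') {x : R.T.A} (hx : x ∈ R.box K L) : R.op h k x ∈ R.box K' L' :=
  R.box_induction (p := fun x => R.op h k x ∈ R.box K' L')
    (fun b hb a ha => by rw [op_apply]; exact R.mem_box (hh b hb) (hk a ha))
    (fun x y hx hy => by rw [map_add]; exact add_mem hx hy) hx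

lemma op_congr_box {K : Submodule ℚ B.A} {L : Submodule ℚ F.A} {h h' : B.A →ₗ[ℚ] B.A}
    {k k' : F.A →ₗ[ℚ] F.A} (hh : ∀ b ∈ K, h b = h' b) (hk : ∀ a ∈ L, k a = k' a)
    {x : R.T.A} (hx : x ∈ R.box K L) : R.op h k x = R.op h' k' x :=
  R.box_induction (p := fun x => R.op h k x = R.op h' k' x)
    (fun b hb a ha => by rw [op_apply, op_apply, hh b hb, hk a ha])
    (fun x y hx hy => by rw [map_add, map_add, hx, hy]) hx

lemma box_mono {K K' : Submodule ℚ B.A} {L L' : Submodule ℚ F.A} (hK : K ≤ K') (hL : L ≤ L') :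
    R.box K L ≤ R.box K' L' :=
  mul_le_mul' (Submodule.map_mono hK) (Submodule.map_mono hL)

/-- Multiplication by a subspace of the base moves into the base factor. -/
lemma incl_mul_box (K K' : Submodule ℚ B.A) (L : Submodule ℚ F.A) :
    K.map R.incl.toAlgHom.toLinearMap * R.box K' L = R.box (K * K') L := by
  rw [box, box, ← mul_assoc, Submodule.map_mul]

end Rel
end RHT

namespace RHT

/-! ### The base filtration of a relatively free extension -/

/-- The operator multiplying degree `i` elements by `φ i`. -/
noncomputable def degOp {M : Type} [AddCommGroup M] [Module ℚ M] (𝓜 : ℕ → Submodule ℚ M)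
    [DirectSum.Decomposition 𝓜] (φ : ℕ → ℚ) : M →ₗ[ℚ] M :=
  DirectSum.toModule ℚ ℕ M (fun i => φ i • (𝓜 i).subtype) ∘ₗ
    (DirectSum.decomposeLinearEquiv 𝓜).toLinearMap

lemma degOp_apply {M : Type} [AddCommGroup M] [Module ℚ M] (𝓜 : ℕ → Submodule ℚ M)
    [DirectSum.Decomposition 𝓜] (φ : ℕ → ℚ) {i : ℕ} {x : M} (hx : x ∈ 𝓜 i) :
    degOp 𝓜 φ x = φ i • x := by
  lift x to 𝓜 i using hx
  rw [degOp, LinearMap.comp_apply, LinearEquiv.coe_coe, DirectSum.decomposeLinearEquiv_apply,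
    DirectSum.decompose_coe]
  erw [DirectSum.toModule_lof]
  rfl

/-- Truncation to degrees at least `p`. -/
noncomputable def trunc {M : Type} [AddCommGroup M] [Module ℚ M] (𝓜 : ℕ → Submodule ℚ M)
    [DirectSum.Decomposition 𝓜] (p : ℕ) : M →ₗ[ℚ] M :=
  degOp 𝓜 (fun i => if i < p then 0 else 1)

lemma trunc_lt {M : Type} [AddCommGroup M] [Module ℚ M] {𝓜 : ℕ → Submodule ℚ M}
    [DirectSum.Decomposition 𝓜] {p i : ℕ} (h : i < p) {x : M} (hx : x ∈ 𝓜 i) :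
    trunc 𝓜 p x = 0 := by
  rw [trunc, degOp_apply 𝓜 _ hx, if_pos h, zero_smul]

lemma trunc_ge {M : Type} [AddCommGroup M] [Module ℚ M] {𝓜 : ℕ → Submodule ℚ M}
    [DirectSum.Decomposition 𝓜] {p i : ℕ} (h : p ≤ i) {x : M} (hx : x ∈ 𝓜 i) :
    trunc 𝓜 p x = x := by
  rw [trunc, degOp_apply 𝓜 _ hx, if_neg (by omega), one_smul]

lemma lin_ext {M W : Type} [AddCommGroup M] [Module ℚ M] [AddCommGroup W] [Module ℚ W]
    (𝓜 : ℕ → Submodule ℚ M) [DirectSum.Decomposition 𝓜] {f g : M →ₗ[ℚ] W}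
    (h : ∀ i, ∀ x ∈ 𝓜 i, f x = g x) : f = g :=
  LinearMap.ext fun x => by
    induction x using homog_induction 𝓜 with
    | h0 n x hx => exact h n x hx
    | hadd x y hx hy => rw [map_add, map_add, hx, hy]

namespace CDGA

variable (C : CDGA)

/-- The sign operator `x ↦ (-1)^{|x|} x`. -/
noncomputable def sgn : C.A →ₗ[ℚ] C.A := degOp C.grading (fun i => (-1) ^ i)

lemma sgn_apply {i : ℕ} {x : C.A} (hx : x ∈ C.grading i) : C.sgn x = ((-1 : ℚ) ^ i) • x :=
  degOp_apply _ _ hx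

lemma sgn_comp_sgn : C.sgn ∘ₗ C.sgn = LinearMap.id :=
  lin_ext C.grading fun i x hx => by
    rw [LinearMap.comp_apply, C.sgn_apply hx, map_smul, C.sgn_apply hx, smul_smul, ← pow_add,
      (Even.add_self i).neg_one_pow, one_smul, LinearMap.id_apply]

lemma sgn_comp_pj (i : ℕ) : C.sgn ∘ₗ pj C.grading i = ((-1 : ℚ) ^ i) • pj C.grading i :=
  LinearMap.ext fun x => C.sgn_apply (pj_mem _ _ _)

lemma pj_comp_sgn (i : ℕ) : pj C.grading i ∘ₗ C.sgn = ((-1 : ℚ) ^ i) • pj C.grading i :=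
  lin_ext C.grading fun j x hx => by
    rw [LinearMap.comp_apply, C.sgn_apply hx, map_smul, LinearMap.smul_apply]
    by_cases h : j = i
    · rw [h]
    · rw [pj_ne _ hx h, smul_zero, smul_zero]

/-- The Leibniz rule with the sign operator. -/
lemma leibniz_sgn (x y : C.A) : C.d (x * y) = C.d x * y + C.sgn x * C.d y := by
  induction x using homog_induction C.grading with
  | h0 i x hx => rw [C.leibniz x y hx, C.sgn_apply hx, smul_mul_assoc]
  | hadd x x' hx hx' => rw [add_mul, map_add, hx, hx', map_add, map_add, add_mul, add_mul]; abel

/-- Elements of degree at least `p`. -/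
noncomputable def ge (p : ℕ) : Submodule ℚ C.A := ⨅ i, ⨅ _ : i < p, LinearMap.ker (pj C.grading i)

lemma mem_ge {p : ℕ} {x : C.A} : x ∈ C.ge p ↔ ∀ i, i < p → pj C.grading i x = 0 := by
  simp only [ge, Submodule.mem_iInf, LinearMap.mem_ker]

lemma grading_le_ge {p i : ℕ} (h : p ≤ i) : C.grading i ≤ C.ge p := fun _ hx =>
  C.mem_ge.2 fun _ hj => pj_ne _ hx (by omega)

lemma pj_mem_ge {p : ℕ} : ∀ x ∈ C.ge p, ∀ n, pj C.grading n x ∈ C.ge p := by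
  intro x hx n
  by_cases h : n < p
  · rw [C.mem_ge.1 hx n h]; exact zero_mem _
  · exact C.grading_le_ge (by omega) (pj_mem _ _ _)

lemma ge_induction {p : ℕ} {q : C.A → Prop} (h : ∀ i, p ≤ i → ∀ x ∈ C.grading i, q x)
    (hadd : ∀ x y, q x → q y → q (x + y)) {x : C.A} (hx : x ∈ C.ge p) : q x := by
  obtain ⟨s, hs⟩ := exists_sum_pj C.grading x
  rw [hs]
  refine Finset.sum_induction _ q hadd (h p le_rfl 0 (zero_mem _)) fun i _ => ?_
  by_cases hi : i < p
  · rw [C.mem_ge.1 hx i hi]; exact h p le_rfl 0 (zero_mem _)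
  · exact h i (by omega) _ (pj_mem _ _ _)

lemma ge_anti {p q : ℕ} (h : p ≤ q) : C.ge q ≤ C.ge p := fun _ hx =>
  C.mem_ge.2 fun i hi => C.mem_ge.1 hx i (by omega)

lemma ge_mul (p q : ℕ) : C.ge p * C.ge q ≤ C.ge (p + q) := by
  rw [Submodule.mul_le]
  intro x hx y hy
  refine C.ge_induction (q := fun x => x * y ∈ C.ge (p + q)) (fun i hi x hx => ?_)
    (fun x x' h h' => by rw [add_mul]; exact add_mem h h') hx
  refine C.ge_induction (q := fun y => x * y ∈ C.ge (p + q)) (fun j hj y hy => ?_)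
    (fun x x' h h' => by rw [mul_add]; exact add_mem h h') hy
  exact C.grading_le_ge (by omega) (C.mul_mem hx hy)

lemma trunc_mem_ge (p : ℕ) (x : C.A) : trunc C.grading p x ∈ C.ge p := by
  induction x using homog_induction C.grading with
  | h0 i x hx =>
    by_cases h : i < p
    · rw [trunc_lt h hx]; exact zero_mem _
    · rw [trunc_ge (by omega) hx]; exact C.grading_le_ge (by omega) hx
  | hadd x y hx hy => rw [map_add]; exact add_mem hx hy

lemma trunc_of_ge {p : ℕ} {x : C.A} (hx : x ∈ C.ge p) : trunc C.grading p x = x :=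
  C.ge_induction (q := fun x => trunc C.grading p x = x) (fun _ hi _ hx => trunc_ge hi hx)
    (fun x y hx hy => by rw [map_add, hx, hy]) hx

lemma trunc_succ (p : ℕ) :
    trunc C.grading p = pj C.grading p + trunc C.grading (p + 1) :=
  lin_ext C.grading fun i x hx => by
    rw [LinearMap.add_apply]
    rcases lt_trichotomy i p with h | rfl | h
    · rw [trunc_lt h hx, trunc_lt (by omega : i < p + 1) hx, pj_ne _ hx h.ne, zero_add]
    · rw [trunc_ge le_rfl hx, trunc_lt (by omega : i < i + 1) hx, pj_same _ hx, add_zero]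
    · rw [trunc_ge h.le hx, trunc_ge (by omega : p + 1 ≤ i) hx, pj_ne _ hx h.ne', zero_add]

lemma trunc_zero : trunc C.grading 0 = LinearMap.id :=
  lin_ext C.grading fun i x hx => by rw [trunc_ge (Nat.zero_le _) hx, LinearMap.id_apply]

lemma aug_le_ge_one : C.aug ≤ C.ge 1 := fun x hx => C.mem_ge.2 fun i hi => by
  rw [Nat.lt_one_iff.1 hi]; exact C.mem_aug.1 hx

lemma aug_le_ge_two (h1 : C.grading 1 = ⊥) : C.aug ≤ C.ge 2 := fun x hx => C.mem_ge.2 fun i hi => by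
  obtain rfl | rfl : i = 0 ∨ i = 1 := by omega
  · exact C.mem_aug.1 hx
  · have := pj_mem C.grading 1 x
    rw [h1] at this
    exact (Submodule.mem_bot ℚ).1 this

lemma d_comp_pj (p : ℕ) : C.d ∘ₗ pj C.grading p = pj C.grading (p + 1) ∘ₗ C.d :=
  LinearMap.ext fun x => (C.pj_d p x).symm

lemma pj_zero_comp_d : pj C.grading 0 ∘ₗ C.d = 0 := LinearMap.ext fun x => C.pj_d_zero x

end CDGA

namespace Rel

variable {B F : CDGA} (R : Rel B F)

/-- The part of base degree `i`. -/
noncomputable def c (i : ℕ) : R.T.A →ₗ[ℚ] R.T.A := R.op (pj B.grading i) LinearMap.id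

/-- The part of base degree at least `p`. -/
noncomputable def G (p : ℕ) : Submodule ℚ R.T.A := R.box (B.ge p) ⊤

lemma op_mem_G {p q : ℕ} {h : B.A →ₗ[ℚ] B.A} (k : F.A →ₗ[ℚ] F.A)
    (hh : ∀ i, p ≤ i → ∀ b ∈ B.grading i, h b ∈ B.ge q) {x : R.T.A} (hx : x ∈ R.G p) :
    R.op h k x ∈ R.G q :=
  R.op_mem_box (fun _ hb => B.ge_induction (q := fun b => h b ∈ B.ge q) hh
    (fun x y hx hy => by rw [map_add]; exact add_mem hx hy) hb) (fun _ _ => Submodule.mem_top (R := ℚ)) hx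

lemma G_anti {p q : ℕ} (h : p ≤ q) : R.G q ≤ R.G p := R.box_mono (B.ge_anti h) le_rfl

lemma mem_G_zero (x : R.T.A) : x ∈ R.G 0 := by
  have : R.G 0 = ⊤ := by
    rw [← R.box_top, G]
    congr 1
    exact eq_top_iff.2 fun x _ => B.mem_ge.2 fun i hi => absurd hi (Nat.not_lt_zero i)
  rw [this]; exact Submodule.mem_top (R := ℚ)

lemma op_trunc_of_G {p : ℕ} {x : R.T.A} (hx : x ∈ R.G p) :
    R.op (trunc B.grading p) LinearMap.id x = x := by
  conv_rhs => rw [← R.op_id x]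
  exact R.op_congr_box (fun b hb => B.trunc_of_ge hb) (fun _ _ => rfl) hx

lemma op_trunc_mem_G (p : ℕ) (k : F.A →ₗ[ℚ] F.A) (x : R.T.A) :
    R.op (trunc B.grading p) k x ∈ R.G p := by
  have hx : x ∈ R.box ⊤ ⊤ := by rw [box_top]; exact Submodule.mem_top (R := ℚ)
  exact R.op_mem_box (fun b _ => B.trunc_mem_ge p b) (fun _ _ => Submodule.mem_top (R := ℚ)) hx

/-- An element of filtration `p` differs from its base degree `p` component by an element of
filtration `p + 1`. -/
lemma sub_c_mem_G {p : ℕ} {x : R.T.A} (hx : x ∈ R.G p) : x - R.c p x ∈ R.G (p + 1) := by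
  have h := R.op_trunc_of_G hx
  rw [B.trunc_succ, R.op_add_left] at h
  have h2 : x - R.c p x = R.op (trunc B.grading (p + 1)) LinearMap.id x := by
    rw [sub_eq_iff_eq_add, add_comm]; exact h.symm
  rw [h2]; exact R.op_trunc_mem_G _ _ _

lemma c_of_G {p i : ℕ} (h : i < p) {x : R.T.A} (hx : x ∈ R.G p) : R.c i x = 0 := by
  rw [← R.op_zero_left LinearMap.id x]
  exact R.op_congr_box (fun b hb => B.mem_ge.1 hb i h) (fun _ _ => rfl) hx

/-- Elements of base filtration `n + 1` have no component of degree `n`. -/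
lemma pj_of_G {n : ℕ} {x : R.T.A} (hx : x ∈ R.G (n + 1)) : pj R.T.grading n x = 0 := by
  rw [← R.op_trunc_of_G hx]
  refine R.ext_lin (f := pj R.T.grading n ∘ₗ R.op (trunc B.grading (n + 1)) LinearMap.id) (g := 0)
    (fun i b hb j a ha => ?_) x
  rw [LinearMap.comp_apply, op_apply, LinearMap.zero_apply]
  by_cases h : i < n + 1
  · rw [trunc_lt h hb, map_zero, zero_mul, map_zero]
  · rw [trunc_ge (by omega) hb]
    exact pj_ne _ (R.T.mul_mem (R.incl.map_grading hb) (R.sec_mem j _ ha)) (by omega)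

lemma eq_zero_of_G {x : R.T.A} (hx : ∀ p, x ∈ R.G p) : x = 0 := by
  refine eq_of_pj R.T.grading fun n => ?_
  rw [map_zero]; exact R.pj_of_G (hx _)

lemma ker_proj_box {x : R.T.A} (hx : R.proj.toAlgHom x = 0) : x ∈ R.box B.aug ⊤ := by
  have h := R.ker_proj x hx
  rw [← R.box_top, R.incl_mul_box] at h
  exact R.box_mono B.aug_mul_top le_rfl h

lemma ker_proj_G {x : R.T.A} (hx : R.proj.toAlgHom x = 0) : x ∈ R.G 1 :=
  R.box_mono B.aug_le_ge_one le_rfl (R.ker_proj_box hx)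

lemma proj_of_G {x : R.T.A} (hx : x ∈ R.G 1) : R.proj.toAlgHom x = 0 :=
  R.box_induction (p := fun x => R.proj.toAlgHom x = 0) (fun b hb a _ => by
    rw [map_mul, R.proj_incl b (B.mem_aug.2 (B.mem_ge.1 hb 0 Nat.zero_lt_one)), zero_mul])
    (fun x y hx hy => by rw [map_add, hx, hy, add_zero]) hx

lemma box_homog {K : Submodule ℚ B.A} (hK : ∀ x ∈ K, ∀ n, pj B.grading n x ∈ K)
    {L : Submodule ℚ F.A} {p : R.T.A → Prop}
    (h : ∀ i, ∀ b ∈ K, b ∈ B.grading i → ∀ a ∈ L, p (R.incl.toAlgHom b * R.sec a))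
    (hadd : ∀ x y, p x → p y → p (x + y)) {x : R.T.A} (hx : x ∈ R.box K L) : p x := by
  refine R.box_induction (fun b hb a ha => ?_) hadd hx
  obtain ⟨s, hs⟩ := exists_sum_pj B.grading b
  rw [hs, map_sum, Finset.sum_mul]
  refine Finset.sum_induction _ p hadd ?_ fun i _ => h i _ (hK b hb i) (pj_mem _ _ _) a ha
  have := h 0 0 (zero_mem _) (zero_mem _) a ha
  rwa [map_zero, zero_mul] at this

/-- The base part of the differential. -/
noncomputable def D1 : R.T.A →ₗ[ℚ] R.T.A := R.op B.d LinearMap.id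

/-- The fibre part of the differential. -/
noncomputable def D2 : R.T.A →ₗ[ℚ] R.T.A := R.op B.sgn F.d

/-- The perturbation part of the differential. -/
noncomputable def Rm : R.T.A →ₗ[ℚ] R.T.A := R.T.d - R.D1 - R.D2

lemma d_eq (x : R.T.A) : R.T.d x = R.D1 x + R.D2 x + R.Rm x := by
  simp only [Rm, LinearMap.sub_apply]; abel

lemma Rm_apply {i : ℕ} {b : B.A} (hb : b ∈ B.grading i) (a : F.A) :
    R.Rm (R.incl.toAlgHom b * R.sec a) =
      R.incl.toAlgHom (B.sgn b) * (R.T.d (R.sec a) - R.sec (F.d a)) := by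
  simp only [Rm, LinearMap.sub_apply, D1, D2, op_apply]
  rw [R.T.leibniz _ _ (R.incl.map_grading hb), B.sgn_apply hb, R.incl.comm_d, map_smul, mul_sub,
    smul_mul_assoc, smul_mul_assoc, LinearMap.id_apply]
  abel

lemma proj_defect (a : F.A) : R.proj.toAlgHom (R.T.d (R.sec a) - R.sec (F.d a)) = 0 := by
  rw [map_sub, R.proj.comm_d, R.proj_sec, R.proj_sec, sub_self]

lemma sgn_mem {K : Submodule ℚ B.A} {i : ℕ} {b : B.A} (hb : b ∈ K) (hi : b ∈ B.grading i) :
    B.sgn b ∈ K := by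
  rw [B.sgn_apply hi]; exact K.smul_mem _ hb

lemma Rm_mem_box {K : Submodule ℚ B.A} (hK : ∀ x ∈ K, ∀ n, pj B.grading n x ∈ K) {x : R.T.A}
    (hx : x ∈ R.box K ⊤) : R.Rm x ∈ R.box (K * B.aug) ⊤ := by
  refine R.box_homog (p := fun x => R.Rm x ∈ R.box (K * B.aug) ⊤) hK (fun i b hb hi a _ => ?_)
    (fun x y hx hy => by rw [map_add]; exact add_mem hx hy) hx
  rw [R.Rm_apply hi, ← R.incl_mul_box]
  exact Submodule.mul_mem_mul ⟨_, sgn_mem hb hi, rfl⟩ (R.ker_proj_box (R.proj_defect a))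

lemma Rm_mem_G (h1 : B.grading 1 = ⊥) {p : ℕ} {x : R.T.A} (hx : x ∈ R.G p) :
    R.Rm x ∈ R.G (p + 2) :=
  R.box_mono ((mul_le_mul' le_rfl (B.aug_le_ge_two h1)).trans (B.ge_mul p 2)) le_rfl
    (R.Rm_mem_box B.pj_mem_ge hx)

lemma D1_mem_G {p : ℕ} {x : R.T.A} (hx : x ∈ R.G p) : R.D1 x ∈ R.G (p + 1) :=
  R.op_mem_G _ (fun _ hi _ hb => B.grading_le_ge (by omega) (B.d_mem hb)) hx

lemma D2_mem_G {p : ℕ} {x : R.T.A} (hx : x ∈ R.G p) : R.D2 x ∈ R.G p :=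
  R.op_mem_G _ (fun _ hi _ hb => sgn_mem (B.grading_le_ge hi hb) hb) hx

lemma c_D2 (i : ℕ) (x : R.T.A) : R.c i (R.D2 x) = R.D2 (R.c i x) := by
  rw [c, D2, op_op, op_op, B.pj_comp_sgn, B.sgn_comp_pj]; rfl

lemma D1_c (i : ℕ) (x : R.T.A) : R.D1 (R.c i x) = R.c (i + 1) (R.D1 x) := by
  rw [c, c, D1, op_op, op_op, B.d_comp_pj]

lemma c_c (i : ℕ) (x : R.T.A) : R.c i (R.c i x) = R.c i x := by
  rw [c, op_op]
  congr 2
  exact LinearMap.ext fun b => pj_same _ (pj_mem _ _ _)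

lemma c_mem_G (p : ℕ) (x : R.T.A) : R.c p x ∈ R.G p :=
  R.op_mem_G (p := 0) _ (fun _ _ _ _ => B.grading_le_ge le_rfl (pj_mem _ _ _)) (R.mem_G_zero x)

/-- The leading term of a cocycle is a cocycle for the fibre differential. -/
lemma D2_c_of_cocycle (h1 : B.grading 1 = ⊥) {p : ℕ} {z : R.T.A} (hz : z ∈ R.G p)
    (hd : R.T.d z = 0) : R.D2 (R.c p z) = 0 := by
  have h := congrArg (R.c p) (R.d_eq z)
  rw [hd, map_zero, map_add, map_add, R.c_of_G (Nat.lt_succ_self p) (R.D1_mem_G hz),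
    R.c_of_G (by omega) (R.Rm_mem_G h1 hz), R.c_D2, zero_add, add_zero] at h
  exact h.symm

/-- The ideal `J` generated by the kernel of a quasi-isomorphism `f` from the base to an algebra
without differential is acyclic, one stage at a time: a cocycle of `J` in filtration `p` is, up to
a boundary from `J`, in filtration `p + 1`. -/
lemma J_step (h1 : B.grading 1 = ⊥) {H : CDGA} (hH : H.ZeroDiff) (f : Hom B H) (hf : QuasiIso f)
    {p : ℕ} {z : R.T.A} (hzJ : z ∈ R.box (LinearMap.ker f.toAlgHom.toLinearMap) ⊤)
    (hzG : z ∈ R.G p) (hd : R.T.d z = 0) :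
    ∃ u ∈ R.box (LinearMap.ker f.toAlgHom.toLinearMap) ⊤, z - R.T.d u ∈ R.G (p + 1) := by
  set K := LinearMap.ker f.toAlgHom.toLinearMap with hKdef
  have memK : ∀ b, b ∈ K ↔ f.toAlgHom b = 0 := fun b => LinearMap.mem_ker
  have hKpj : ∀ b ∈ K, ∀ n, pj B.grading n b ∈ K := fun b hb n => by
    have := pj_comm (𝓜 := B.grading) (𝓜' := H.grading) f.toAlgHom.toLinearMap
      (fun i x hx => f.map_grading hx) n b
    rw [LinearMap.mem_ker, ← this, LinearMap.mem_ker.1 hb, map_zero]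
  have hKsgn : ∀ b ∈ K, B.sgn b ∈ K := fun b hb => by
    obtain ⟨s, hs⟩ := exists_sum_pj B.grading b
    rw [hs, map_sum]
    exact K.sum_mem fun i _ => sgn_mem (hKpj b hb i) (pj_mem _ _ _)
  -- a linear homotopy for the acyclic complex `K`
  obtain ⟨q, hq⟩ := exists_linear_choice
    ((K.comap (LinearMap.snd ℚ B.A B.A)) ⊓
      LinearMap.ker (B.d ∘ₗ LinearMap.snd ℚ B.A B.A - LinearMap.fst ℚ B.A B.A))
    (K ⊓ LinearMap.ker B.d) (by
      rintro x ⟨hxK, hxd⟩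
      obtain ⟨w, hw⟩ := hf.2 x hxd ⟨0, by rw [map_zero]; exact ((memK x).1 hxK).symm⟩
      obtain ⟨w', hw', y, hy⟩ := hf.1 (f.toAlgHom w) (hH _)
      rw [hH] at hy
      refine ⟨w - w', ?_, ?_⟩
      · change w - w' ∈ K
        rw [memK, map_sub, ← neg_sub, ← hy, neg_zero]
      · change B.d (w - w') - x = 0
        rw [map_sub, hw, hw', sub_zero, sub_self])
  obtain ⟨pr0, hpr0⟩ := K.subtype.exists_leftInverse_of_injective (Submodule.ker_subtype K)
  obtain ⟨h0, hh0⟩ := q.exists_extend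
  obtain ⟨h, hhK, hhd⟩ : ∃ h : B.A →ₗ[ℚ] B.A, (∀ b, h b ∈ K) ∧
      ∀ b ∈ K, B.d b = 0 → B.d (h b) = b := by
    refine ⟨K.subtype ∘ₗ pr0 ∘ₗ h0, fun b => (pr0 (h0 b)).2, fun b hb hdb => ?_⟩
    have e1 : h0 b = q ⟨b, hb, hdb⟩ := LinearMap.congr_fun hh0 ⟨b, hb, hdb⟩
    have e2 := hq ⟨b, hb, hdb⟩
    have e3 : q ⟨b, hb, hdb⟩ ∈ K := e2.1
    have e4 : pr0 (q ⟨b, hb, hdb⟩) = ⟨_, e3⟩ := LinearMap.congr_fun hpr0 ⟨_, e3⟩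
    have e5 : B.d (q ⟨b, hb, hdb⟩) - b = 0 := e2.2
    rw [LinearMap.comp_apply, LinearMap.comp_apply, e1, e4]
    exact sub_eq_zero.1 e5
  let pr : B.A →ₗ[ℚ] B.A := K.subtype ∘ₗ pr0
  have hprK : ∀ b, pr b ∈ K := fun b => (pr0 b).2
  have hpr : ∀ b ∈ K, pr b = b := fun b hb =>
    congrArg Subtype.val (LinearMap.congr_fun hpr0 ⟨b, hb⟩)
  -- a fibre homotopy, `d s d = d`
  obtain ⟨s, hs, -⟩ := exists_contraction F.d F.d_sq
  -- the leading term, corrected by the fibre homotopy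
  set zp := R.c p z with hzp
  have hzpJ : zp ∈ R.box K ⊤ := R.op_mem_box (fun b hb => hKpj b hb p) (fun _ _ => Submodule.mem_top (R := ℚ)) hzJ
  have hzpG : zp ∈ R.G p := R.c_mem_G p z
  have hD2zp : R.D2 zp = 0 := R.D2_c_of_cocycle h1 hzG hd
  set y1 := R.op B.sgn s zp with hy1
  have hy1J : y1 ∈ R.box K ⊤ := R.op_mem_box hKsgn (fun _ _ => Submodule.mem_top (R := ℚ)) hzpJ
  have hy1G : y1 ∈ R.G p :=
    R.op_mem_G _ (fun _ hi _ hb => sgn_mem (B.grading_le_ge hi hb) hb) hzpG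
  -- the idempotent `e = 1 - d s` kills the fibre boundaries; the corrected leading term
  -- `x = (1 ⊗ e) zp` is a fibre cocycle
  let e : F.A →ₗ[ℚ] F.A := LinearMap.id - F.d ∘ₗ s
  have he : e ∘ₗ F.d = 0 := LinearMap.ext fun a => by
    simp [e, hs]
  have hee : e ∘ₗ e = e := by
    have : e ∘ₗ (LinearMap.id - F.d ∘ₗ s) = e - (e ∘ₗ F.d) ∘ₗ s := by
      rw [LinearMap.comp_sub, LinearMap.comp_id, LinearMap.comp_assoc]
    rw [he, LinearMap.zero_comp, sub_zero] at this
    exact this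
  set x := R.op LinearMap.id e zp with hx
  have hxe : zp - R.D2 y1 = x := by
    rw [hx, hy1, D2, op_op, B.sgn_comp_sgn, R.op_sub_right, R.op_id]
  have hxJ : x ∈ R.box K ⊤ := R.op_mem_box (fun b hb => hb) (fun _ _ => Submodule.mem_top (R := ℚ)) hzpJ
  have hxG : x ∈ R.G p := R.op_mem_G _ (fun i hi b hb => B.grading_le_ge hi hb) hzpG
  have hcx : R.c p x = x := by
    rw [hx, hzp, c, op_op, op_op, op_op]
    congr 2
    exact LinearMap.ext fun b => pj_same _ (pj_mem _ _ _)
  have hD2x : R.D2 x = 0 := by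
    have h2 : R.D2 (R.D2 y1) = 0 := by
      have hFd : F.d ∘ₗ F.d = 0 := LinearMap.ext fun a => F.d_sq a
      rw [D2, op_op, hFd, op_zero_right]
    rw [← hxe, map_sub, h2, hD2zp, sub_zero]
  have hex : R.op LinearMap.id e x = x := by
    rw [hx, op_op, hee, LinearMap.id_comp]
  have heD2 : ∀ w, R.op LinearMap.id e (R.D2 w) = 0 := fun w => by
    rw [D2, op_op, he, op_zero_right]
  set g := z - R.T.d y1 - x with hg
  have hgG : g ∈ R.G (p + 1) := by
    have h2 : g = (z - zp) - R.D1 y1 - R.Rm y1 := by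
      rw [hg, R.d_eq y1, ← hxe]; abel
    rw [h2]
    exact sub_mem (sub_mem (R.sub_c_mem_G hzG) (R.D1_mem_G hy1G))
      (R.G_anti (by omega) (R.Rm_mem_G h1 hy1G))
  -- base degree `p + 1` of the cocycle equation for `x + g`, after projecting by `1 ⊗ e`
  have hD1x : R.D1 x = 0 := by
    have h2 : R.T.d (x + g) = 0 := by
      rw [hg, add_sub_cancel, map_sub, hd, R.T.d_sq, sub_zero]
    have h3 := congrArg (fun w => R.op LinearMap.id e (R.c (p + 1) w)) h2
    simp only [map_add, R.d_eq, hD2x, map_zero, zero_add, add_zero] at h3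
    rw [R.c_of_G (by omega) (R.Rm_mem_G h1 hxG), R.c_of_G (by omega) (R.D1_mem_G hgG),
      R.c_of_G (by omega) (R.Rm_mem_G h1 hgG), R.c_D2, heD2, ← R.D1_c, hcx, map_zero, add_zero,
      zero_add, add_zero, add_zero] at h3
    have h4 : ∀ w, R.op LinearMap.id e (R.D1 w) = R.D1 (R.op LinearMap.id e w) := fun w => by
      rw [D1, op_op, op_op]; rfl
    rw [← hex, ← h4]; exact h3
  -- `D1 x = 0` with coefficients in the acyclic complex `K`, so `x` is a base boundary `D1 y2`
  have hdhx : R.op (B.d ∘ₗ h) LinearMap.id x = x := by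
    obtain ⟨t, ht⟩ := exists_factor_left (B.d ∘ₗ pr) ((LinearMap.id - B.d ∘ₗ h) ∘ₗ pr)
      (fun b hb => by
        simp only [LinearMap.comp_apply, LinearMap.sub_apply, LinearMap.id_apply] at hb ⊢
        rw [hhd _ (hprK b) hb, sub_self])
    have e1 : R.op pr LinearMap.id x = x := by
      conv_rhs => rw [← R.op_id x]
      exact R.op_congr_box hpr (fun _ _ => rfl) hxJ
    have e2 : R.op (LinearMap.id - B.d ∘ₗ h) LinearMap.id x = 0 := by
      have := R.op_op (LinearMap.id - B.d ∘ₗ h) pr LinearMap.id LinearMap.id x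
      rw [e1, ← ht] at this
      rw [this]
      have h5 : ∀ w, R.op (t ∘ₗ B.d ∘ₗ pr) LinearMap.id w =
          R.op t LinearMap.id (R.D1 (R.op pr LinearMap.id w)) := fun w => by
        rw [D1, op_op, op_op]; rfl
      change R.op (t ∘ₗ B.d ∘ₗ pr) LinearMap.id x = 0
      rw [h5, e1, hD1x, map_zero]
    rw [R.op_sub_left, R.op_id, sub_eq_zero] at e2
    exact e2.symm
  rcases p with _ | p
  · refine ⟨y1, hy1J, ?_⟩
    have hx0 : x = 0 := by
      rw [← hcx]
      conv_lhs => rw [← hdhx]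
      rw [c, op_op, ← LinearMap.comp_assoc, B.pj_zero_comp_d, LinearMap.zero_comp, op_zero_left]
    rw [hg, hx0, sub_zero] at hgG
    exact hgG
  · set y2 := R.op (pj B.grading p ∘ₗ h) LinearMap.id x with hy2
    have hy2J : y2 ∈ R.box K ⊤ :=
      R.op_mem_box (fun b _ => hKpj _ (hhK b) p) (fun _ _ => Submodule.mem_top (R := ℚ)) hxJ
    have hy2G : y2 ∈ R.G p :=
      R.op_mem_G (p := 0) (h := pj B.grading p ∘ₗ h) LinearMap.id
        (fun _ _ b _ => B.grading_le_ge le_rfl (pj_mem B.grading p (h b))) (R.mem_G_zero x)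
    have hD1y2 : R.D1 y2 = x := by
      rw [hy2, D1, op_op, ← LinearMap.comp_assoc, B.d_comp_pj, LinearMap.comp_assoc]
      have := R.op_op (pj B.grading (p + 1)) (B.d ∘ₗ h) LinearMap.id LinearMap.id x
      rw [hdhx] at this
      exact this.symm.trans hcx
    have hD2y2 : R.D2 y2 = 0 := by
      have e1 : R.op LinearMap.id F.d x = 0 := by
        have : ∀ w, R.op B.sgn LinearMap.id (R.D2 w) = R.op LinearMap.id F.d w := fun w => by
          rw [D2, op_op, B.sgn_comp_sgn]; rfl
        rw [← this, hD2x, map_zero]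
      have e2 : ∀ w, R.D2 (R.op (pj B.grading p ∘ₗ h) LinearMap.id w) =
          R.op (B.sgn ∘ₗ pj B.grading p ∘ₗ h) LinearMap.id (R.op LinearMap.id F.d w) := fun w => by
        rw [D2, op_op, op_op]; rfl
      rw [hy2, e2, e1, map_zero]
    refine ⟨y1 + y2, add_mem hy1J hy2J, ?_⟩
    have h3 : z - R.T.d (y1 + y2) = g - R.Rm y2 := by
      rw [map_add, R.d_eq y2, hD1y2, hD2y2, hg]; abel
    rw [h3]
    exact sub_mem hgG (R.Rm_mem_G h1 hy2G)

end Rel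
end RHT

namespace RHT

/-! ### Replacing the base by its cohomology -/

/-- The quotient of a cochain algebra by a homogeneous two-sided differential ideal. -/
theorem exists_quotient (T : CDGA) (N : Submodule ℚ T.A)
    (hl : ∀ x, ∀ n ∈ N, x * n ∈ N) (hr : ∀ x, ∀ n ∈ N, n * x ∈ N)
    (hpj : ∀ x ∈ N, ∀ n, pj T.grading n x ∈ N) (hd : ∀ x ∈ N, T.d x ∈ N) :
    ∃ (T' : CDGA) (π : Hom T T'), Function.Surjective π.toAlgHom ∧
      ∀ x, π.toAlgHom x = 0 ↔ x ∈ N := by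
  let I : Ideal T.A :=
    { carrier := N
      add_mem' := fun h h' => N.add_mem h h'
      zero_mem' := N.zero_mem
      smul_mem' := fun c x hx => hl c x hx }
  have hI : I.IsTwoSided := ⟨fun {a} b ha => hr b a ha⟩
  let mk : T.A →ₐ[ℚ] T.A ⧸ I := Ideal.Quotient.mkₐ ℚ I
  have mk_surj : Function.Surjective mk := Ideal.Quotient.mkₐ_surjective ℚ I
  have mk_zero : ∀ x, mk x = 0 ↔ x ∈ N := fun x => Ideal.Quotient.eq_zero_iff_mem
  let gr : ℕ → Submodule ℚ (T.A ⧸ I) := fun i => (T.grading i).map mk.toLinearMap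
  -- linear maps preserving the ideal descend
  have desc : ∀ h : T.A →ₗ[ℚ] T.A, (∀ x ∈ N, h x ∈ N) →
      ∃ q : (T.A ⧸ I) →ₗ[ℚ] (T.A ⧸ I), ∀ x, q (mk x) = mk (h x) := by
    intro h hh
    obtain ⟨q, hq⟩ := exists_factor_left mk.toLinearMap (mk.toLinearMap ∘ₗ h)
      (fun x hx => (mk_zero _).2 (hh x ((mk_zero x).1 hx)))
    exact ⟨q, fun x => LinearMap.congr_fun hq x⟩
  choose P hP using fun n => desc (pj T.grading n) (fun x hx => hpj x hx n)
  obtain ⟨D, hD⟩ := desc T.d hd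
  have hint : DirectSum.IsInternal gr := by
    refine isInternal_of_proj gr P ?_ ?_ ?_
    · rintro n _ ⟨x, hx, rfl⟩
      change P n (mk x) = mk x
      rw [hP, pj_same _ hx]
    · rintro m n hmn _ ⟨x, hx, rfl⟩
      change P n (mk x) = 0
      rw [hP, pj_ne _ hx hmn, map_zero]
    · rw [eq_top_iff]
      intro y _
      obtain ⟨x, rfl⟩ := mk_surj y
      obtain ⟨s, hs⟩ := exists_sum_pj T.grading x
      rw [hs, map_sum]
      exact Submodule.sum_mem _ fun i _ =>
        (le_iSup gr i) ⟨_, pj_mem T.grading i x, rfl⟩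
  let _ : DirectSum.Decomposition gr := hint.chooseDecomposition
  have hone : (1 : T.A ⧸ I) ∈ gr 0 := ⟨1, T.one_mem, map_one mk⟩
  have hmul : ∀ ⦃i j : ℕ⦄ {x y : T.A ⧸ I}, x ∈ gr i → y ∈ gr j → x * y ∈ gr (i + j) := by
    rintro i j _ _ ⟨x, hx, rfl⟩ ⟨y, hy, rfl⟩
    exact ⟨x * y, T.mul_mem hx hy, map_mul mk x y⟩
  let _ : SetLike.GradedMonoid gr := { one_mem := hone, mul_mem := hmul }
  let _ : GradedAlgebra gr := { }
  let T' : CDGA :=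
    { A := T.A ⧸ I
      grading := gr
      gcomm := by
        rintro i j _ _ ⟨x, hx, rfl⟩ ⟨y, hy, rfl⟩
        change mk x * mk y = _ • (mk y * mk x)
        rw [← map_mul, T.gcomm hx hy, map_smul, map_mul]
      d := D
      d_mem := by
        rintro i _ ⟨x, hx, rfl⟩
        exact ⟨T.d x, T.d_mem hx, (hD x).symm⟩
      d_sq := by
        intro y
        obtain ⟨x, rfl⟩ := mk_surj y
        rw [hD, hD, T.d_sq, map_zero]
      leibniz := by
        rintro i _ y ⟨x, hx, rfl⟩
        obtain ⟨y, rfl⟩ := mk_surj y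
        change D (mk x * mk y) = D (mk x) * mk y + _ • (mk x * D (mk y))
        rw [← map_mul, hD, hD, hD, T.leibniz x y hx, map_add, map_mul, map_smul, map_mul] }
  exact ⟨T', { toAlgHom := mk
               map_grading := fun {i x} hx => ⟨x, hx, rfl⟩
               comm_d := fun x => (hD x).symm }, mk_surj, mk_zero⟩

/-- Algebra maps factor through surjections whose kernel they annihilate. -/
lemma exists_algHom_factor {X Y Z : Type} [Ring X] [Ring Y] [Ring Z] [Algebra ℚ X] [Algebra ℚ Y]
    [Algebra ℚ Z] (f : X →ₐ[ℚ] Y) (hf : Function.Surjective f) (g : X →ₐ[ℚ] Z)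
    (h : ∀ x, f x = 0 → g x = 0) : ∃ q : Y →ₐ[ℚ] Z, ∀ x, q (f x) = g x := by
  obtain ⟨q, hq⟩ := exists_factor_left f.toLinearMap g.toLinearMap h
  have hq' : ∀ x, q (f x) = g x := fun x => LinearMap.congr_fun hq x
  refine ⟨AlgHom.ofLinearMap q ?_ ?_, hq'⟩
  · rw [← map_one f, hq', map_one]
  · intro x y
    obtain ⟨x, rfl⟩ := hf x
    obtain ⟨y, rfl⟩ := hf y
    rw [← map_mul, hq', hq', hq', map_mul]

lemma Hom.pj_comm {C D : CDGA} (f : Hom C D) (n : ℕ) (x : C.A) :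
    pj D.grading n (f.toAlgHom x) = f.toAlgHom (pj C.grading n x) :=
  RHT.pj_comm f.toAlgHom.toLinearMap (fun _ _ hx => f.map_grading hx) n x

/-- Homogeneous elements lift to homogeneous elements along surjections. -/
lemma Hom.lift_homog {C D : CDGA} (f : Hom C D) (hf : Function.Surjective f.toAlgHom) {n : ℕ}
    {y : D.A} (hy : y ∈ D.grading n) : ∃ x ∈ C.grading n, f.toAlgHom x = y := by
  obtain ⟨x, rfl⟩ := hf y
  exact ⟨pj C.grading n x, pj_mem _ _ _, by rw [← f.pj_comm, pj_same _ hy]⟩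

namespace Rel

variable {B F : CDGA} (R : Rel B F)

section Ideal

variable {K : Submodule ℚ B.A} (hKm : K * ⊤ ≤ K) (hKpj : ∀ x ∈ K, ∀ n, pj B.grading n x ∈ K)
  (hKd : ∀ x ∈ K, B.d x ∈ K)

include hKm in
lemma map_mul_top_le : K.map R.incl.toAlgHom.toLinearMap * (⊤ : Submodule ℚ R.T.A) ≤ R.box K ⊤ := by
  rw [← R.box_top, R.incl_mul_box]
  exact R.box_mono hKm le_rfl

lemma box_le_map_mul_top (K : Submodule ℚ B.A) :
    R.box K ⊤ ≤ K.map R.incl.toAlgHom.toLinearMap * (⊤ : Submodule ℚ R.T.A) :=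
  mul_le_mul' le_rfl le_top

include hKm in
lemma box_mul_mem (x : R.T.A) {n : R.T.A} (hn : n ∈ R.box K ⊤) : n * x ∈ R.box K ⊤ := by
  have h := Submodule.mul_mem_mul (R.box_le_map_mul_top K hn) (Submodule.mem_span_singleton_self
    (R := ℚ) x)
  rw [mul_assoc] at h
  have h3 : K.map R.incl.toAlgHom.toLinearMap * (⊤ * Submodule.span ℚ {x}) ≤
      K.map R.incl.toAlgHom.toLinearMap * ⊤ := mul_le_mul' le_rfl le_top
  exact R.map_mul_top_le hKm (h3 h)

include hKpj in
lemma map_incl_pj : ∀ x ∈ K.map R.incl.toAlgHom.toLinearMap, ∀ n,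
    pj R.T.grading n x ∈ K.map R.incl.toAlgHom.toLinearMap :=
  CDGA.pj_map_mem _ (fun _ _ hx => R.incl.map_grading hx) hKpj

include hKpj in
lemma box_pj : ∀ x ∈ R.box K ⊤, ∀ n, pj R.T.grading n x ∈ R.box K ⊤ :=
  R.T.pj_mul_mem (R.map_incl_pj hKpj) (CDGA.pj_map_mem _ R.sec_mem
    fun _ _ _ => Submodule.mem_top (R := ℚ))

include hKm hKpj in
lemma mul_box_mem (x : R.T.A) {n : R.T.A} (hn : n ∈ R.box K ⊤) : x * n ∈ R.box K ⊤ := by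
  have h := Submodule.mul_mem_mul (Submodule.mem_top (R := ℚ) (x := x)) (R.box_le_map_mul_top K hn)
  rw [← mul_assoc] at h
  have h2 : ⊤ * K.map R.incl.toAlgHom.toLinearMap * ⊤ ≤
      K.map R.incl.toAlgHom.toLinearMap * ⊤ := by
    refine (mul_le_mul' (R.T.mul_comm_le (fun _ _ _ => Submodule.mem_top (R := ℚ))
      (R.map_incl_pj hKpj)) le_rfl).trans ?_
    rw [mul_assoc]
    exact mul_le_mul' le_rfl le_top
  exact R.map_mul_top_le hKm (h2 h)

include hKm hKpj hKd in
lemma d_box_mem {x : R.T.A} (hx : x ∈ R.box K ⊤) : R.T.d x ∈ R.box K ⊤ := by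
  refine R.box_homog (p := fun x => R.T.d x ∈ R.box K ⊤) hKpj (fun i b hb hi a _ => ?_)
    (fun x y hx hy => by rw [map_add]; exact add_mem hx hy) hx
  rw [R.T.leibniz _ _ (R.incl.map_grading hi), ← R.incl.comm_d]
  refine add_mem ?_ (Submodule.smul_mem _ _ ?_)
  · exact R.mem_box (hKd b hb) (Submodule.mem_top (R := ℚ))
  · exact R.map_mul_top_le hKm (Submodule.mul_mem_mul ⟨b, hb, rfl⟩ (Submodule.mem_top (R := ℚ)))

end Ideal

/-- The ideal generated by the kernel of a quasi-isomorphism to an algebra without differential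
is acyclic. -/
lemma J_exact (h1 : B.grading 1 = ⊥) {H : CDGA} (hH : H.ZeroDiff) (f : Hom B H) (hf : QuasiIso f)
    {z : R.T.A} (hzJ : z ∈ R.box (LinearMap.ker f.toAlgHom.toLinearMap) ⊤) (hd : R.T.d z = 0) :
    ∃ u ∈ R.box (LinearMap.ker f.toAlgHom.toLinearMap) ⊤, R.T.d u = z := by
  set K := LinearMap.ker f.toAlgHom.toLinearMap with hKdef
  have memK : ∀ b, b ∈ K ↔ f.toAlgHom b = 0 := fun b => LinearMap.mem_ker
  have hKpj : ∀ b ∈ K, ∀ n, pj B.grading n b ∈ K := fun b hb n => by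
    rw [memK, ← f.pj_comm, (memK b).1 hb, map_zero]
  have hKm : K * ⊤ ≤ K := by
    rw [Submodule.mul_le]
    intro b hb x _
    rw [memK, map_mul, (memK b).1 hb, zero_mul]
  have hKd : ∀ b ∈ K, B.d b ∈ K := fun b _ => by rw [memK, f.comm_d, hH]
  have key : ∀ p, ∃ u ∈ R.box K ⊤, z - R.T.d u ∈ R.G p := by
    intro p
    induction p with
    | zero => exact ⟨0, zero_mem _, R.mem_G_zero _⟩
    | succ p ih =>
      obtain ⟨u, hu, huG⟩ := ih
      obtain ⟨u', hu', huG'⟩ := R.J_step h1 hH f hf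
        (sub_mem hzJ (R.d_box_mem hKm hKpj hKd hu)) huG (by rw [map_sub, hd, R.T.d_sq, sub_zero])
      exact ⟨u + u', add_mem hu hu', by rwa [map_add, ← sub_sub]⟩
  have : z ∈ (R.box K ⊤).map R.T.d := by
    refine mem_of_pj (𝓜 := R.T.grading) fun n => ?_
    obtain ⟨u, hu, huG⟩ := key (n + 1)
    have h := R.pj_of_G huG
    rw [map_sub, sub_eq_zero] at h
    rw [h]
    rcases n with _ | n
    · rw [R.T.pj_d_zero]; exact zero_mem _
    · rw [R.T.pj_d]
      exact ⟨_, R.box_pj hKpj u hu n, rfl⟩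
  exact this

set_option maxHeartbeats 1000000 in
/-- Extending the base along a quasi-isomorphism to an algebra without differential yields a
quasi-isomorphic relatively free extension. -/
theorem exists_base_change (h1 : B.grading 1 = ⊥) {H : CDGA} (hH : H.ZeroDiff) (f : Hom B H)
    (hf : QuasiIso f) :
    ∃ (R' : Rel H F) (π : Hom R.T R'.T), Function.Surjective π.toAlgHom ∧ QuasiIso π ∧
      (∀ b, π.toAlgHom (R.incl.toAlgHom b) = R'.incl.toAlgHom (f.toAlgHom b)) ∧
      (∀ x, R.proj.toAlgHom x = R'.proj.toAlgHom (π.toAlgHom x)) := by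
  let K := LinearMap.ker f.toAlgHom.toLinearMap
  have memK : ∀ b, b ∈ K ↔ f.toAlgHom b = 0 := fun b => LinearMap.mem_ker
  have hKpj : ∀ b ∈ K, ∀ n, pj B.grading n b ∈ K := fun b hb n => by
    rw [memK, ← f.pj_comm, (memK b).1 hb, map_zero]
  have hKm : K * ⊤ ≤ K := by
    rw [Submodule.mul_le]
    intro b hb x _
    rw [memK, map_mul, (memK b).1 hb, zero_mul]
  have hKd : ∀ b ∈ K, B.d b ∈ K := fun b _ => by rw [memK, f.comm_d, hH]
  have hfs : Function.Surjective f.toAlgHom := fun y => by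
    obtain ⟨x, -, w, hw⟩ := hf.1 y (hH y)
    rw [hH] at hw
    exact ⟨x, (sub_eq_zero.1 hw.symm)⟩
  have hKaug : K ≤ B.aug := fun b hb => by
    rw [B.mem_aug]
    have hd0 : B.d (pj B.grading 0 b) = 0 := by
      have := B.d_mem (pj_mem B.grading 0 b)
      rw [zero_add, h1] at this
      exact (Submodule.mem_bot ℚ).1 this
    obtain ⟨y, hy⟩ := hf.2 _ hd0 ⟨0, by rw [map_zero]; exact ((memK _).1 (hKpj b hb 0)).symm⟩
    rw [← pj_same B.grading (pj_mem B.grading 0 b), ← hy, B.pj_d_zero]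
  obtain ⟨T', π, hπs, hπ⟩ := exists_quotient R.T (R.box K ⊤)
    (fun x n hn => R.mul_box_mem hKm hKpj x hn) (fun x n hn => R.box_mul_mem hKm x hn)
    (R.box_pj hKpj) (fun x hx => R.d_box_mem hKm hKpj hKd hx)
  have hq : QuasiIso π := by
    constructor
    · intro y hy
      obtain ⟨x, rfl⟩ := hπs y
      change T'.d _ = 0 at hy
      rw [← π.comm_d, hπ] at hy
      obtain ⟨u, hu, hdu⟩ := R.J_exact h1 hH f hf hy (R.T.d_sq x)
      refine ⟨x - u, by rw [map_sub, hdu, sub_self], 0, ?_⟩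
      rw [map_zero, map_sub, (hπ u).2 hu, sub_zero, sub_self]
    · rintro x hx ⟨y, hy⟩
      obtain ⟨w, rfl⟩ := hπs y
      change T'.d _ = _ at hy
      rw [← π.comm_d, ← sub_eq_zero, ← map_sub, hπ] at hy
      obtain ⟨u, hu, hdu⟩ := R.J_exact h1 hH f hf hy (by rw [map_sub, R.T.d_sq, hx, sub_zero])
      exact ⟨w - u, by rw [map_sub, hdu, sub_sub_cancel]⟩
  -- algebra maps on the total algebra that kill `K` factor through the quotient
  have hker : ∀ {Z : Type} [Ring Z] [Algebra ℚ Z] (φ : R.T.A →ₐ[ℚ] Z),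
      (∀ b ∈ K, φ (R.incl.toAlgHom b) = 0) → ∀ x, π.toAlgHom x = 0 → φ x = 0 := by
    intro Z _ _ φ hφ x hx
    refine R.box_induction (p := fun x => φ x = 0) (fun b hb a _ => ?_) (fun x y hx hy => ?_)
      ((hπ x).1 hx)
    · rw [map_mul, hφ b hb, zero_mul]
    · rw [map_add, hx, hy, add_zero]
  obtain ⟨i', hi'⟩ := exists_algHom_factor f.toAlgHom hfs (π.toAlgHom.comp R.incl.toAlgHom)
    (fun b hb => (hπ _).2 (by
      have := R.mem_box ((memK b).2 hb) (Submodule.mem_top (R := ℚ) (x := (1 : F.A)))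
      rwa [map_one, mul_one] at this))
  obtain ⟨p', hp'⟩ := exists_algHom_factor π.toAlgHom hπs R.proj.toAlgHom
    (hker R.proj.toAlgHom fun b hb => R.proj_incl b (hKaug hb))
  have hi'' : ∀ b, i' (f.toAlgHom b) = π.toAlgHom (R.incl.toAlgHom b) := hi'
  have hle : (B.aug.map R.incl.toAlgHom.toLinearMap).map π.toAlgHom.toLinearMap ≤
      H.aug.map i'.toLinearMap := by
    rintro _ ⟨_, ⟨b, hb, rfl⟩, rfl⟩
    refine ⟨f.toAlgHom b, ?_, hi'' b⟩
    rw [SetLike.mem_coe, H.mem_aug, f.pj_comm, B.mem_aug.1 hb, map_zero]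
  refine ⟨{ T := T'
            incl :=
              { toAlgHom := i'
                map_grading := fun {i y} hy => by
                  obtain ⟨b, hb, rfl⟩ := f.lift_homog hfs hy
                  rw [hi'']
                  exact π.map_grading (R.incl.map_grading hb)
                comm_d := fun y => by
                  obtain ⟨b, rfl⟩ := hfs y
                  rw [← f.comm_d, hi'', hi'', R.incl.comm_d, π.comm_d] }
            proj :=
              { toAlgHom := p'
                map_grading := fun {i y} hy => by
                  obtain ⟨x, hx, rfl⟩ := π.lift_homog hπs hy
                  rw [hp']
                  exact R.proj.map_grading hx
                comm_d := fun y => by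
                  obtain ⟨x, rfl⟩ := hπs y
                  rw [← π.comm_d, hp', hp', R.proj.comm_d] }
            proj_incl := fun y hy => by
              obtain ⟨b, rfl⟩ := hfs y
              have h0 : f.toAlgHom (pj B.grading 0 b) = 0 := by
                rw [← f.pj_comm, H.mem_aug.1 hy]
              have h2 := R.proj_incl (b - pj B.grading 0 b) (by
                rw [B.mem_aug, map_sub, pj_same _ (pj_mem _ _ _), sub_self])
              have h3 := R.proj_incl _ (hKaug ((memK _).2 h0))
              rw [map_sub, map_sub, h3, sub_zero] at h2
              change p' (i' (f.toAlgHom b)) = 0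
              rw [hi'', hp', h2]
            ker_proj := fun y hy => by
              obtain ⟨x, rfl⟩ := hπs y
              have h2 := R.ker_proj x (by rw [← hp' x]; exact hy)
              have h3 := Submodule.mem_map_of_mem (f := π.toAlgHom.toLinearMap) h2
              rw [Submodule.map_mul] at h3
              have h4 : (B.aug.map R.incl.toAlgHom.toLinearMap).map π.toAlgHom.toLinearMap ≤
                  H.aug.map i'.toLinearMap := hle
              have h5 : (B.aug.map R.incl.toAlgHom.toLinearMap).map π.toAlgHom.toLinearMap *
                  (⊤ : Submodule ℚ R.T.A).map π.toAlgHom.toLinearMap ≤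
                  H.aug.map i'.toLinearMap * ⊤ := mul_le_mul' h4 le_top
              exact h5 h3
            sec := π.toAlgHom.comp R.sec
            sec_mem := fun i a ha => π.map_grading (R.sec_mem i a ha)
            proj_sec := fun a => (hp' _).trans (R.proj_sec a)
            cop := by
              intro C _ _ 𝒞 c1 cmul ccomm g hg k hk
              obtain ⟨φ, hφ1, hφ2⟩ := R.cop C 𝒞 c1 cmul ccomm (g.comp f.toAlgHom)
                (fun i x hx => hg i _ (f.map_grading hx)) k hk
              obtain ⟨ψ, hψ⟩ := exists_algHom_factor π.toAlgHom hπs φ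
                (hker φ fun b hb => by
                  rw [hφ1, AlgHom.comp_apply, (memK b).1 hb, map_zero])
              refine ⟨ψ, fun y => ?_, fun a => (hψ _).trans (hφ2 a)⟩
              obtain ⟨b, rfl⟩ := hfs y
              change ψ (i' (f.toAlgHom b)) = _
              rw [hi'', hψ, hφ1, AlgHom.comp_apply] },
    π, hπs, hq, fun b => (hi'' b).symm, fun x => (hp' x).symm⟩

end Rel
end RHT

namespace RHT

/-! ### Changing the section of the fibre projection -/

namespace Rel

variable {B F : CDGA} (R : Rel B F)

/-- Two sections of the fibre projection differ by an automorphism of the total algebra over the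
base: the comparison map is unipotent for the base filtration, hence bijective. -/
lemma exists_sec_automorphism (τ : F.A →ₐ[ℚ] R.T.A)
    (hτ : ∀ i, ∀ a ∈ F.grading i, τ a ∈ R.T.grading i) (hτp : ∀ a, R.proj.toAlgHom (τ a) = a) :
    ∃ α : R.T.A ≃ₐ[ℚ] R.T.A, (∀ b, α (R.incl.toAlgHom b) = R.incl.toAlgHom b) ∧
      ∀ a, α (R.sec a) = τ a := by
  obtain ⟨α, h1, h2⟩ := R.cop R.T.A R.T.grading R.T.one_mem (fun i j x y hx hy => R.T.mul_mem hx hy)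
    (fun i j x y hx hy => R.T.gcomm hx hy) R.incl.toAlgHom (fun i x hx => R.incl.map_grading hx) τ hτ
  have hG : ∀ p, ∀ x ∈ R.G p, α x - x ∈ R.G (p + 1) := by
    intro p x hx
    refine R.box_induction (p := fun x => α x - x ∈ R.G (p + 1)) (fun b hb a _ => ?_)
      (fun x y hx hy => ?_) hx
    · have h3 := R.ker_proj_G (x := τ a - R.sec a) (by rw [map_sub, hτp, R.proj_sec, sub_self])
      have h4 : R.incl.toAlgHom b * (τ a - R.sec a) ∈ R.box (B.ge p * B.ge 1) ⊤ := by
        rw [← R.incl_mul_box]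
        exact Submodule.mul_mem_mul ⟨b, hb, rfl⟩ h3
      rw [map_mul, h1, h2, ← mul_sub]
      exact R.box_mono (B.ge_mul p 1) le_rfl h4
    · rw [map_add, add_sub_add_comm]; exact add_mem hx hy
  have hinj : Function.Injective α := by
    rw [injective_iff_map_eq_zero]
    intro x hx
    refine R.eq_zero_of_G fun p => ?_
    induction p with
    | zero => exact R.mem_G_zero x
    | succ p ih =>
      have := hG p x ih
      rw [hx, zero_sub] at this
      simpa using neg_mem this
  have hsurj : Function.Surjective α := by
    intro x
    have := R.generation τ.toLinearMap hτ hτp (LinearMap.range α.toLinearMap)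
      (fun a => ⟨R.sec a, h2 a⟩) (by
        rintro b _ ⟨x, rfl⟩
        refine ⟨R.incl.toAlgHom b * x, ?_⟩
        change α _ = _ * α x
        rw [map_mul, h1]) x
    exact this
  exact ⟨AlgEquiv.ofBijective α ⟨hinj, hsurj⟩, h1, h2⟩

/-- The same extension with another section of the fibre projection. -/
noncomputable def withSec (τ : F.A →ₐ[ℚ] R.T.A)
    (hτ : ∀ i, ∀ a ∈ F.grading i, τ a ∈ R.T.grading i) (hτp : ∀ a, R.proj.toAlgHom (τ a) = a) :
    Rel B F where
  T := R.T
  incl := R.incl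
  proj := R.proj
  proj_incl := R.proj_incl
  ker_proj := R.ker_proj
  sec := τ
  sec_mem := hτ
  proj_sec := hτp
  cop := by
    intro C _ _ 𝒞 c1 cmul ccomm g hg k hk
    obtain ⟨φ, hφ1, hφ2⟩ := R.cop C 𝒞 c1 cmul ccomm g hg k hk
    obtain ⟨α, h1, h2⟩ := R.exists_sec_automorphism τ hτ hτp
    refine ⟨φ.comp α.symm.toAlgHom, fun b => ?_, fun a => ?_⟩
    · have : α.symm (R.incl.toAlgHom b) = R.incl.toAlgHom b := by
        rw [AlgEquiv.symm_apply_eq, h1]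
      change φ (α.symm _) = _
      rw [this, hφ1]
    · have : α.symm (τ a) = R.sec a := by
        rw [AlgEquiv.symm_apply_eq, h2]
      change φ (α.symm _) = _
      rw [this, hφ2]

lemma incl_injective [Nontrivial F.A] : Function.Injective R.incl.toAlgHom := by
  have h : Function.Injective (fun b : B.A => R.mu (b ⊗ₜ[ℚ] (1 : F.A))) :=
    R.mu_bijective.1.comp
      (Algebra.TensorProduct.includeLeft_injective (S := ℚ) (R := ℚ) (A := B.A) (B := F.A)
        (FaithfulSMul.algebraMap_injective ℚ F.A))
  intro x y hxy
  refine h ?_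
  simp only [mu_tmul, hxy]

end Rel
end RHT

namespace RHT

/-! ### Lifting the lower grading to the total algebra -/

namespace BigradedSullivan

variable (BF : BigradedSullivan)

noncomputable instance : DirectSum.Decomposition BF.low := BF.low_internal.chooseDecomposition

instance : SetLike.GradedMonoid BF.low where
  one_mem := BF.low_one
  mul_mem := fun i j x y => BF.low_mul i j x y

noncomputable instance : GradedAlgebra BF.low where

/-- The elements of lower degree less than `k`. -/
noncomputable def lowLT (k : ℕ) : Submodule ℚ BF.A := ⨆ j, ⨆ _ : j < k, BF.low j

variable {BF}

lemma low_le_lowLT {j k : ℕ} (h : j < k) : BF.low j ≤ BF.lowLT k :=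
  le_iSup₂_of_le j h le_rfl

lemma lowLT_le {k : ℕ} {N : Submodule ℚ BF.A} (h : ∀ j, j < k → BF.low j ≤ N) : BF.lowLT k ≤ N :=
  iSup₂_le h

lemma lowLT_mono {j k : ℕ} (h : j ≤ k) : BF.lowLT j ≤ BF.lowLT k :=
  lowLT_le fun _ hi => low_le_lowLT (by omega)

lemma lowLT_zero : BF.lowLT 0 = ⊥ := eq_bot_iff.2 (lowLT_le fun _ h => absurd h (Nat.not_lt_zero _))

lemma lowLT_mul_low (i j : ℕ) : BF.lowLT i * BF.low j ≤ BF.lowLT (i + j) := by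
  rw [lowLT]
  simp only [Submodule.iSup_mul]
  refine iSup₂_le fun l hl => Submodule.mul_le.2 fun x hx y hy => ?_
  exact low_le_lowLT (by omega) (BF.low_mul l j x y hx hy)

lemma low_mul_lowLT (i j : ℕ) : BF.low i * BF.lowLT j ≤ BF.lowLT (i + j) := by
  rw [lowLT]
  simp only [Submodule.mul_iSup]
  refine iSup₂_le fun l hl => Submodule.mul_le.2 fun x hx y hy => ?_
  exact low_le_lowLT (by omega) (BF.low_mul i l x y hx hy)

lemma trunc_lowLT {k : ℕ} {x : BF.A} (hx : x ∈ BF.lowLT k) : trunc BF.low k x = 0 :=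
  lowLT_le (N := LinearMap.ker (trunc BF.low k)) (fun _ hj _ hx => trunc_lt hj hx) hx

lemma sub_trunc_mem (k : ℕ) (x : BF.A) : x - trunc BF.low k x ∈ BF.lowLT k := by
  induction x using homog_induction BF.low with
  | h0 j x hx =>
    by_cases h : j < k
    · rw [trunc_lt h hx, sub_zero]; exact low_le_lowLT h hx
    · rw [trunc_ge (by omega) hx, sub_self]; exact zero_mem _
  | hadd x y hx hy => rw [map_add, add_sub_add_comm]; exact add_mem hx hy

lemma trunc_d (k : ℕ) : trunc BF.low k ∘ₗ BF.d = BF.d ∘ₗ trunc BF.low (k + 1) :=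
  lin_ext BF.low fun j x hx => by
    rw [LinearMap.comp_apply, LinearMap.comp_apply]
    rcases j with _ | j
    · rw [trunc_lt (Nat.succ_pos k) hx, BF.d_low_zero x hx, map_zero, map_zero]
    · have hd := BF.d_low j x hx
      by_cases h : j < k
      · rw [trunc_lt h hd, trunc_lt (by omega : j + 1 < k + 1) hx, map_zero]
      · rw [trunc_ge (by omega) hd, trunc_ge (by omega : k + 1 ≤ j + 1) hx]

/-- A cocycle whose components all have lower degree at least `k + 1` is a coboundary. -/
lemma exists_d_trunc {k : ℕ} {x : BF.A} (hx : BF.d (trunc BF.low (k + 1) x) = 0) :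
    ∃ y, BF.d y = trunc BF.low (k + 1) x := by
  set z := trunc BF.low (k + 1) x with hz
  have hpz : ∀ j, BF.d (pj BF.low j z) = 0 := by
    intro j
    rcases j with _ | j
    · exact BF.d_low_zero _ (pj_mem _ _ _)
    · have h : pj BF.low j ∘ₗ BF.d = BF.d ∘ₗ pj BF.low (j + 1) :=
        lin_ext BF.low fun l w hw => by
          rw [LinearMap.comp_apply, LinearMap.comp_apply]
          rcases l with _ | l
          · rw [BF.d_low_zero w hw, pj_ne _ hw (by omega), map_zero, map_zero]
          · have hd := BF.d_low l w hw
            by_cases hl : l = j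
            · subst hl
              rw [pj_same _ hd, pj_same _ hw]
            · rw [pj_ne _ hd hl, pj_ne _ hw (by omega), map_zero]
      have h2 := LinearMap.congr_fun h z
      rw [LinearMap.comp_apply, LinearMap.comp_apply, hx, map_zero] at h2
      exact h2.symm
  have hp0 : pj BF.low 0 z = 0 := by
    have h : pj BF.low 0 ∘ₗ trunc BF.low (k + 1) = 0 := lin_ext BF.low fun l w hw => by
      rw [LinearMap.comp_apply, LinearMap.zero_apply]
      by_cases hl : l < k + 1
      · rw [trunc_lt hl hw, map_zero]
      · rw [trunc_ge (by omega) hw, pj_ne _ hw (by omega)]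
    exact LinearMap.congr_fun h x
  have : z ∈ LinearMap.range BF.d := by
    obtain ⟨s, hs⟩ := exists_sum_pj BF.low z
    rw [hs]
    refine Submodule.sum_mem _ fun j _ => ?_
    rcases j with _ | j
    · rw [hp0]; exact zero_mem _
    · exact BF.acyclic_plus j _ (pj_mem _ _ _) (hpz _)
  exact this

variable (BF) in
lemma generates_low :
    Algebra.adjoin ℚ (⋃ i, ⋃ j, ((BF.V i ⊓ BF.low j : Submodule ℚ BF.A) : Set BF.A)) = ⊤ := by
  rw [eq_top_iff, ← BF.generates]
  refine Algebra.adjoin_le (Set.iUnion_subset fun i v hv => ?_)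
  rw [SetLike.mem_coe, BF.V_low i] at hv
  have hle : (⨆ k, (BF.V i ⊓ BF.low k)) ≤ Subalgebra.toSubmodule (Algebra.adjoin ℚ
      (⋃ i, ⋃ j, ((BF.V i ⊓ BF.low j : Submodule ℚ BF.A) : Set BF.A))) :=
    iSup_le fun j v hv => Algebra.subset_adjoin
      (Set.mem_iUnion.2 ⟨i, Set.mem_iUnion.2 ⟨j, hv⟩⟩)
  exact hle hv

/-- Algebra maps agreeing on the generators of lower degree less than `k` agree on everything of
lower degree less than `k`. -/
lemma eqOn_low {C : Type} [Ring C] [Algebra ℚ C] {φ ψ : BF.A →ₐ[ℚ] C} {k : ℕ}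
    (h : ∀ j, j < k → ∀ i, ∀ v ∈ BF.V i ⊓ BF.low j, φ v = ψ v) :
    ∀ j, j < k → ∀ x ∈ BF.low j, φ x = ψ x := by
  let N : ℕ → Submodule ℚ BF.A := fun j =>
    if j < k then BF.low j ⊓ LinearMap.ker (φ.toLinearMap - ψ.toLinearMap) else BF.low j
  have memN : ∀ j x, x ∈ N j ↔ x ∈ BF.low j ∧ (j < k → φ x = ψ x) := by
    intro j x
    by_cases hj : j < k
    · simp only [N, hj, if_true, true_implies, Submodule.mem_inf, LinearMap.mem_ker,
        LinearMap.sub_apply, sub_eq_zero, AlgHom.toLinearMap_apply]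
    · simp only [N, hj, if_false, false_implies, and_true]
  have main := graded_gen BF.low BF.generates_low N (fun n x hx => ((memN n x).1 hx).1)
    ((memN 0 1).2 ⟨BF.low_one, fun _ => by rw [map_one, map_one]⟩) (by
      intro i j x y hx hy
      rw [memN] at hx hy ⊢
      refine ⟨BF.low_mul i j x y hx.1 hy.1, fun hij => ?_⟩
      rw [map_mul, map_mul, hx.2 (by omega), hy.2 (by omega)]) (by
      intro x hx
      obtain ⟨i, hx⟩ := Set.mem_iUnion.1 hx
      obtain ⟨j, hx⟩ := Set.mem_iUnion.1 hx
      exact ⟨j, (memN j x).2 ⟨hx.2, fun hj => h j hj i x hx⟩⟩)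
  exact fun j hj x hx => ((memN j x).1 (main j hx)).2 hj

lemma V_induction {i : ℕ} {p : BF.A → Prop} (h0 : p 0) (h : ∀ k, ∀ v ∈ BF.V i ⊓ BF.low k, p v)
    (hadd : ∀ x y, p x → p y → p (x + y)) {v : BF.A} (hv : v ∈ BF.V i) : p v := by
  rw [BF.V_low i] at hv
  induction hv using Submodule.iSup_induction' with
  | mem k x hx => exact h k x hx
  | zero => exact h0
  | add x y _ _ hx hy => exact hadd x y hx hy

lemma pj_low_V {i k : ℕ} {v : BF.A} (hv : v ∈ BF.V i) : pj BF.low k v ∈ BF.V i := by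
  refine V_induction (p := fun v => pj BF.low k v ∈ BF.V i) (by rw [map_zero]; exact zero_mem _)
    (fun j v hv => ?_) (fun x y hx hy => by rw [map_add]; exact add_mem hx hy) hv
  by_cases h : j = k
  · subst h; rw [pj_same _ hv.2]; exact hv.1
  · rw [pj_ne _ hv.2 h]; exact zero_mem _

end BigradedSullivan

namespace Rel

open BigradedSullivan

lemma box_mul_sec {B F : CDGA} (R : Rel B F) (K : Submodule ℚ B.A) (L L' : Submodule ℚ F.A) :
    R.box K L * L'.map R.sec.toLinearMap = R.box K (L * L') := by
  rw [box, box, mul_assoc, Submodule.map_mul]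

lemma sec_pj {B F : CDGA} (R : Rel B F) (n : ℕ) (a : F.A) :
    pj R.T.grading n (R.sec a) = R.sec (pj F.grading n a) :=
  pj_comm R.sec.toLinearMap R.sec_mem n a

lemma incl_mul_mem {B F : CDGA} (R : Rel B F) {L : Submodule ℚ F.A} (b : B.A) {x : R.T.A}
    (hx : x ∈ R.box ⊤ L) : R.incl.toAlgHom b * x ∈ R.box ⊤ L := by
  have h : R.incl.toAlgHom b * x ∈ R.box (⊤ * ⊤) L := by
    rw [← R.incl_mul_box]
    exact Submodule.mul_mem_mul ⟨b, Submodule.mem_top (R := ℚ), rfl⟩ hx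
  exact R.box_mono le_top le_rfl h

variable {H : CDGA} {BF : BigradedSullivan} (R : Rel H BF.toCDGA)

/-- The subspace `B ⊗ (ΛV)_{< k}` of the total algebra. -/
noncomputable def M (k : ℕ) : Submodule ℚ R.T.A := R.box ⊤ (BF.lowLT k)

lemma M_mono {j k : ℕ} (h : j ≤ k) : R.M j ≤ R.M k := R.box_mono le_rfl (lowLT_mono h)

lemma mem_M {k : ℕ} {x : R.T.A} :
    x ∈ R.M k ↔ R.op LinearMap.id (trunc BF.low k) x = 0 := by
  constructor
  · intro hx
    rw [← R.op_zero_right LinearMap.id x]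
    exact R.op_congr_box (fun _ _ => rfl) (fun a ha => trunc_lowLT ha) hx
  · intro hx
    have h : x = R.op LinearMap.id (LinearMap.id - trunc BF.low k) x := by
      rw [R.op_sub_right, hx, R.op_id, sub_zero]
    have hx' : x ∈ R.box ⊤ ⊤ := by rw [box_top]; exact Submodule.mem_top (R := ℚ)
    rw [h]
    exact R.op_mem_box (fun _ _ => Submodule.mem_top (R := ℚ)) (fun a _ => sub_trunc_mem k a) hx'

lemma sec_mem_M {j k : ℕ} (h : j < k) {a : BF.A} (ha : a ∈ BF.low j) : R.sec a ∈ R.M k := by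
  have := R.mem_box (Submodule.mem_top (R := ℚ) (x := (1 : H.A))) (low_le_lowLT h ha)
  rwa [map_one, one_mul] at this

variable (hpj : ∀ n k, ∀ x ∈ BF.low k, pj BF.grading n x ∈ BF.low k)

include hpj in
lemma lowLT_pj (k : ℕ) : ∀ x ∈ BF.lowLT k, ∀ n, pj BF.grading n x ∈ BF.lowLT k := fun x hx n =>
  lowLT_le (N := (BF.lowLT k).comap (pj BF.grading n))
    (fun j hj x hx => low_le_lowLT hj (hpj n j x hx)) hx

include hpj in
lemma M_pj (k : ℕ) : ∀ x ∈ R.M k, ∀ n, pj R.T.grading n x ∈ R.M k :=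
  R.T.pj_mul_mem (CDGA.pj_map_mem _ (fun _ _ hx => R.incl.map_grading hx)
    fun _ _ _ => Submodule.mem_top (R := ℚ))
    (CDGA.pj_map_mem _ R.sec_mem (lowLT_pj hpj k))

/-- The differential of the total algebra is filtered on the sections of the elements of lower
degree less than `k`. -/
def LowStable (k : ℕ) : Prop := ∀ j, j < k → ∀ x ∈ BF.low j, R.T.d (R.sec x) ∈ R.M j

include hpj in
/-- It suffices to check filteredness on generators. -/
lemma lowStable_of_gen {k : ℕ}
    (h : ∀ j, j < k → ∀ i, ∀ v ∈ BF.V i ⊓ BF.low j, R.T.d (R.sec v) ∈ R.M j) : R.LowStable k := by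
  let N : ℕ → Submodule ℚ BF.A := fun j =>
    if j < k then BF.low j ⊓ (R.M j).comap (R.T.d ∘ₗ R.sec.toLinearMap) else BF.low j
  have memN : ∀ j x, x ∈ N j ↔ x ∈ BF.low j ∧ (j < k → R.T.d (R.sec x) ∈ R.M j) := by
    intro j x
    by_cases hj : j < k
    · simp only [N, hj, if_true, true_implies]; rfl
    · simp only [N, hj, if_false, false_implies, and_true]
  have main := graded_gen BF.low BF.generates_low N (fun n x hx => ((memN n x).1 hx).1)
    ((memN 0 1).2 ⟨BF.low_one, fun _ => by rw [map_one, R.T.d_one]; exact zero_mem _⟩) (by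
      intro i j x y hx hy
      rw [memN] at hx hy ⊢
      refine ⟨BF.low_mul i j x y hx.1 hy.1, fun hij => ?_⟩
      rw [map_mul, R.T.leibniz_sgn]
      refine add_mem ?_ ?_
      · have h1 : R.T.d (R.sec x) * R.sec y ∈ R.box ⊤ (BF.lowLT i * BF.low j) := by
          rw [← R.box_mul_sec]
          exact Submodule.mul_mem_mul (hx.2 (by omega)) ⟨y, hy.1, rfl⟩
        exact R.box_mono le_rfl (lowLT_mul_low i j) h1
      · have hs : R.T.sgn (R.sec x) ∈ (BF.low i).map R.sec.toLinearMap := by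
          obtain ⟨s, hs⟩ := exists_sum_pj R.T.grading (R.sec x)
          rw [hs, map_sum]
          refine Submodule.sum_mem _ fun n _ => ?_
          rw [R.T.sgn_apply (pj_mem _ _ _), sec_pj]
          exact Submodule.smul_mem _ _ ⟨_, hpj n i x hx.1, rfl⟩
        have h2 := Submodule.mul_mem_mul hs (hy.2 (by omega))
        have hle : (BF.low i).map R.sec.toLinearMap * R.M j ≤ R.M (i + j) := by
          rw [M, box, ← mul_assoc]
          refine (mul_le_mul' (R.T.mul_comm_le
            (CDGA.pj_map_mem (B := BF.toCDGA) _ R.sec_mem fun x hx n => hpj n i x hx)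
            (CDGA.pj_map_mem _ (fun _ _ hx => R.incl.map_grading hx)
              fun _ _ _ => Submodule.mem_top (R := ℚ))) le_rfl).trans ?_
          rw [mul_assoc, ← Submodule.map_mul]
          exact R.box_mono le_rfl (low_mul_lowLT i j)
        exact hle h2) (by
      intro x hx
      obtain ⟨i, hx⟩ := Set.mem_iUnion.1 hx
      obtain ⟨j, hx⟩ := Set.mem_iUnion.1 hx
      exact ⟨j, (memN j x).2 ⟨hx.2, fun hj => h j hj i x hx⟩⟩)
  exact fun j hj x hx => ((memN j x).1 (main j hx)).2 hj

variable (hH : H.ZeroDiff)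

include hH in
lemma d_M {k j : ℕ} (hs : R.LowStable k) (hj : j + 1 ≤ k) {x : R.T.A} (hx : x ∈ R.M (j + 1)) :
    R.T.d x ∈ R.M j := by
  refine R.box_homog (p := fun x => R.T.d x ∈ R.M j) (fun _ _ _ => Submodule.mem_top (R := ℚ))
    (fun i b _ hi a ha => ?_) (fun x y hx hy => by rw [map_add]; exact add_mem hx hy) hx
  rw [R.T.leibniz _ _ (R.incl.map_grading hi), ← R.incl.comm_d, hH, map_zero, zero_mul, zero_add]
  refine Submodule.smul_mem _ _ (R.incl_mul_mem b ?_)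
  exact lowLT_le (N := (R.M j).comap (R.T.d ∘ₗ R.sec.toLinearMap))
    (fun l hl a ha => R.M_mono (by omega) (hs l (by omega) a ha)) ha

include hH in
lemma D1_eq_zero (x : R.T.A) : R.D1 x = 0 := by
  have : H.d = 0 := LinearMap.ext hH
  rw [D1, this, op_zero_left]

lemma c_M {k m : ℕ} {x : R.T.A} (hx : x ∈ R.M k) : R.c m x ∈ R.M k :=
  R.op_mem_box (fun _ _ => Submodule.mem_top (R := ℚ)) (fun _ h => h) hx

include hH in
/-- One stage of the correction of a defect: if `y` is, up to a coboundary, filtered modulo base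
filtration `m`, then it is so modulo base filtration `m + 1`. The leading term of the error is a
cocycle for the fibre differential modulo lower degrees, so its part of lower degree above `k` is
a coboundary for the fibre differential. -/
lemma defect_step (h1 : H.grading 1 = ⊥) {k m : ℕ} (hs : R.LowStable (k + 1)) {y : R.T.A}
    (hy : R.T.d y ∈ R.M k) {a g : R.T.A} (ha : a ∈ R.M (k + 1)) (hg : g ∈ R.G m)
    {u : R.T.A} (hyu : y - R.T.d u = a + g) :
    ∃ u' ∈ R.G m, ∃ a' ∈ R.M (k + 1), ∃ g' ∈ R.G (m + 1), y - R.T.d (u + u') = a' + g' := by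
  have hDg : R.T.d g ∈ R.M k := by
    have h : g = y - R.T.d u - a := by rw [hyu, add_sub_cancel_left]
    rw [h, map_sub, map_sub, R.T.d_sq, sub_zero]
    exact sub_mem hy (R.d_M hH hs le_rfl ha)
  -- the leading term
  have h2 : R.D2 (R.c m g) ∈ R.M k := by
    have h := R.c_M (m := m) hDg
    rw [R.d_eq, R.D1_eq_zero hH, zero_add, map_add, R.c_of_G (by omega) (R.Rm_mem_G h1 hg),
      R.c_D2, add_zero] at h
    exact h
  -- `s` is a fibre contraction: `d s d = d`
  obtain ⟨s, hs1, -⟩ := exists_contraction BF.d BF.d_sq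
  -- above lower degree `k`, the operator `1 - d s` vanishes on cocycles, as these are
  -- coboundaries, so it factors through `d`
  obtain ⟨q, hq⟩ := exists_factor_left (BF.d ∘ₗ trunc BF.low (k + 1))
    (trunc BF.low (k + 1) - BF.d ∘ₗ s ∘ₗ trunc BF.low (k + 1)) (fun x hx => by
      obtain ⟨z, hz⟩ := exists_d_trunc (k := k) (x := x) hx
      simp only [LinearMap.sub_apply, LinearMap.comp_apply]
      rw [← hz, hs1, sub_self])
  have h3 : ∀ w, R.D2 w ∈ R.M k →
      R.op LinearMap.id (trunc BF.low (k + 1)) w =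
        R.D2 (R.op H.sgn (s ∘ₗ trunc BF.low (k + 1)) w) := by
    intro w hw
    have e1 : R.op LinearMap.id (BF.d ∘ₗ trunc BF.low (k + 1)) w = 0 := by
      have e := R.mem_M.1 hw
      have e' := congrArg (R.op H.sgn LinearMap.id) e
      rw [D2, op_op, op_op, map_zero, LinearMap.comp_id, LinearMap.id_comp, trunc_d,
        H.sgn_comp_sgn] at e'
      exact e'
    have e2 : R.op LinearMap.id (q ∘ₗ BF.d ∘ₗ trunc BF.low (k + 1)) w = 0 := by
      have e := R.op_op LinearMap.id LinearMap.id q (BF.d ∘ₗ trunc BF.low (k + 1)) w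
      rw [e1, map_zero] at e
      exact e.symm
    rw [hq, R.op_sub_right, sub_eq_zero] at e2
    rw [e2, D2, op_op, H.sgn_comp_sgn]
  have h4 : ∀ w, w - R.op LinearMap.id (trunc BF.low (k + 1)) w ∈ R.M (k + 1) := by
    intro w
    have hw : w ∈ R.box ⊤ ⊤ := by rw [box_top]; exact Submodule.mem_top (R := ℚ)
    have e : w - R.op LinearMap.id (trunc BF.low (k + 1)) w =
        R.op LinearMap.id (LinearMap.id - trunc BF.low (k + 1)) w := by
      rw [R.op_sub_right, R.op_id]
    rw [e]
    exact R.op_mem_box (fun _ _ => Submodule.mem_top (R := ℚ)) (fun a _ => sub_trunc_mem _ a) hw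
  have h5 := h4 (R.c m g)
  rw [h3 _ h2] at h5
  obtain ⟨u', hu'⟩ : ∃ u', u' = R.op H.sgn (s ∘ₗ trunc BF.low (k + 1)) (R.c m g) := ⟨_, rfl⟩
  rw [← hu'] at h5
  have hu'G : u' ∈ R.G m := by
    rw [hu']
    exact R.op_mem_G _ (fun _ hi _ hb => sgn_mem (H.grading_le_ge hi hb) hb) (R.c_mem_G m g)
  refine ⟨u', hu'G, _, add_mem ha h5, g - R.c m g - R.Rm u',
    sub_mem (R.sub_c_mem_G hg) (R.G_anti (by omega) (R.Rm_mem_G h1 hu'G)), ?_⟩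
  rw [map_add, ← sub_sub, hyu, R.d_eq u', R.D1_eq_zero hH]
  abel

include hH hpj in
/-- Elements of lower degree `k + 1` have lifts whose differential is filtered, provided the
section is filtered in lower degrees at most `k`. -/
lemma exists_lift (h1 : H.grading 1 = ⊥) {k : ℕ} (hs : R.LowStable (k + 1)) {i : ℕ} {v : BF.A}
    (hv : v ∈ BF.grading i) (hvl : v ∈ BF.low (k + 1)) :
    ∃ w ∈ R.T.grading i, R.proj.toAlgHom w = v ∧ R.T.d w ∈ R.M (k + 1) := by
  have hdv : BF.d v ∈ BF.low k := BF.d_low k v hvl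
  obtain ⟨y, hy⟩ : ∃ y, y = R.T.d (R.sec v) - R.sec (BF.d v) := ⟨_, rfl⟩
  have hyG : y ∈ R.G 1 := R.ker_proj_G (by rw [hy]; exact R.proj_defect v)
  have hyd : R.T.d y ∈ R.M k := by
    rw [hy, map_sub, R.T.d_sq, zero_sub]
    exact neg_mem (hs k (Nat.lt_succ_self k) _ hdv)
  have hyi : y ∈ R.T.grading (i + 1) := by
    rw [hy]
    exact sub_mem (R.T.d_mem (R.sec_mem i v hv)) (R.sec_mem _ _ (BF.d_mem hv))
  have key : ∀ m, ∃ u ∈ R.G 1, ∃ a ∈ R.M (k + 1), ∃ g ∈ R.G (m + 1), y - R.T.d u = a + g := by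
    intro m
    induction m with
    | zero =>
      exact ⟨0, zero_mem _, 0, zero_mem _, y, hyG, by rw [map_zero, sub_zero, zero_add]⟩
    | succ m ih =>
      obtain ⟨u, hu, a, ha, g, hg, e⟩ := ih
      obtain ⟨u', hu', a', ha', g', hg', e'⟩ := R.defect_step hH h1 hs hyd ha hg e
      exact ⟨u + u', add_mem hu (R.G_anti (by omega) hu'), a', ha', g', hg', e'⟩
  -- filtration beyond `i + 1` is invisible in total degree `i + 1`
  obtain ⟨u, hu, a, ha, g, hg, e⟩ := key (i + 1)
  have e2 := congrArg (pj R.T.grading (i + 1)) e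
  rw [map_sub, map_add, R.pj_of_G hg, add_zero, pj_same _ hyi, R.T.pj_d] at e2
  refine ⟨R.sec v - pj R.T.grading i u, sub_mem (R.sec_mem i v hv) (pj_mem _ _ _), ?_, ?_⟩
  · rw [map_sub, R.proj_sec, ← R.proj.pj_comm, R.proj_of_G hu, map_zero, sub_zero]
  · have e3 : R.T.d (R.sec v - pj R.T.grading i u) =
        pj R.T.grading (i + 1) a + R.sec (BF.d v) := by
      rw [← e2, hy, map_sub]; abel
    rw [e3]
    exact add_mem (R.M_pj hpj _ a ha _) (R.sec_mem_M (Nat.lt_succ_self k) hdv)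

end Rel
end RHT

namespace RHT

/-! ### Inductive construction of the filtered section -/

namespace Rel

open BigradedSullivan

/-- A degree-preserving algebra section of the fibre projection. -/
structure Sect {B F : CDGA} (R : Rel B F) where
  τ : F.A →ₐ[ℚ] R.T.A
  mem : ∀ i, ∀ a ∈ F.grading i, τ a ∈ R.T.grading i
  proj : ∀ a, R.proj.toAlgHom (τ a) = a

variable {H : CDGA} {BF : BigradedSullivan} (R : Rel H BF.toCDGA)

/-- The subspace `B ⊗ (ΛV)_{< k}` formed with respect to the section `τ`. -/
noncomputable def MM (τ : BF.A →ₐ[ℚ] R.T.A) (k : ℕ) : Submodule ℚ R.T.A :=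
  (⊤ : Submodule ℚ H.A).map R.incl.toAlgHom.toLinearMap * (BF.lowLT k).map τ.toLinearMap

/-- `MM τ k` depends only on the section in lower degrees less than `k`. -/
lemma MM_le {τ τ' : BF.A →ₐ[ℚ] R.T.A} {k : ℕ} (h : ∀ j, j < k → ∀ x ∈ BF.low j, τ x = τ' x) :
    R.MM τ k ≤ R.MM τ' k := by
  have h' : ∀ x ∈ BF.lowLT k, τ x = τ' x := fun x hx => by
    have := lowLT_le (N := LinearMap.ker (τ.toLinearMap - τ'.toLinearMap)) (fun j hj x hx => by
      rw [LinearMap.mem_ker, LinearMap.sub_apply, sub_eq_zero]; exact h j hj x hx) hx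
    rw [LinearMap.mem_ker, LinearMap.sub_apply, sub_eq_zero] at this
    exact this
  have hle : (BF.lowLT k).map τ.toLinearMap ≤ (BF.lowLT k).map τ'.toLinearMap := by
    rintro _ ⟨x, hx, rfl⟩
    exact ⟨x, hx, (h' x hx).symm⟩
  exact mul_le_mul' le_rfl hle

/-- The section `s` makes the differential filtered on generators of lower degree less than
`k`. -/
def Good (k : ℕ) (s : R.Sect) : Prop :=
  ∀ j, j < k → ∀ i, ∀ v ∈ BF.V i ⊓ BF.low j, R.T.d (s.τ v) ∈ R.MM s.τ j

variable (hpj : ∀ n k, ∀ x ∈ BF.low k, pj BF.grading n x ∈ BF.low k) (hH : H.ZeroDiff)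
  (h1 : H.grading 1 = ⊥)
  (htncz : ∀ y : BF.A, BF.d y = 0 → ∃ x : R.T.A, R.T.d x = 0 ∧
    CDGA.IsExact BF.toCDGA (R.proj.toAlgHom x - y))

include hpj hH h1 htncz in
/-- Generators of lower degree `k` lift to elements with filtered differential: to cocycles for
`k = 0`, as the fibration is totally non-cohomologous to zero, and by `exists_lift` for `k > 0`. -/
lemma exists_lift_gen {k : ℕ} {s : R.Sect} (hs : R.Good k s) {i : ℕ} {v : BF.A}
    (hv : v ∈ BF.V i ⊓ BF.low k) :
    ∃ w ∈ R.T.grading i, R.proj.toAlgHom w = v ∧ R.T.d w ∈ R.MM s.τ k := by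
  rcases k with _ | k
  · obtain ⟨x, hx, y, hy⟩ := htncz v (BF.d_low_zero v hv.2)
    refine ⟨pj R.T.grading i (x - R.T.d (s.τ y)), pj_mem _ _ _, ?_, ?_⟩
    · rw [← R.proj.pj_comm, map_sub, R.proj.comm_d, s.proj, hy, sub_sub_cancel]
      exact pj_same _ (BF.V_le i hv.1)
    · rw [← R.T.pj_d, map_sub, hx, R.T.d_sq, sub_zero, map_zero]
      exact zero_mem _
  · exact (R.withSec s.τ s.mem s.proj).exists_lift hpj hH h1
      ((R.withSec s.τ s.mem s.proj).lowStable_of_gen hpj hs) (BF.V_le i hv.1) hv.2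

include hpj hH h1 htncz in
/-- Extending filteredness by one lower degree: only the values of the section on the generators
of lower degree `k` are changed. -/
lemma good_step (k : ℕ) (s : R.Sect) (hs : R.Good k s) :
    ∃ s' : R.Sect, R.Good (k + 1) s' ∧ ∀ j, j < k → ∀ x ∈ BF.low j, s.τ x = s'.τ x := by
  have h : ∀ i, ∃ q : (BF.V i ⊓ BF.low k : Submodule ℚ BF.A) →ₗ[ℚ] R.T.A,
      ∀ x : (BF.V i ⊓ BF.low k : Submodule ℚ BF.A),
        q x ∈ R.T.grading i ∧ R.T.d (q x) ∈ R.MM s.τ k ∧ R.proj.toAlgHom (q x) = x := by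
    intro i
    obtain ⟨q, hq⟩ := exists_linear_choice
      (((R.T.grading i ⊓ (R.MM s.τ k).comap R.T.d).comap (LinearMap.snd ℚ BF.A R.T.A)) ⊓
        LinearMap.ker (R.proj.toAlgHom.toLinearMap ∘ₗ LinearMap.snd ℚ BF.A R.T.A -
          LinearMap.fst ℚ BF.A R.T.A)) (BF.V i ⊓ BF.low k) (fun x hx => by
        obtain ⟨w, hw1, hw2, hw3⟩ := R.exists_lift_gen hpj hH h1 htncz hs hx
        exact ⟨w, ⟨hw1, hw3⟩, by simp [hw2]⟩)
    refine ⟨q, fun x => ⟨(hq x).1.1, (hq x).1.2, ?_⟩⟩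
    have := (hq x).2
    simpa [sub_eq_zero] using this
  choose q hq using h
  choose f hf using fun i => (q i).exists_extend
  have hf' : ∀ i, ∀ v (hv : v ∈ BF.V i ⊓ BF.low k), f i v = q i ⟨v, hv⟩ := fun i v hv =>
    LinearMap.congr_fun (hf i) ⟨v, hv⟩
  obtain ⟨g, hg⟩ : ∃ g : ℕ → BF.A →ₗ[ℚ] R.T.A, ∀ i v,
      g i v = s.τ v + (f i (pj BF.low k v) - s.τ (pj BF.low k v)) :=
    ⟨fun i => s.τ.toLinearMap + (f i - s.τ.toLinearMap) ∘ₗ pj BF.low k, fun i v => rfl⟩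
  have hpV : ∀ i, ∀ v ∈ BF.V i, pj BF.low k v ∈ BF.V i ⊓ BF.low k := fun i v hv =>
    ⟨pj_low_V hv, pj_mem _ _ _⟩
  obtain ⟨τ, hτ, hτV⟩ := BF.exists_extend R.T g (fun i v hv => by
    rw [hg, hf' i _ (hpV i v hv)]
    exact add_mem (s.mem i v (BF.V_le i hv)) (sub_mem (hq i _).1
      (s.mem i _ (BF.V_le i (hpV i v hv).1))))
  have hτp : ∀ a, R.proj.toAlgHom (τ a) = a := fun a => by
    have : R.proj.toAlgHom.comp τ = AlgHom.id ℚ BF.A := BF.algHom_ext fun i v hv => by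
      change R.proj.toAlgHom (τ v) = v
      rw [hτV i v hv, hg, hf' i _ (hpV i v hv), map_add, map_sub, (hq i _).2.2, s.proj, s.proj,
        sub_self, add_zero]
    exact AlgHom.congr_fun this a
  have hag : ∀ j, j < k → ∀ x ∈ BF.low j, s.τ x = τ x := eqOn_low fun j hj i v hv => by
    rw [hτV i v hv.1, hg, pj_ne _ hv.2 hj.ne, map_zero, map_zero, sub_zero, add_zero]
  refine ⟨⟨τ, hτ, hτp⟩, fun j hj i v hv => ?_, hag⟩
  change R.T.d (τ v) ∈ R.MM τ j
  rcases Nat.lt_succ_iff_lt_or_eq.1 hj with hj | rfl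
  · rw [← hag j hj v hv.2]
    exact R.MM_le (fun l hl => hag l (by omega)) (hs j hj i v hv)
  · rw [hτV i v hv.1, hg, pj_same _ hv.2, add_sub_cancel, hf' i v hv]
    exact R.MM_le hag (hq i _).2.1

include hpj hH h1 htncz in
/-- A section of the fibre projection for which the differential is filtered on generators. -/
theorem exists_filtered_sect :
    ∃ s : R.Sect, ∀ j i, ∀ v ∈ BF.V i ⊓ BF.low j, R.T.d (s.τ v) ∈ R.MM s.τ j := by
  obtain ⟨s, hs⟩ := exists_seq
    (fun k (s s' : R.Sect) => ∀ j, j < k → ∀ x ∈ BF.low j, s.τ x = s'.τ x) R.Good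
    ⟨R.sec, R.sec_mem, R.proj_sec⟩ (fun j hj => absurd hj (Nat.not_lt_zero j))
    (R.good_step hpj hH h1 htncz)
  have hag : ∀ k m, k ≤ m → ∀ j, j < k → ∀ x ∈ BF.low j, (s k).τ x = (s m).τ x := by
    intro k m hkm j hj x hx
    induction m, hkm using Nat.le_induction with
    | base => rfl
    | succ m hm ih => rw [ih, (hs m).2 j (by omega) x hx]
  -- the sections stabilise on each lower degree, and `L` is their limit
  obtain ⟨L, hL⟩ : ∃ L : BF.A →ₗ[ℚ] R.T.A, ∀ j, ∀ x ∈ BF.low j, L x = (s (j + 1)).τ x := by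
    refine ⟨DirectSum.toModule ℚ ℕ R.T.A
      (fun j => (s (j + 1)).τ.toLinearMap ∘ₗ (BF.low j).subtype) ∘ₗ
      (DirectSum.decomposeLinearEquiv BF.low).toLinearMap, fun j x hx => ?_⟩
    lift x to BF.low j using hx
    simp [DirectSum.decompose_coe, DirectSum.toModule_lof, ← DirectSum.lof_eq_of ℚ]
  obtain ⟨τ, hτ, hτV⟩ := BF.exists_extend R.T (fun _ => L) (fun i v hv =>
    V_induction (p := fun v => L v ∈ R.T.grading i) (by rw [map_zero]; exact zero_mem _)
      (fun j v hv => by rw [hL j v hv.2]; exact (s (j + 1)).mem i v (BF.V_le i hv.1))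
      (fun x y hx hy => by rw [map_add]; exact add_mem hx hy) hv)
  have hτp : ∀ a, R.proj.toAlgHom (τ a) = a := fun a => by
    have : R.proj.toAlgHom.comp τ = AlgHom.id ℚ BF.A := BF.algHom_ext fun i v hv => by
      change R.proj.toAlgHom (τ v) = v
      rw [hτV i v hv]
      exact V_induction (p := fun v => R.proj.toAlgHom (L v) = v) (by rw [map_zero, map_zero])
        (fun j v hv => by rw [hL j v hv.2, (s (j + 1)).proj])
        (fun x y hx hy => by rw [map_add, map_add, hx, hy]) hv
    exact AlgHom.congr_fun this a
  have hsτ : ∀ k, ∀ j, j < k → ∀ x ∈ BF.low j, (s k).τ x = τ x := fun k =>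
    eqOn_low fun j hj i v hv => by
      rw [hτV i v hv.1, hL j v hv.2, hag (j + 1) k (by omega) j (by omega) v hv.2]
  refine ⟨⟨τ, hτ, hτp⟩, fun j i v hv => ?_⟩
  change R.T.d (τ v) ∈ R.MM τ j
  rw [← hsτ (j + 1) j (by omega) v hv.2]
  exact R.MM_le (fun l hl => hsτ (j + 1) l (by omega)) ((hs (j + 1)).1 j (by omega) i v hv)

end Rel
end RHT

namespace RHT

/-! ### From extensions with a section to fibration models -/

/-- A graded family of finite-dimensional subspaces has a basis indexed by natural numbers in an
order compatible with the degrees. -/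
lemma exists_ordered_basis {W : Type} [AddCommGroup W] [Module ℚ W] (V : ℕ → Submodule ℚ W)
    [∀ n, FiniteDimensional ℚ (V n)] (hV : iSupIndep V) :
    ∃ (ι : Set ℕ) (b : ι → W), LinearIndependent ℚ b ∧
      Submodule.span ℚ (Set.range b) = (⨆ i, V i) ∧
      ∀ α : ι, ∃ n, b α ∈ V n ∧ ∀ m, m < n → V m ≤
        Submodule.span ℚ (b '' {β : ι | (β : ℕ) < (α : ℕ)}) := by
  obtain ⟨r, hr⟩ : ∃ r : ℕ → ℕ, ∀ n, r n = Module.finrank ℚ (V n) := ⟨_, fun _ => rfl⟩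
  let B : ∀ n, Module.Basis (Fin (r n)) ℚ (V n) := fun n =>
    (Module.finBasis ℚ (V n)).reindex (finCongr (hr n).symm)
  let e : (Σ n, Fin (r n)) → ℕ := fun x => (∑ m ∈ Finset.range x.1, r m) + x.2
  have he_lt : ∀ x y : (Σ n, Fin (r n)), x.1 < y.1 → e x < e y := by
    intro x y h
    have h1 : (∑ m ∈ Finset.range (x.1 + 1), r m) ≤ ∑ m ∈ Finset.range y.1, r m :=
      Finset.sum_le_sum_of_subset (Finset.range_subset_range.2 h)
    rw [Finset.sum_range_succ] at h1
    have h2 := x.2.2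
    simp only [e]
    omega
  have he : Function.Injective e := by
    intro x y h
    obtain ⟨n, j⟩ := x
    obtain ⟨m, l⟩ := y
    rcases lt_trichotomy n m with hnm | rfl | hnm
    · exact absurd h (he_lt ⟨n, j⟩ ⟨m, l⟩ hnm).ne
    · simp only [e, Nat.add_left_cancel_iff] at h
      rw [Fin.ext h]
    · exact absurd h (he_lt ⟨m, l⟩ ⟨n, j⟩ hnm).ne'
  let E := Equiv.ofInjective e he
  let c : (Σ n, Fin (r n)) → W := fun x => (B x.1 x.2 : W)
  have hc : LinearIndependent ℚ c := by
    have h1 := DFinsupp.linearIndependent_single (R := ℚ) (fun n (j : Fin (r n)) => B n j)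
      (fun n => (B n).linearIndependent)
    have h2 := h1.map' (DFinsupp.lsum ℕ fun i => (V i).subtype)
      (LinearMap.ker_eq_bot.2 hV.dfinsupp_lsum_injective)
    have h3 : c = (DFinsupp.lsum ℕ fun i => (V i).subtype) ∘
        fun x : (Σ n, Fin (r n)) => DFinsupp.single x.1 (B x.1 x.2) := by
      funext x
      simp [c]
    rw [h3]
    exact h2
  have hspan : ∀ n (s : Set W), (∀ j, (B n j : W) ∈ s) → V n ≤ Submodule.span ℚ s := by
    intro n s hs v hv
    have h := congrArg (V n).subtype ((B n).sum_repr ⟨v, hv⟩)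
    rw [map_sum] at h
    change _ = v at h
    rw [← h]
    refine Submodule.sum_mem _ fun j _ => ?_
    rw [map_smul]
    exact Submodule.smul_mem _ _ (Submodule.subset_span (hs j))
  refine ⟨Set.range e, c ∘ E.symm, hc.comp _ E.symm.injective, ?_, fun α => ?_⟩
  · apply le_antisymm
    · refine Submodule.span_le.2 ?_
      rintro _ ⟨α, rfl⟩
      exact Submodule.mem_iSup_of_mem (E.symm α).1 (B (E.symm α).1 (E.symm α).2).2
    · exact iSup_le fun n => hspan n _ fun j => ⟨E ⟨n, j⟩, by
        rw [Function.comp_apply, Equiv.symm_apply_apply]⟩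
  · refine ⟨(E.symm α).1, (B (E.symm α).1 (E.symm α).2).2, fun m hm => hspan m _ fun j =>
      ⟨E ⟨m, j⟩, ?_, by rw [Function.comp_apply, Equiv.symm_apply_apply]⟩⟩
    have h1 : e ⟨m, j⟩ < e (E.symm α) := he_lt ⟨m, j⟩ (E.symm α) hm
    have h2 : e (E.symm α) = α := congrArg Subtype.val (E.apply_symm_apply α)
    rw [h2] at h1
    exact h1

namespace Rel

variable {H : CDGA} {S : Sullivan} (R : Rel H S.toCDGA)

lemma sec_injective : Function.Injective R.sec :=
  Function.LeftInverse.injective (g := R.proj.toAlgHom) R.proj_sec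

/-- The lift of the generators of the fibre along the section. -/
def liftV (i : ℕ) : Submodule ℚ R.T.A := (S.V i).map R.sec.toLinearMap

lemma liftV_le (i : ℕ) : R.liftV i ≤ R.T.grading i := by
  rintro _ ⟨v, hv, rfl⟩
  exact R.sec_mem i v (S.V_le i hv)

/-- The total algebra is relatively free over the base on the lifted generators. -/
lemma relFree : RelativelyFree H R.T R.incl R.liftV := by
  intro C _ _ 𝒞 c1 cmul ccomm g hg f hf
  obtain ⟨k, hk, -⟩ := S.free C 𝒞 c1 cmul ccomm
    (fun i => f i ∘ₗ R.sec.toLinearMap.submoduleMap (S.V i)) (fun i v => hf i _)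
  have hkV : ∀ i (v : S.A) (hv : v ∈ S.V i), k v = f i ⟨R.sec v, ⟨v, hv, rfl⟩⟩ :=
    fun i v hv => hk i ⟨v, hv⟩
  obtain ⟨φ, hφ1, hφ2⟩ := R.cop C 𝒞 c1 cmul ccomm g hg k
    (S.map_grading 𝒞 c1 cmul k fun i v hv => by rw [hkV i v hv]; exact hf i _)
  refine ⟨φ, ⟨hφ1, ?_⟩, ?_⟩
  · rintro i ⟨_, v, hv, rfl⟩
    exact (hφ2 v).trans (hkV i v hv)
  · rintro ψ ⟨hψ1, hψ2⟩
    have h : ψ.comp R.sec = k := S.algHom_ext fun i v hv =>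
      (hψ2 i ⟨R.sec v, ⟨v, hv, rfl⟩⟩).trans (hkV i v hv).symm
    refine AlgHom.ext fun x => R.ext_lin (f := ψ.toLinearMap) (g := φ.toLinearMap) ?_ x
    intro i b _ j a _
    change ψ _ = φ _
    rw [map_mul, map_mul, hψ1, hφ1, hφ2, ← h]
    rfl

/-- The differential of a lifted generator of degree `n` is a polynomial over the base in the
lifted generators of degree less than `n`, as the base is simply connected. -/
lemma d_sec_mem (hmin : S.Minimal) (h1 : H.grading 1 = ⊥) {n : ℕ} (A : Subalgebra ℚ R.T.A)
    (hA : ∀ b, R.incl.toAlgHom b ∈ A) (hV : ∀ m, m < n → ∀ v ∈ S.V m, R.sec v ∈ A) {v : S.A}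
    (hv : v ∈ S.V n) : R.T.d (R.sec v) ∈ A := by
  obtain ⟨hlt, hdec⟩ := S.gen_lt (Subalgebra.toSubmodule (A.comap R.sec))
    (Subalgebra.one_mem _) (fun _ _ x y _ _ hx hy => Subalgebra.mul_mem _ hx hy) (n := n)
    (fun m hm v hv => hV m hm v hv)
  have hy2 := R.box_mono (H.aug_le_ge_two h1) le_rfl (R.ker_proj_box (R.proj_defect v))
  have hdv : S.d v ∈ S.grading (n + 1) := S.toCDGA.d_mem (S.V_le n hv)
  have hy : R.T.d (R.sec v) - R.sec (S.d v) ∈ R.T.grading (n + 1) :=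
    sub_mem (R.T.d_mem (R.sec_mem n v (S.V_le n hv))) (R.sec_mem _ _ hdv)
  have key : ∀ x ∈ R.box (H.ge 2) ⊤, pj R.T.grading (n + 1) x ∈ A := by
    intro x hx
    refine R.box_homog (p := fun x => pj R.T.grading (n + 1) x ∈ A) H.pj_mem_ge
      (fun i b hb hbi a ha0 => ?_) (fun x y hx hy => by rw [map_add]; exact add_mem hx hy) hx
    clear ha0
    induction a using homog_induction S.grading with
    | h0 m a ha =>
      have hba := R.T.mul_mem (R.incl.map_grading hbi) (R.sec_mem m a ha)
      by_cases him : i + m = n + 1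
      · rw [← him, pj_same _ hba]
        rcases Nat.lt_or_ge i 2 with hi | hi
        · have hb0 : b = 0 := by rw [← pj_same H.grading hbi, H.mem_ge.1 hb i hi]
          rw [hb0, map_zero, zero_mul]; exact zero_mem _
        · exact Subalgebra.mul_mem _ (hA b) (hlt m (by omega) ha)
      · rw [pj_ne _ hba him]; exact zero_mem _
    | hadd x y hx hy => rw [map_add, mul_add, map_add]; exact add_mem hx hy
  have h2 := key _ hy2
  rw [pj_same _ hy] at h2
  have h4 : R.sec (S.d v) ∈ A := hdec _ (S.d_mem_dec hmin v) hdv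
  have h3 := add_mem h2 h4
  rwa [sub_add_cancel] at h3

/-- Ordering the lifted generators by degree gives the nilpotence condition. -/
lemma ksBasis (hmin : S.Minimal) (h1 : H.grading 1 = ⊥) :
    KSBasisCondition H R.T R.incl R.liftV := by
  have hfin : ∀ n, FiniteDimensional ℚ (R.liftV n) := fun n => by
    have := S.V_fin n
    exact Module.Finite.map (S.V n) R.sec.toLinearMap
  have hind : iSupIndep R.liftV :=
    (DirectSum.Decomposition.isInternal R.T.grading).submodule_iSupIndep.mono R.liftV_le
  obtain ⟨ι, b, hb1, hb2, hb3⟩ := exists_ordered_basis R.liftV hind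
  refine ⟨ι, b, hb1, hb2, fun α => (hb3 α).imp fun n h => h.1, fun α => ?_⟩
  obtain ⟨n, ⟨v, hv, hvb⟩, hlt⟩ := hb3 α
  rw [← hvb]
  refine R.d_sec_mem hmin h1 _ (fun b => Algebra.subset_adjoin (Or.inl ⟨b, rfl⟩))
    (fun m hm w hw => ?_) hv
  have hle : Submodule.span ℚ (b '' {β : ι | (β : ℕ) < (α : ℕ)}) ≤ Subalgebra.toSubmodule
      (Algebra.adjoin ℚ (Set.range (R.incl.toAlgHom : H.A → R.T.A) ∪
        b '' {β : ι | (β : ℕ) < (α : ℕ)})) :=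
    Submodule.span_le.2 fun x hx => Algebra.subset_adjoin (Or.inr hx)
  exact hle (hlt m hm ⟨w, hw, rfl⟩)

/-- An extension of a simply connected algebra with minimal fibre and a section of the fibre
projection is a fibration model. -/
noncomputable def toFib (hmin : S.Minimal) (h1 : H.grading 1 = ⊥) : FibrationModel H S where
  T := R.T
  incl := R.incl
  proj := R.proj
  V := R.liftV
  V_le := R.liftV_le
  incl_inj := by
    have : Nontrivial S.A := ⟨1, 0, S.one_ne_zero⟩
    exact R.incl_injective
  relFree := R.relFree
  ksBasis := R.ksBasis hmin h1
  proj_incl := fun i hi x hx => R.proj_incl x (H.grading_le_aug hi hx)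
  proj_V := fun i => by
    apply le_antisymm
    · rintro _ ⟨_, ⟨v, hv, rfl⟩, rfl⟩
      change R.proj.toAlgHom (R.sec v) ∈ _
      rw [R.proj_sec]; exact hv
    · exact fun v hv => ⟨R.sec v, ⟨v, hv, rfl⟩, R.proj_sec v⟩
  fiber_inj := fun x hx h0 => by
    have hle : Algebra.adjoin ℚ (⋃ i, (R.liftV i : Set R.T.A)) ≤ R.sec.range := by
      refine Algebra.adjoin_le (Set.iUnion_subset fun i => ?_)
      rintro _ ⟨v, hv, rfl⟩
      exact ⟨v, rfl⟩
    obtain ⟨a, ha⟩ := hle hx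
    change R.sec a = x at ha
    rw [← ha, R.proj_sec] at h0
    rw [← ha, h0, map_zero]
  ker_proj := fun x => by
    refine ⟨fun h => R.ker_proj x h, fun hx => ?_⟩
    have hle : (H.aug.map R.incl.toAlgHom.toLinearMap) * (⊤ : Submodule ℚ R.T.A) ≤
        LinearMap.ker R.proj.toAlgHom.toLinearMap := by
      refine Submodule.mul_le.2 ?_
      rintro _ ⟨b, hb, rfl⟩ y _
      change R.proj.toAlgHom (R.incl.toAlgHom b * y) = 0
      rw [map_mul, R.proj_incl b hb, zero_mul]
    exact hle hx

end Rel

namespace Rel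

open BigradedSullivan

variable {H : CDGA} {BF : BigradedSullivan} (R : Rel H BF.toCDGA)

lemma sec_mem_fiberSub (hmin : BF.toSullivan.Minimal) (h1 : H.grading 1 = ⊥) (a : BF.A) :
    R.sec a ∈ (R.toFib hmin h1).fiberSub := by
  have h : (⊤ : Subalgebra ℚ BF.A) ≤
      (Algebra.adjoin ℚ (⋃ i, (R.liftV i : Set R.T.A))).comap R.sec := by
    rw [← BF.generates]
    refine Algebra.adjoin_le (Set.iUnion_subset fun i v hv => ?_)
    have hm : R.sec v ∈ (⋃ i, (R.liftV i : Set R.T.A)) := Set.mem_iUnion.2 ⟨i, v, hv, rfl⟩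
    exact Algebra.subset_adjoin hm
  have ha : a ∈ (⊤ : Subalgebra ℚ BF.A) := Algebra.mem_top
  exact SetLike.le_def.1 h ha

lemma MM_le_filtered (hmin : BF.toSullivan.Minimal) (h1 : H.grading 1 = ⊥) (k : ℕ) :
    R.M (k + 1) ≤ (R.toFib hmin h1).baseSub *
      (R.toFib hmin h1).fiberComap (⨆ j, ⨆ _ : j ≤ k, BF.low j) := by
  refine mul_le_mul' ?_ ?_
  · rintro _ ⟨b, _, rfl⟩
    exact ⟨b, rfl⟩
  · rintro _ ⟨a, ha, rfl⟩
    refine ⟨R.sec_mem_fiberSub hmin h1 a, ?_⟩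
    change R.proj.toAlgHom (R.sec a) ∈ ⨆ j, ⨆ _ : j ≤ k, BF.low j
    rw [R.proj_sec]
    exact lowLT_le (fun j hj => le_iSup₂_of_le j (by omega) le_rfl) ha

end Rel

/-- Composition of morphisms of cochain algebras. -/
def Hom.comp {C D E : CDGA} (g : Hom D E) (f : Hom C D) : Hom C E where
  toAlgHom := g.toAlgHom.comp f.toAlgHom
  map_grading := fun h => g.map_grading (f.map_grading h)
  comm_d := fun x => by
    change g.toAlgHom (f.toAlgHom _) = E.d (g.toAlgHom (f.toAlgHom x))
    rw [f.comm_d, g.comm_d]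

lemma QuasiIso.comp {C D E : CDGA} {g : Hom D E} {f : Hom C D} (hg : QuasiIso g)
    (hf : QuasiIso f) : QuasiIso (g.comp f) := by
  refine ⟨fun z hz => ?_, fun x hx h => hf.2 x hx (hg.2 _ (by rw [← f.comm_d, hx, map_zero]) h)⟩
  obtain ⟨y, hy, w, hw⟩ := hg.1 z hz
  obtain ⟨x, hx, u, hu⟩ := hf.1 y hy
  refine ⟨x, hx, g.toAlgHom u + w, ?_⟩
  change _ = g.toAlgHom (f.toAlgHom x) - z
  rw [map_add, ← g.comm_d, hu, hw, map_sub, sub_add_sub_cancel]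

open BigradedSullivan in
/-- The filtered model over the cohomology of the base: an extension with minimal bigraded fibre
that is totally non-cohomologous to zero can be given generators with filtered differential. -/
theorem exists_filtered_fib {H F : CDGA} (BF : BigradedSullivan) (hF : BF.toCDGA = F)
    (hmin : BF.toSullivan.Minimal)
    (hpj : ∀ n k, ∀ x ∈ BF.low k, pj BF.grading n x ∈ BF.low k) (hH : H.ZeroDiff)
    (h1 : H.grading 1 = ⊥) (R : Rel H F)
    (htncz : ∀ y : F.A, F.d y = 0 → ∃ x : R.T.A, R.T.d x = 0 ∧
      CDGA.IsExact F (R.proj.toAlgHom x - y)) :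
    ∃ (P' : FibrationModel H BF.toSullivan) (fF : Hom F BF.toCDGA) (fT : Hom R.T P'.T),
      QuasiIso fF ∧ QuasiIso fT ∧
      (∀ b, fT.toAlgHom (R.incl.toAlgHom b) = P'.incl.toAlgHom b) ∧
      (∀ x, fF.toAlgHom (R.proj.toAlgHom x) = P'.proj.toAlgHom (fT.toAlgHom x)) ∧
      (∀ i : ℕ, ∀ v ∈ P'.V i, P'.proj.toAlgHom v ∈ BF.low 0 → P'.T.d v = 0) ∧
      (∀ i k : ℕ, ∀ v ∈ P'.V i, P'.proj.toAlgHom v ∈ BF.low (k + 1) →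
        P'.T.d v ∈ P'.baseSub * (P'.fiberComap (⨆ j, ⨆ _ : j ≤ k, BF.low j))) := by
  subst hF
  have hid : ∀ C : CDGA, QuasiIso (C := C) ⟨AlgHom.id ℚ C.A, fun h => h, fun _ => rfl⟩ :=
    fun C => ⟨fun y hy => ⟨y, hy, 0, by simp⟩, fun x _ h => h⟩
  obtain ⟨s, hs⟩ := R.exists_filtered_sect hpj hH h1 htncz
  let R' := R.withSec s.τ s.mem s.proj
  have hs' : ∀ j i, ∀ v ∈ (R'.toFib hmin h1).V i,
      (R'.toFib hmin h1).proj.toAlgHom v ∈ BF.low j → R'.T.d v ∈ R'.M j := by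
    rintro j i _ ⟨v, hv, rfl⟩ hvj
    change R'.proj.toAlgHom (R'.sec v) ∈ BF.low j at hvj
    rw [R'.proj_sec] at hvj
    exact hs j i v ⟨hv, hvj⟩
  refine ⟨R'.toFib hmin h1, ⟨AlgHom.id ℚ _, fun h => h, fun _ => rfl⟩,
    ⟨AlgHom.id ℚ _, fun h => h, fun _ => rfl⟩, hid _, hid _, fun _ => rfl, fun _ => rfl,
    fun i v hv hv0 => ?_, fun i k v hv hvk => R'.MM_le_filtered hmin h1 k (hs' _ i v hv hvk)⟩
  have h := hs' 0 i v hv hv0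
  rw [Rel.M, lowLT_zero, Rel.box, Submodule.map_bot, Submodule.mul_bot] at h
  exact (Submodule.mem_bot ℚ).1 h

end RHT

open RHT in
/-- Proposition 3.1.  Let `F → E → B` be a rational fibration in which
`F` and `B` are formal.  If the fibration is TNCZ, then it has a model
`H(B),0 → H(B) ⊗ ΛV, D → ΛV, d` in which `ΛV, d` is the bigraded model of `F` and `D`
is filtered: `D(V_0) = 0` and, for `i ≥ 1`, `D(V_i) ⊆ H(B) ⊗ (ΛV)_{(i-1)}`. -/
theorem halperin_variations_stmt2
    (SB : Sullivan) (hSBmin : SB.Minimal) (hSBformal : Formal SB.toCDGA)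
    (SF : Sullivan) (hSFmin : SF.Minimal) (hSFformal : Formal SF.toCDGA)
    (P : FibrationModel SB.toCDGA SF)
    (htncz : P.TNCZ) :
    ∃ (HB : CDGA), HB.ZeroDiff ∧
      ∃ (BF : BigradedSullivan), BF.toSullivan.Minimal ∧
        ∃ P' : FibrationModel HB BF.toSullivan, ModelPair P' P ∧
          (∀ i : ℕ, ∀ v ∈ P'.V i,
            P'.proj.toAlgHom v ∈ BF.low 0 → P'.T.d v = 0) ∧
          (∀ i k : ℕ, ∀ v ∈ P'.V i,
            P'.proj.toAlgHom v ∈ BF.low (k + 1) →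
              P'.T.d v ∈ P'.baseSub * (P'.fiberComap (⨆ j, ⨆ _ : j ≤ k, BF.low j))) := by
  obtain ⟨H, f, hH, hf⟩ := hSBformal
  obtain ⟨BF, hBF, hmin, hpj⟩ := SF.exists_bigraded hSFmin hSFformal
  -- `f` is onto since `H` has no coboundaries, so `H` is simply connected
  have h1 : H.grading 1 = ⊥ := by
    rw [eq_bot_iff]
    intro y hy
    obtain ⟨x, -, z, hz⟩ := hf.1 y (hH y)
    rw [hH, eq_comm, sub_eq_zero] at hz
    have hx : pj SB.grading 1 x = 0 := by
      have := pj_mem SB.grading 1 x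
      rw [SB.grading_one] at this
      exact (Submodule.mem_bot ℚ).1 this
    have h := f.pj_comm 1 x
    rw [hx, map_zero, hz, pj_same _ hy] at h
    rw [h]; exact zero_mem _
  obtain ⟨R', π, -, hπ, hπi, hπp⟩ := P.toRel.exists_base_change SB.grading_one hH f hf
  obtain ⟨P', fF, fT, hfF, hfT, hi, hp, hlow0, hlow⟩ := exists_filtered_fib BF hBF hmin hpj hH h1 R'
    (fun y hy => by
      obtain ⟨x, hx, hxy⟩ := htncz y hy
      refine ⟨π.toAlgHom x, ?_, ?_⟩
      · exact (π.comm_d x).symm.trans ((congrArg π.toAlgHom hx).trans (map_zero _))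
      · obtain ⟨z, hz⟩ := hxy
        exact ⟨z, hz.trans (congrArg (· - y) (hπp x))⟩)
  refine ⟨H, hH, BF, hmin, P', Or.inr ⟨⟨f, fT.comp π, fF, hf, hfT.comp hπ, hfF, ?_, ?_⟩⟩, hlow0, hlow⟩
  · intro x
    change fT.toAlgHom (π.toAlgHom _) = _
    rw [← hi, ← hπi]; rfl
  · intro x
    exact (congrArg fF.toAlgHom (hπp x)).trans (hp _)
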